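/- Let A and B be C*-algebras and let I and J be closed two-sided ideals of A and B respectively. Then I ⊗̂ J = { x ∈ A ⊗̂ B : R_φ(x) ∈ J and L_ψ(x) ∈ I for all φ ∈ A* and all ψ ∈ B* }. -/

import Mathlib

open scoped TensorProduct
open Pointwise

universe u

noncomputable section

/-- A C⋆-norm on a complex `*`-algebra.  On a matrix algebra over a C⋆-algebra such a
norm is unique, namely the canonical C⋆-norm. -/
structure IsCStarNorm {M : Type*} [NonUnitalRing M] [StarRing M] [Module ℂ M]
    (N : M → ℝ) : Prop where
  add_le : ∀ x y, N (x + y) ≤ N x + N y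
  smul_eq : ∀ (c : ℂ) (x : M), N (c • x) = ‖c‖ * N x
  eq_zero_of : ∀ x, N x = 0 → x = 0
  mul_le : ∀ x y, N (x * y) ≤ N x * N y
  star_mul_self : ∀ x, N (star x * x) = N x * N x

/-- The operator space projective tensor norm `‖·‖_∧` on the algebraic tensor product
`A ⊗ B`, relative to given families of matrix norms on `A` and `B`:
`‖u‖_∧ = inf { ‖α‖ ‖v‖ ‖w‖ ‖β‖ : u = α (v ⊗ w) β }` where `v ∈ M_p(A)`, `w ∈ M_q(B)`,
`α ∈ M_{1,pq}(ℂ)` and `β ∈ M_{pq,1}(ℂ)` (row and column vectors carrying the Euclidean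
norm, which is their norm as scalar matrices). -/
noncomputable def osProjNorm {A B : Type u}
    [AddCommGroup A] [Module ℂ A] [AddCommGroup B] [Module ℂ B]
    (NA : ∀ p : ℕ, Matrix (Fin p) (Fin p) A → ℝ)
    (NB : ∀ q : ℕ, Matrix (Fin q) (Fin q) B → ℝ) (u : A ⊗[ℂ] B) : ℝ :=
  sInf { r : ℝ | ∃ (p q : ℕ) (α : Fin p × Fin q → ℂ) (v : Matrix (Fin p) (Fin p) A)
      (w : Matrix (Fin q) (Fin q) B) (β : Fin p × Fin q → ℂ),
      u = ∑ ik : Fin p × Fin q, ∑ jl : Fin p × Fin q,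
            (α ik * β jl) • (v ik.1 jl.1 ⊗ₜ[ℂ] w ik.2 jl.2) ∧
      r = Real.sqrt (∑ ik, ‖α ik‖ ^ 2) * NA p v * NB q w *
            Real.sqrt (∑ jl, ‖β jl‖ ^ 2) }

/-- `X` is a completion of the algebraic tensor product `A ⊗ B` with respect to the
norm `ν`, via the (necessarily isometric) dense embedding `ι`, and the multiplication and
involution of `X` are the canonical ones induced from `A` and `B`.  Applied with
`ν = osProjNorm NA NB` (for the canonical matrix C⋆-norms `NA`, `NB`) this characterizes
the Banach `*`-algebra `A ⊗̂ B` (the operator space projective tensor product) up to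
isometric `*`-isomorphism; applied with `ν = bsProjNorm` it characterizes the Banach
space projective tensor product `A ⊗_γ B`. -/
structure IsTensorCompletion {A B : Type u} [NonUnitalRing A] [StarRing A] [Module ℂ A]
    [NonUnitalRing B] [StarRing B] [Module ℂ B] (ν : A ⊗[ℂ] B → ℝ)
    (X : Type u) [NonUnitalNormedRing X] [StarRing X] [NormedSpace ℂ X] [CompleteSpace X]
    (ι : A ⊗[ℂ] B →ₗ[ℂ] X) : Prop where
  norm_eq : ∀ u, ‖ι u‖ = ν u
  dense : DenseRange ι
  mul_tmul : ∀ (a c : A) (b d : B),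
    ι (a ⊗ₜ[ℂ] b) * ι (c ⊗ₜ[ℂ] d) = ι ((a * c) ⊗ₜ[ℂ] (b * d))
  star_tmul : ∀ (a : A) (b : B), star (ι (a ⊗ₜ[ℂ] b)) = ι (star a ⊗ₜ[ℂ] star b)

/-- The product ideal `S ⊗̂ T`: the closure in `X` (a completion of `A ⊗ B`) of the span of
elementary tensors `a ⊗ b` with `a ∈ S`, `b ∈ T`. -/
def tensorIdeal {A B : Type u} [NonUnitalRing A] [StarRing A] [Module ℂ A]
    [NonUnitalRing B] [StarRing B] [Module ℂ B]
    {X : Type u} [NonUnitalNormedRing X] [StarRing X] [NormedSpace ℂ X] [CompleteSpace X]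
    (ι : A ⊗[ℂ] B →ₗ[ℂ] X) (S : Set A) (T : Set B) : Set X :=
  closure (ι '' (Submodule.span ℂ (Set.image2 (fun a b => a ⊗ₜ[ℂ] b) S T)))

/-- A closed prime (two-sided) ideal of a Banach algebra: a proper closed two-sided ideal `K`
such that whenever the product of two closed two-sided ideals is contained in `K`, one of them
is contained in `K`. -/
def IsClosedPrimeIdeal {Y : Type u} [NonUnitalNormedRing Y] (K : TwoSidedIdeal Y) : Prop :=
  IsClosed (K : Set Y) ∧ (K : Set Y) ≠ Set.univ ∧
    ∀ I J : TwoSidedIdeal Y, IsClosed (I : Set Y) → IsClosed (J : Set Y) →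
      (∀ x ∈ I, ∀ y ∈ J, x * y ∈ K) → (I : Set Y) ⊆ (K : Set Y) ∨ (J : Set Y) ⊆ (K : Set Y)

/-- An irreducible continuous `*`-representation of a Banach `*`-algebra `Y` on a complex
Hilbert space. -/
structure IrreducibleRepOn (Y : Type u)
    [NonUnitalNormedRing Y] [StarRing Y] [NormedSpace ℂ Y] where
  H : Type u
  [normH : NormedAddCommGroup H]
  [ipsH : InnerProductSpace ℂ H]
  [csH : CompleteSpace H]
  π : Y →⋆ₙₐ[ℂ] (H →L[ℂ] H)
  continuous : Continuous π
  nonzero : ∃ y, π y ≠ 0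
  irreducible : ∀ S : Submodule ℂ H, IsClosed (S : Set H) →
    (∀ y : Y, ∀ v ∈ S, π y v ∈ S) → S = ⊥ ∨ S = ⊤

/-- A primitive ideal: the kernel of an irreducible `*`-representation. -/
def IsPrimitiveIdeal {Y : Type u} [NonUnitalNormedRing Y] [StarRing Y] [NormedSpace ℂ Y]
    (K : TwoSidedIdeal Y) : Prop :=
  ∃ ρ : IrreducibleRepOn Y, ∀ y, y ∈ K ↔ ρ.π y = 0

/-- A subset `K` of a ring is modular (as an ideal) if there is a relative unit `e`
with `x * e - x ∈ K` and `e * x - x ∈ K` for every `x`. -/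
def IsModularIdealSet {Y : Type u} [NonUnitalRing Y] (K : Set Y) : Prop :=
  ∃ e : Y, ∀ x : Y, x * e - x ∈ K ∧ e * x - x ∈ K

/-- A maximal modular (two-sided) ideal: a modular ideal which is proper and maximal among
proper two-sided ideals. -/
def IsMaximalModularIdeal {Y : Type u} [NonUnitalRing Y] (K : TwoSidedIdeal Y) : Prop :=
  IsModularIdealSet (K : Set Y) ∧ (K : Set Y) ≠ Set.univ ∧
    ∀ L : TwoSidedIdeal Y, (K : Set Y) ⊆ (L : Set Y) →
      (L : Set Y) = (K : Set Y) ∨ (L : Set Y) = Set.univ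

/-- The operator norm of a `p × p` matrix of bounded operators on a Hilbert space `H`,
viewed as an operator on the `ℓ²`-direct sum `H ⊕ ⋯ ⊕ H`. -/
noncomputable def opMatrixNorm {H : Type u} [NormedAddCommGroup H] [InnerProductSpace ℂ H]
    {p : ℕ} (T : Matrix (Fin p) (Fin p) (H →L[ℂ] H)) : ℝ :=
  sSup { r : ℝ | ∃ x : Fin p → H, (∑ i, ‖x i‖ ^ 2) ≤ 1 ∧
      r = Real.sqrt (∑ i, ‖∑ j, (T i j) (x j)‖ ^ 2) }

/-- An operator algebra structure on a Banach algebra `Y`: a bicontinuous algebra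
homomorphism of `Y` into the bounded operators on some Hilbert space. -/
structure OperatorAlgebraEmbedding (Y : Type u) [NonUnitalNormedRing Y] [NormedSpace ℂ Y] where
  H : Type u
  [normH : NormedAddCommGroup H]
  [ipsH : InnerProductSpace ℂ H]
  [csH : CompleteSpace H]
  ρ : Y →ₙₐ[ℂ] (H →L[ℂ] H)
  c : ℝ
  C : ℝ
  c_pos : 0 < c
  lower : ∀ y, c * ‖y‖ ≤ ‖ρ y‖
  upper : ∀ y, ‖ρ y‖ ≤ C * ‖y‖

/-- The matrix norms on `Y` induced by an operator algebra embedding, giving `Y` its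
operator space structure: the norm of `v ∈ M_p(Y)` is the operator norm of the matrix
of operators obtained by applying the embedding entrywise. -/
noncomputable def OperatorAlgebraEmbedding.matrixNorm {Y : Type u}
    [NonUnitalNormedRing Y] [NormedSpace ℂ Y] (e : OperatorAlgebraEmbedding Y)
    (p : ℕ) (v : Matrix (Fin p) (Fin p) Y) : ℝ :=
  letI := e.normH; letI := e.ipsH
  opMatrixNorm (v.map e.ρ)

/-- The Banach space projective tensor norm `‖·‖_γ` on the algebraic tensor product. -/
noncomputable def bsProjNorm {A B : Type u} [NonUnitalNormedRing A] [NormedSpace ℂ A]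
    [NonUnitalNormedRing B] [NormedSpace ℂ B] (u : A ⊗[ℂ] B) : ℝ :=
  sInf { r : ℝ | ∃ (n : ℕ) (a : Fin n → A) (b : Fin n → B),
      u = ∑ i, a i ⊗ₜ[ℂ] b i ∧ r = ∑ i, ‖a i‖ * ‖b i‖ }

/-- A C⋆-algebra `A` is subhomogeneous if there is `n : ℕ` bounding the (finite)
dimensions of all its irreducible `*`-representations. -/
def IsSubhomogeneous (A : Type u) [NonUnitalCStarAlgebra A] : Prop :=
  ∃ n : ℕ, ∀ ρ : IrreducibleRepOn A,
    letI := ρ.normH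
    letI := ρ.ipsH
    FiniteDimensional ℂ ρ.H ∧ Module.finrank ℂ ρ.H ≤ n


set_option linter.all false

section P0
variable {M : Type*} [NonUnitalCStarAlgebra M] {N : M → ℝ}

lemma IsCStarNorm.nonneg (hN : IsCStarNorm N) (x : M) : 0 ≤ N x := by
  have h0 : N 0 = 0 := by simpa using hN.smul_eq 0 0
  have h1 := hN.add_le x (-x)
  have h2 := hN.smul_eq (-1) x
  simp at h2
  simp [h0, h2] at h1
  linarith

lemma IsCStarNorm.sa_mul_le (hN : IsCStarNorm N) (h m : M) (hh : IsSelfAdjoint h)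
    (h1 : ‖h‖ ≤ 1) : N (h * m) ≤ N m := by
  set r : M := cfcₙ (fun t : ℝ => 1 - Real.sqrt (1 - t ^ 2)) h with hr
  have hrs : star r = r := by
    have : IsSelfAdjoint r := cfcₙ_predicate _ _
    exact this
  have hc : ContinuousOn (fun t : ℝ => 1 - Real.sqrt (1 - t ^ 2)) (quasispectrum ℝ h) := by
    fun_prop
  have hcomm : r * h = h * r := by
    have := (cfcₙ_commute_cfcₙ (fun t : ℝ => 1 - Real.sqrt (1 - t ^ 2)) id h)
    rw [cfcₙ_id ℝ h] at this
    exact this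
  have hrel : r * r + h * h = r + r := by
    have e1 : h = cfcₙ (fun t : ℝ => t) h := (cfcₙ_id' ℝ h).symm
    have e2 : h * h = cfcₙ (fun t : ℝ => t * t) h := by
      conv_lhs => rw [e1]
      rw [← cfcₙ_mul (fun t : ℝ => t) (fun t : ℝ => t) h (by fun_prop) (by simp) (by fun_prop) (by simp)]
    rw [e2, hr, ← cfcₙ_mul _ _ h hc (by simp) hc (by simp), ← cfcₙ_add _ _ h (by fun_prop) (by simp) (by fun_prop) (by simp), ← cfcₙ_add _ _ h hc (by simp) hc (by simp)]
    apply cfcₙ_congr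
    intro t ht
    have ht' : |t| ≤ 1 := by
      have := NonUnitalIsometricContinuousFunctionalCalculus.norm_quasispectrum_le h ht
      simpa using this.trans h1
    have ht2 : 0 ≤ 1 - t ^ 2 := by
      have := sq_le_one_iff_abs_le_one t |>.2 ht'
      linarith
    have := Real.mul_self_sqrt ht2
    simp only
    nlinarith
  have hhs : star h = h := hh
  have key : ∀ c : ℂ, star c = -c → c * c = -1 →
      N (m - r * m + c • (h * m)) = N m := by
    intro c hc1 hc2
    have e : star (m - r * m + c • (h * m)) * (m - r * m + c • (h * m)) = star m * m := by
      have : star (m - r * m + c • (h * m)) * (m - r * m + c • (h * m))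
        = star m * m + star m * ((r * r + h * h - (r + r)) * m)
          + c • (star m * ((h * r - r * h) * m)) := by
        simp only [star_add, star_sub, star_mul, star_smul, hrs, hhs, hc1]
        simp only [mul_add, add_mul, mul_sub, sub_mul, smul_mul_assoc, mul_smul_comm, smul_smul,
          hc2, smul_add, smul_sub, neg_smul, one_smul, mul_assoc, neg_mul, mul_neg, smul_neg, neg_neg]
        abel
      rw [this, hrel, hcomm]; simp
    have e' := hN.star_mul_self (m - r * m + c • (h * m))
    rw [e, hN.star_mul_self m] at e'
    exact ((mul_self_inj (hN.nonneg _) (hN.nonneg _)).1 e').symm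
  have k1 := key Complex.I (by simp) (by simp)
  have k2 := key (-Complex.I) (by simp) (by simp)
  have e : (2 * Complex.I) • (h * m) = (m - r * m + Complex.I • (h * m))
      + (-1 : ℂ) • (m - r * m + (-Complex.I) • (h * m)) := by
    module
  have := hN.add_le (m - r * m + Complex.I • (h * m)) ((-1 : ℂ) • (m - r * m + (-Complex.I) • (h * m)))
  rw [← e, hN.smul_eq, hN.smul_eq, k1, k2] at this
  simp at this
  linarith

lemma IsCStarNorm.le_norm (hN : IsCStarNorm N) (x : M) : N x ≤ ‖x‖ := by
  have sa : ∀ h : M, IsSelfAdjoint h → N h ≤ ‖h‖ := by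
    intro h hh
    by_cases h0 : h = 0
    · have : N 0 = 0 := by simpa using hN.smul_eq 0 0
      simp [h0, this]
    have hp : 0 < ‖h‖ := norm_pos_iff.2 h0
    have := hN.sa_mul_le (((‖h‖⁻¹ : ℝ) : ℂ) • h) h (by
      rw [IsSelfAdjoint, star_smul, hh.star_eq]; simp) (by
      rw [norm_smul]; simp [hp.ne'])
    rw [smul_mul_assoc, hN.smul_eq] at this
    have e := hN.star_mul_self h
    rw [hh.star_eq] at e
    rw [e] at this
    by_contra hlt
    push Not at hlt
    have hNp : 0 < N h := hp.trans hlt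
    simp at this
    rw [inv_mul_le_iff₀ hp] at this
    nlinarith
  have h1 := sa _ (IsSelfAdjoint.star_mul_self x)
  rw [hN.star_mul_self, CStarRing.norm_star_mul_self] at h1
  exact abs_le_of_sq_le_sq' (by nlinarith) (norm_nonneg _) |>.2

lemma IsCStarNorm.eq_norm (hN : IsCStarNorm N) (x : M) : N x = ‖x‖ := by
  letI : PartialOrder M := CStarAlgebra.spectralOrder M
  letI : StarOrderedRing M := CStarAlgebra.spectralOrderedRing M
  refine le_antisymm (hN.le_norm x) ?_
  by_contra hlt
  push Not at hlt
  obtain ⟨h, hh⟩ : ∃ h, h = star x * x := ⟨_, rfl⟩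
  have hlt' : N h < ‖h‖ := by
    rw [hh, hN.star_mul_self, CStarRing.norm_star_mul_self]
    exact mul_self_lt_mul_self (hN.nonneg _) hlt
  obtain ⟨r, hr1, hr2⟩ := exists_between hlt'
  have hrp : 0 < r := (hN.nonneg _).trans_lt hr1
  have hsa : IsSelfAdjoint h := hh ▸ IsSelfAdjoint.star_mul_self x
  let q : ℕ → ℝ → ℝ := fun k t => max 0 (t - r) / (max t r) ^ k
  have hmax : ∀ t : ℝ, 0 < max t r := fun t => lt_max_of_lt_right hrp
  have qc : ∀ k, Continuous (q k) := by
    intro k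
    refine Continuous.div (by fun_prop) (by fun_prop) ?_
    intro t; exact (pow_pos (hmax t) k).ne'
  have q0 : ∀ k, q k 0 = 0 := by
    intro k; simp [q, hrp.le]
  have step : ∀ k, cfcₙ (q k) h = h * cfcₙ (q (k+1)) h := by
    intro k
    have e1 : h = cfcₙ (fun t : ℝ => t) h := (cfcₙ_id' ℝ h).symm
    conv_rhs => enter [1]; rw [e1]
    rw [← cfcₙ_mul _ _ h (by fun_prop) (by simp) (qc _).continuousOn (q0 _)]
    congr 1
    ext t
    simp only [q]
    rcases le_total t r with htr | htr
    · have : max 0 (t - r) = 0 := by simp [htr]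
      simp [this]
    · have : max t r = t := max_eq_left htr
      rw [this]
      have : t ≠ 0 := (hrp.trans_le htr).ne'
      field_simp
      ring
  have hqle : ∀ k, ‖cfcₙ (q k) h‖ ≤ ‖h‖ / r ^ k := by
    intro k
    apply norm_cfcₙ_le
    intro t ht
    have ht' := NonUnitalIsometricContinuousFunctionalCalculus.norm_quasispectrum_le h ht
    simp only [q, Real.norm_eq_abs] at ht' ⊢
    rw [abs_of_nonneg (div_nonneg (le_max_left _ _) (pow_pos (hmax t) k).le)]
    have : max 0 (t - r) ≤ ‖h‖ := max_le (norm_nonneg _) (by linarith [le_abs_self t])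
    gcongr
    exact le_max_right _ _
  have hNq : ∀ k, N (cfcₙ (q 0) h) ≤ ‖h‖ * (N h / r) ^ k := by
    intro k
    have : N (cfcₙ (q 0) h) ≤ N h ^ k * N (cfcₙ (q k) h) := by
      induction k with
      | zero => simp
      | succ k ih =>
        refine ih.trans ?_
        rw [step k, pow_succ, mul_assoc]
        exact mul_le_mul_of_nonneg_left (hN.mul_le _ _) (pow_nonneg (hN.nonneg _) _)
    refine this.trans ?_
    calc N h ^ k * N (cfcₙ (q k) h) ≤ N h ^ k * (‖h‖ / r ^ k) :=
          mul_le_mul_of_nonneg_left ((hN.le_norm _).trans (hqle k)) (pow_nonneg (hN.nonneg _) _)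
      _ = _ := by rw [div_pow]; ring
  have hlim : Filter.Tendsto (fun k : ℕ => ‖h‖ * (N h / r) ^ k) Filter.atTop (nhds (‖h‖ * 0)) := by
    apply Filter.Tendsto.const_mul
    apply tendsto_pow_atTop_nhds_zero_of_lt_one (div_nonneg (hN.nonneg _) hrp.le)
    rwa [div_lt_one hrp]
  have hz : N (cfcₙ (q 0) h) = 0 := by
    refine le_antisymm ?_ (hN.nonneg _)
    have := ge_of_tendsto' hlim hNq
    simpa using this
  have hz' := hN.eq_zero_of _ hz
  have : h = cfcₙ (fun t => t - q 0 t) h := by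
    rw [cfcₙ_sub (fun t : ℝ => t) (q 0) h (by fun_prop) (by simp) (qc _).continuousOn (q0 _), hz',
      cfcₙ_id' ℝ h, sub_zero]
  have hfin : ‖h‖ ≤ r := by
    rw [this]
    apply norm_cfcₙ_le
    intro t ht
    have htn : 0 ≤ t := quasispectrum_nonneg_of_nonneg h (hh ▸ star_mul_self_nonneg x) t ht
    simp only [q, pow_zero, div_one, Real.norm_eq_abs]
    rcases le_total t r with htr | htr
    · rw [max_eq_left (by linarith), sub_zero, abs_of_nonneg htn]; exact htr
    · rw [max_eq_right (by linarith)]; rw [abs_of_nonneg (by linarith)]; linarith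
  linarith
end P0

section P1
variable {P Q : Type*} [CStarAlgebra P] [CStarAlgebra Q]

lemma cs_norm_one_le (P : Type*) [CStarAlgebra P] : ‖(1 : P)‖ ≤ 1 := by
  have h := CStarRing.norm_star_mul_self (x := (1 : P))
  simp only [star_one, mul_one] at h
  by_contra hlt
  push Not at hlt
  nlinarith

lemma norm_one_add_le (k : Q) (hk : IsSelfAdjoint k) (hk1 : ‖k‖ ≤ 1) (β : ℝ) (c : ℂ)
    (hc1 : star c = -c) (hc2 : c * c = -(β : ℂ) * β) : ‖1 + c • k‖ ≤ 1 + β ^ 2 / 2 := by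
  have hks : star k = k := hk
  have e : star (1 + c • k) * (1 + c • k) = 1 + ((β : ℂ) * β) • (k * k) := by
    simp only [star_add, star_one, star_smul, hks, hc1, mul_add, add_mul, mul_one, one_mul,
      smul_mul_assoc, mul_smul_comm, smul_smul, neg_mul, neg_smul, hc2]
    simp
    rw [smul_smul, hc2, neg_mul, neg_smul, neg_neg]
  have h1 : ‖1 + ((β : ℂ) * β) • (k * k)‖ ≤ 1 + β ^ 2 := by
    refine (norm_add_le _ _).trans (add_le_add (cs_norm_one_le Q) ?_)
    rw [norm_smul]
    have : ‖k * k‖ ≤ 1 := (norm_mul_le _ _).trans (mul_le_one₀ hk1 (norm_nonneg _) hk1)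
    have h2 : ‖(β : ℂ) * β‖ = β ^ 2 := by simp [← pow_two]
    rw [h2]
    exact mul_le_of_le_one_right (sq_nonneg _) this
  rw [← e, CStarRing.norm_star_mul_self] at h1
  apply le_of_sq_le_sq _ (by positivity)
  nlinarith [sq_nonneg (β ^ 2)]

/-- near-norming functionals are almost real on selfadjoint elements -/
lemma L0 (g : Q →ₗ[ℂ] ℂ) (hg : ∀ y, ‖g y‖ ≤ ‖y‖) (τ : ℝ) (h1 : 1 - τ ≤ (g 1).re)
    (k : Q) (hk : IsSelfAdjoint k) (hk1 : ‖k‖ ≤ 1) (β : ℝ) (hβ : 0 < β) :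
    |(g k).im| ≤ τ / β + β / 2 := by
  have key : ∀ s : ℝ, s * s = 1 → s * (g k).im * β ≤ τ + β ^ 2 / 2 := by
    intro s hs
    have hn := norm_one_add_le k hk hk1 β (-(s * β : ℝ) * Complex.I) (by simp) (by
      have : (s : ℂ) * s = 1 := by exact_mod_cast hs
      push_cast
      linear_combination ((β : ℂ) ^ 2 * s ^ 2) * Complex.I_sq - β ^ 2 * this)
    have h2 := (Complex.re_le_norm _).trans ((hg _).trans hn)
    simp at h2
    linarith
  have k1 := key 1 (by norm_num)
  have k2 := key (-1) (by norm_num)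
  have e : τ / β + β / 2 = (τ + β ^ 2 / 2) / β := by field_simp
  rw [e, abs_le]
  constructor
  · rw [← neg_div, div_le_iff₀ hβ]; linarith
  · rw [le_div_iff₀ hβ]; linarith

lemma norm_cfc_circle (S : P) (hS : IsSelfAdjoint S) (u v : ℝ → ℝ) (hu : Continuous u)
    (hv : Continuous v) (huv : ∀ t, u t * u t + v t * v t = 1) (c : ℂ) (hc : star c = -c)
    (hcc : c * c = -1) : ‖cfc u S + c • cfc v S‖ ≤ 1 := by
  have e1 : star (cfc u S) = cfc u S := (cfc_predicate u S : IsSelfAdjoint _)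
  have e2 : star (cfc v S) = cfc v S := (cfc_predicate v S : IsSelfAdjoint _)
  have hcomm : cfc u S * cfc v S = cfc v S * cfc u S := cfc_commute_cfc u v S
  have e3 : cfc u S * cfc u S + cfc v S * cfc v S = 1 := by
    rw [← cfc_mul _ _ S hu.continuousOn hu.continuousOn, ← cfc_mul _ _ S hv.continuousOn hv.continuousOn,
      ← cfc_add _ _ _ (by fun_prop) (by fun_prop)]
    simp only [huv]
    exact cfc_const_one ℝ S
  have e : star (cfc u S + c • cfc v S) * (cfc u S + c • cfc v S) = 1 := by
    simp only [star_add, star_smul, e1, e2, hc, mul_add, add_mul, smul_mul_assoc, mul_smul_comm,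
      neg_smul, neg_mul, smul_add, smul_smul, hcc, one_smul, neg_neg, smul_neg, mul_neg, hcomm]
    rw [← e3]; abel
  have h := CStarRing.norm_star_mul_self (x := cfc u S + c • cfc v S)
  rw [e] at h
  have h1 := cs_norm_one_le P
  by_contra hlt
  push Not at hlt
  nlinarith


lemma f_lower (G : P →ₗ[ℂ] Q →ₗ[ℂ] ℂ) (hG : ∀ x y, ‖G x y‖ ≤ ‖x‖ * ‖y‖) (η : ℝ)
    (h11 : 1 - η ≤ (G 1 1).re) [PartialOrder P] [StarOrderedRing P] (a : P) (ha : 0 ≤ a) (r : ℝ) (hr : 0 ≤ r)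
    (har : ‖a‖ ≤ r) : -(η * r) ≤ (G a 1).re := by
  have hη : 0 ≤ η := by
    have := (Complex.re_le_norm _).trans (hG 1 1)
    have := mul_le_one₀ (cs_norm_one_le P) (norm_nonneg _) (cs_norm_one_le Q)
    linarith
  have h1 : ‖algebraMap ℝ P r - a‖ ≤ r := by
    have hle : a ≤ algebraMap ℝ P r :=
      (CStarAlgebra.norm_le_iff_le_algebraMap a hr ha).1 har
    rw [CStarAlgebra.norm_le_iff_le_algebraMap _ hr (sub_nonneg.2 hle)]
    exact sub_le_self _ ha
  have h2 := (Complex.re_le_norm _).trans (hG (algebraMap ℝ P r - a) 1)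
  have h3 : (G (algebraMap ℝ P r - a) 1).re = r * (G 1 1).re - (G a 1).re := by
    have : algebraMap ℝ P r = (r : ℂ) • (1 : P) := by
      rw [Algebra.algebraMap_eq_smul_one]; simp
    rw [this]; simp
  have h4 : ‖algebraMap ℝ P r - a‖ * ‖(1 : Q)‖ ≤ r * 1 :=
    mul_le_mul h1 (cs_norm_one_le Q) (norm_nonneg _) hr
  nlinarith

lemma G_small (G : P →ₗ[ℂ] Q →ₗ[ℂ] ℂ) (hG : ∀ x y, ‖G x y‖ ≤ ‖x‖ * ‖y‖) (η : ℝ)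
    (h11 : 1 - η ≤ (G 1 1).re) (S : P) (hS : IsSelfAdjoint S) (p : ℝ → ℝ) (hp : Continuous p)
    (hp0 : ∀ t, 0 ≤ p t) (hp1 : ∀ t, p t ≤ 1) (k : Q) (hk : IsSelfAdjoint k) (hk1 : ‖k‖ ≤ 1)
    (β : ℝ) (hβ : 0 < β) :
    ‖G (cfc p S) k‖ ≤ 4 * ((G (cfc p S) 1).re + 2 * η) / β + 2 * β := by
  letI : PartialOrder P := CStarAlgebra.spectralOrder P
  letI : StarOrderedRing P := CStarAlgebra.spectralOrderedRing P
  have hη : 0 ≤ η := by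
    have := (Complex.re_le_norm _).trans (hG 1 1)
    have := mul_le_one₀ (cs_norm_one_le P) (norm_nonneg _) (cs_norm_one_le Q)
    linarith
  have main : ∀ u v : ℝ → ℝ, Continuous u → Continuous v → (∀ t, u t * u t + v t * v t = 1) →
      ∀ τ : ℝ, 1 - τ ≤ (G (cfc u S) 1).re →
      |(G (cfc u S) k).im| ≤ 2 * τ / β + β / 2 ∧ |(G (cfc v S) k).re| ≤ 2 * τ / β + β / 2 := by
    intro u v hu hv huv τ hτ
    have n1 := norm_cfc_circle S hS u v hu hv huv Complex.I (by simp) (by simp)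
    have n2 := norm_cfc_circle S hS u v hu hv huv (-Complex.I) (by simp) (by simp)
    have cg : ∀ x : P, ‖x‖ ≤ 1 → ∀ y, ‖G x y‖ ≤ ‖y‖ := fun x hx y =>
      (hG x y).trans (mul_le_of_le_one_left (norm_nonneg _) hx)
    have r1 := (Complex.re_le_norm _).trans ((cg _ n1 1).trans (cs_norm_one_le Q))
    have r2 := (Complex.re_le_norm _).trans ((cg _ n2 1).trans (cs_norm_one_le Q))
    have a1 := L0 (G (cfc u S + Complex.I • cfc v S)) (cg _ n1) (2 * τ) (by
      simp at r1 r2 ⊢; linarith) k hk hk1 β hβ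
    have a2 := L0 (G (cfc u S + (-Complex.I) • cfc v S)) (cg _ n2) (2 * τ) (by
      simp at r1 r2 ⊢; linarith) k hk hk1 β hβ
    simp at a1 a2
    rw [abs_le] at a1 a2
    constructor <;> rw [abs_le] <;> constructor <;> linarith
  have hone : cfc (fun _ : ℝ => (1 : ℝ)) S = 1 := cfc_const_one ℝ S
  have m1 := (main (fun t => 1 - p t) (fun t => Real.sqrt (2 * p t - p t ^ 2)) (by fun_prop)
    (by fun_prop) (by
      intro t
      rw [Real.mul_self_sqrt (by nlinarith [hp0 t, hp1 t])]; ring) (η + (G (cfc p S) 1).re) (by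
      rw [cfc_sub _ _ S (by fun_prop) (by fun_prop), hone]; simp; linarith)).1
  rw [cfc_sub _ _ S (by fun_prop) (by fun_prop), hone] at m1
  have m0 := L0 (G 1) (fun y => (hG 1 y).trans
    (mul_le_of_le_one_left (norm_nonneg _) (cs_norm_one_le P))) η h11 k hk hk1 β hβ
  have hc : ∀ t, 0 ≤ 1 - p t ^ 2 := fun t => by nlinarith [hp0 t, hp1 t]
  have hsq : ∀ t, 1 - p t ≤ Real.sqrt (1 - p t ^ 2) := fun t => by
    apply Real.le_sqrt_of_sq_le; nlinarith [hp0 t, hp1 t]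
  have hsq1 : ∀ t, Real.sqrt (1 - p t ^ 2) ≤ 1 := fun t => by
    exact Real.sqrt_le_iff.2 ⟨zero_le_one, by nlinarith [hp0 t]⟩
  have m2 := (main (fun t => Real.sqrt (1 - p t ^ 2)) p (by fun_prop) hp (by
      intro t
      rw [Real.mul_self_sqrt (hc t)]; ring) (2 * η + (G (cfc p S) 1).re) (by
      have h := f_lower G hG η h11 (cfc (fun t => Real.sqrt (1 - p t ^ 2) - (1 - p t)) S)
        (cfc_nonneg (fun t _ => by linarith [hsq t])) 1 zero_le_one (by
          apply norm_cfc_le zero_le_one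
          intro t _
          rw [Real.norm_eq_abs, abs_le]
          constructor <;> linarith [hsq t, hsq1 t, hp0 t, hp1 t])
      rw [cfc_sub _ _ S (by fun_prop) (by fun_prop), cfc_sub _ _ S (by fun_prop) (by fun_prop),
        hone] at h
      simp at h
      linarith)).2
  have b1 := Complex.norm_le_abs_re_add_abs_im (G (cfc p S) k)
  simp at m1
  have hb : 0 < β⁻¹ := inv_pos.2 hβ
  simp only [div_eq_mul_inv] at *
  rw [abs_le] at m1 m0
  have : |(G (cfc p S) k).im| ≤ (2 * (η + (G (cfc p S) 1).re)) * β⁻¹ + β * 2⁻¹ + (η * β⁻¹ + β * 2⁻¹) := by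
    rw [abs_le]; constructor <;> linarith
  nlinarith [mul_nonneg hη hb.le]

end P1

section P1b
variable {P Q : Type*} [CStarAlgebra P] [CStarAlgebra Q]

lemma eta_nonneg (G : P →ₗ[ℂ] Q →ₗ[ℂ] ℂ) (hG : ∀ x y, ‖G x y‖ ≤ ‖x‖ * ‖y‖) (η : ℝ)
    (h11 : 1 - η ≤ (G 1 1).re) : 0 ≤ η := by
  have := (Complex.re_le_norm _).trans (hG 1 1)
  have := mul_le_one₀ (cs_norm_one_le P) (norm_nonneg _) (cs_norm_one_le Q)
  linarith

lemma G_level1 (G : P →ₗ[ℂ] Q →ₗ[ℂ] ℂ) (hG : ∀ x y, ‖G x y‖ ≤ ‖x‖ * ‖y‖) (η : ℝ)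
    (h11 : 1 - η ≤ (G 1 1).re) (S : P) (hS : IsSelfAdjoint S) (D : ℝ) (hD : 0 ≤ D) (hSD : ‖S‖ ^ 4 ≤ D)
    (x : ℝ) (hx : 0 < x) (p : ℝ → ℝ) (hp : Continuous p)
    (hp0 : ∀ t, 0 ≤ p t) (hp1 : ∀ t, p t ≤ x) (hp4 : ∀ t, p t * x ^ 3 ≤ t ^ 4)
    (k : Q) (hk : IsSelfAdjoint k) (hk1 : ‖k‖ ≤ 1) :
    ‖G (cfc p S) k‖ ≤ (4 * ((G (S ^ 4) 1).re + η * D) + 2) * x⁻¹ + 8 * η * x ^ 3 := by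
  letI : PartialOrder P := CStarAlgebra.spectralOrder P
  letI : StarOrderedRing P := CStarAlgebra.spectralOrderedRing P
  have h4 : cfc (fun t : ℝ => t ^ 4) S = S ^ 4 := cfc_pow_id S 4
  have h1 := f_lower G hG η h11 (cfc (fun t => t ^ 4 - x ^ 3 * p t) S)
    (cfc_nonneg (fun t _ => by linarith [hp4 t])) D hD (by
      apply norm_cfc_le hD
      intro t ht
      have ht' : |t| ≤ ‖S‖ := by
        simpa using NonUnitalIsometricContinuousFunctionalCalculus.norm_quasispectrum_le S (spectrum_subset_quasispectrum ℝ S ht)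
      have : t ^ 4 ≤ D := by
        refine le_trans ?_ hSD
        rw [← Even.pow_abs (by decide : Even 4) t]
        gcongr
      rw [Real.norm_eq_abs, abs_le]
      have h3 : 0 ≤ x ^ 3 * p t := mul_nonneg (by positivity) (hp0 t)
      constructor <;> linarith [hp4 t, hp0 t])
  have e1 : cfc (fun t => t ^ 4 - x ^ 3 * p t) S = S ^ 4 - ((x ^ 3 : ℝ) : ℂ) • cfc p S := by
    rw [cfc_sub _ _ S (by fun_prop) (by fun_prop), h4, cfc_const_mul _ _ S (by fun_prop), Complex.coe_smul]
  have e2 : cfc p S = (x : ℂ) • cfc (fun t => x⁻¹ * p t) S := by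
    rw [cfc_const_mul _ _ S (by fun_prop)]
    have : ((x⁻¹ : ℝ) • cfc p S) = ((x : ℂ)⁻¹) • cfc p S := by
      rw [← Complex.ofReal_inv, Complex.coe_smul]
    rw [this, smul_smul, mul_inv_cancel₀ (by exact_mod_cast hx.ne'), one_smul]
  have h2 := G_small G hG η h11 S hS (fun t => x⁻¹ * p t) (by fun_prop)
    (fun t => mul_nonneg (inv_pos.2 hx).le (hp0 t)) (fun t => by
      rw [inv_mul_le_iff₀ hx]; simpa using hp1 t) k hk hk1 ((x ^ 2)⁻¹) (by positivity)
  have e3 : (G (cfc p S) 1).re = x * (G (cfc (fun t => x⁻¹ * p t) S) 1).re := by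
    conv_lhs => rw [e2]
    simp
  have e4 : ‖G (cfc p S) k‖ = x * ‖G (cfc (fun t => x⁻¹ * p t) S) k‖ := by
    conv_lhs => rw [e2]
    simp [abs_of_pos hx]
  rw [e1] at h1
  have h1' : x ^ 3 * (G (cfc p S) 1).re ≤ (G (S ^ 4) 1).re + η * D := by
    simp [← Complex.ofReal_pow] at h1
    linarith
  rw [e4]
  set φ := (G (cfc (fun t => x⁻¹ * p t) S) 1).re
  rw [e3] at h1'
  have : x * ‖G (cfc (fun t => x⁻¹ * p t) S) k‖ ≤ x * (4 * (φ + 2 * η) / (x ^ 2)⁻¹ + 2 * (x ^ 2)⁻¹) :=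
    mul_le_mul_of_nonneg_left h2 hx.le
  refine this.trans ?_
  have e5 : x * (4 * (φ + 2 * η) / (x ^ 2)⁻¹ + 2 * (x ^ 2)⁻¹)
    = (4 * (x ^ 3 * (x * φ)) + 2) * x⁻¹ + 8 * η * x ^ 3 := by
    field_simp; ring
  rw [e5]
  have := inv_pos.2 hx
  gcongr

def plev (l : ℕ) (t : ℝ) : ℝ := min (max t 0) (2 ^ (l + 1)) - min (max t 0) (2 ^ l)

lemma plev_cont (l : ℕ) : Continuous (plev l) := by unfold plev; fun_prop

lemma plev_nonneg (l : ℕ) (t : ℝ) : 0 ≤ plev l t := by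
  unfold plev
  have : (2 : ℝ) ^ l ≤ 2 ^ (l + 1) := pow_le_pow_right₀ (by norm_num) (by omega)
  linarith [min_le_min_left (max t 0) this]

lemma plev_le (l : ℕ) (t : ℝ) : plev l t ≤ 2 ^ l := by
  unfold plev
  have : (2 : ℝ) ^ (l + 1) = 2 * 2 ^ l := by ring
  have h2 : (0 : ℝ) < 2 ^ l := by positivity
  rcases le_total (max t 0) (2 ^ l) with h | h
  · rw [min_eq_left h, min_eq_left (by linarith)]; linarith
  · rw [min_eq_right h]
    linarith [min_le_right (max t 0) ((2 : ℝ) ^ (l + 1))]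

lemma plev_le4 (l : ℕ) (t : ℝ) : plev l t * (2 ^ l) ^ 3 ≤ t ^ 4 := by
  unfold plev
  have : (2 : ℝ) ^ (l + 1) = 2 * 2 ^ l := by ring
  have h2 : (0 : ℝ) < 2 ^ l := by positivity
  rcases le_total (max t 0) (2 ^ l) with h | h
  · rw [min_eq_left h, min_eq_left (by linarith)]; simp; positivity
  · have ht : 2 ^ l ≤ t := by
      rcases le_max_iff.1 h with h | h
      · exact h
      · linarith
    rw [min_eq_right h]
    have h3 : min (max t 0) ((2 : ℝ) ^ (l + 1)) ≤ t := by
      refine (min_le_left _ _).trans ?_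
      rw [max_eq_left (by linarith)]
    calc (min (max t 0) (2 ^ (l + 1)) - 2 ^ l) * (2 ^ l) ^ 3 ≤ t * t ^ 3 := by
          have : min (max t 0) ((2 : ℝ) ^ (l + 1)) - 2 ^ l ≤ t := by linarith
          gcongr
          linarith
      _ = t ^ 4 := by ring

lemma plev_sum (L : ℕ) (t : ℝ) :
    min (max t 0) 1 + ∑ l ∈ Finset.range L, plev l t = min (max t 0) (2 ^ L) := by
  induction L with
  | zero => simp
  | succ L ih => rw [Finset.sum_range_succ, ← add_assoc, ih]; unfold plev; ring

lemma G_level (G : P →ₗ[ℂ] Q →ₗ[ℂ] ℂ) (hG : ∀ x y, ‖G x y‖ ≤ ‖x‖ * ‖y‖) (η : ℝ)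
    (h11 : 1 - η ≤ (G 1 1).re) (S : P) (hS : IsSelfAdjoint S) (L : ℕ) (hSL : ‖S‖ ≤ 2 ^ L)
    (k : Q) (hk : IsSelfAdjoint k) (hk1 : ‖k‖ ≤ 1) :
    ‖G S k‖ ≤ 9 + 16 * (G (S ^ 4) 1).re + η * (16 * 16 ^ L + 16 * L * 8 ^ L) := by
  letI : PartialOrder P := CStarAlgebra.spectralOrder P
  letI : StarOrderedRing P := CStarAlgebra.spectralOrderedRing P
  have hη := eta_nonneg G hG η h11
  have hS4 : ‖S‖ ^ 4 ≤ 16 ^ L := by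
    calc ‖S‖ ^ 4 ≤ (2 ^ L) ^ 4 := by gcongr
      _ = 16 ^ L := by rw [← pow_mul, mul_comm, pow_mul]; norm_num
  let c0 : ℝ → ℝ := fun t => min (max t 0) 1 - min (max (-t) 0) 1
  have hc0 : Continuous c0 := by unfold c0; fun_prop
  have hpc := plev_cont
  have hpn : ∀ l, Continuous (fun t => plev l (-t)) := fun l => (plev_cont l).comp continuous_neg
  have dec : S = cfc c0 S + ∑ l ∈ Finset.range L, (cfc (plev l) S - cfc (fun t => plev l (-t)) S) := by
    have e : ∀ l, cfc (plev l) S - cfc (fun t => plev l (-t)) S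
        = cfc (fun t => plev l t - plev l (-t)) S := by
      intro l
      rw [cfc_sub _ _ S (hpc l).continuousOn (hpn l).continuousOn]
    simp only [e]
    rw [← cfc_sum (fun l t => plev l t - plev l (-t)) _ _ (fun l _ => ((hpc l).sub (hpn l)).continuousOn), ← cfc_add S _ _ hc0.continuousOn
      (by
        have : Continuous (∑ l ∈ Finset.range L, fun t => plev l t - plev l (-t)) := by
          have e : (∑ l ∈ Finset.range L, fun t => plev l t - plev l (-t))
            = fun t => ∑ l ∈ Finset.range L, (plev l t - plev l (-t)) := by ext t; simp
          rw [e]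
          exact continuous_finset_sum _ (fun l _ => (hpc l).sub (hpn l))
        exact this.continuousOn)]
    conv_lhs => rw [← cfc_id' ℝ S]
    apply cfc_congr
    intro t ht
    have ht' : |t| ≤ 2 ^ L := le_trans (by simpa using NonUnitalIsometricContinuousFunctionalCalculus.norm_quasispectrum_le S (spectrum_subset_quasispectrum ℝ S ht)) hSL
    have a1 := plev_sum L t
    have a2 := plev_sum L (-t)
    have h0 : (0 : ℝ) ≤ 2 ^ L := by positivity
    rw [min_eq_left (max_le (by linarith [le_abs_self t]) h0)] at a1
    rw [min_eq_left (max_le (by linarith [neg_abs_le t]) h0)] at a2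
    simp only [Finset.sum_apply, Finset.sum_sub_distrib, c0]
    have : t = max t 0 - max (-t) 0 := by
      rcases le_total t 0 with h | h
      · rw [max_eq_right h, max_eq_left (by linarith)]; ring
      · rw [max_eq_left h, max_eq_right (by linarith)]; ring
    linarith
  have b0 : ‖G (cfc c0 S) k‖ ≤ 1 := by
    refine (hG _ _).trans (mul_le_one₀ ?_ (norm_nonneg _) hk1)
    apply norm_cfc_le zero_le_one
    intro t _
    rw [Real.norm_eq_abs, abs_le]
    have h1 : 0 ≤ min (max t 0) 1 := le_min (le_max_right _ _) zero_le_one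
    have h2 : 0 ≤ min (max (-t) 0) 1 := le_min (le_max_right _ _) zero_le_one
    have h3 := min_le_right (max t 0) 1
    have h4 := min_le_right (max (-t) 0) 1
    simp only [c0]
    constructor <;> linarith
  set F := (G (S ^ 4) 1).re + η * 16 ^ L with hF
  have hF0 : 0 ≤ F := by
    have hpos : 0 ≤ S ^ 4 := by
      rw [← cfc_pow_id S 4 (R := ℝ)]
      exact cfc_nonneg (fun t _ => by positivity)
    have := f_lower G hG η h11 (S ^ 4) hpos (16 ^ L) (by positivity)
      ((norm_pow_le' S (by norm_num)).trans hS4)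
    linarith
  have bl : ∀ l ∈ Finset.range L, ‖G (cfc (plev l) S - cfc (fun t => plev l (-t)) S) k‖
      ≤ 2 * ((4 * F + 2) * (1 / 2) ^ l + 8 * η * 8 ^ L) := by
    intro l hl
    have hl' : l < L := Finset.mem_range.1 hl
    have b1 := G_level1 G hG η h11 S hS (16 ^ L) (by positivity) hS4 (2 ^ l) (by positivity)
      (plev l) (hpc l) (plev_nonneg l) (plev_le l) (plev_le4 l) k hk hk1
    have b2 := G_level1 G hG η h11 S hS (16 ^ L) (by positivity) hS4 (2 ^ l) (by positivity)
      (fun t => plev l (-t)) (hpn l) (fun t => plev_nonneg l _) (fun t => plev_le l _)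
      (fun t => by simpa [Even.neg_pow (by decide : Even 4)] using plev_le4 l (-t)) k hk hk1
    have e1 : ((2 : ℝ) ^ l)⁻¹ = (1 / 2) ^ l := by rw [one_div, inv_pow]
    have e2 : ((2 : ℝ) ^ l) ^ 3 ≤ 8 ^ L := by
      rw [← pow_mul, mul_comm, pow_mul]; norm_num
      exact pow_le_pow_right₀ (by norm_num) hl'.le
    have e3 : 8 * η * ((2 : ℝ) ^ l) ^ 3 ≤ 8 * η * 8 ^ L := by gcongr
    rw [e1, ← hF] at b1 b2
    rw [map_sub, LinearMap.sub_apply]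
    refine (norm_sub_le _ _).trans ?_
    linarith
  have tot : ‖G S k‖ ≤ 1 + ∑ l ∈ Finset.range L, 2 * ((4 * F + 2) * (1 / 2) ^ l + 8 * η * 8 ^ L) := by
    conv_lhs => rw [dec]
    rw [map_add, LinearMap.add_apply, map_sum, LinearMap.sum_apply]
    exact (norm_add_le _ _).trans (add_le_add b0 ((norm_sum_le _ _).trans (Finset.sum_le_sum bl)))
  refine tot.trans ?_
  rw [← Finset.mul_sum, Finset.sum_add_distrib, ← Finset.mul_sum]
  have g2 := sum_geometric_two_le L
  have : (4 * F + 2) * ∑ i ∈ Finset.range L, (1 / 2 : ℝ) ^ i ≤ (4 * F + 2) * 2 := by gcongr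
  simp only [Finset.sum_const, Finset.card_range, nsmul_eq_mul]
  nlinarith
end P1b

section Rad

def bsg {V : Type*} [AddCommGroup V] (b : Bool) (x : V) : V := cond b x (-x)
def rsum {V : Type*} [AddCommGroup V] {n : ℕ} (h : Fin n → V) (ε : Fin n → Bool) : V :=
  ∑ i, bsg (ε i) (h i)

variable {V W U : Type*} [AddCommGroup V] [AddCommGroup W] [AddCommGroup U]

lemma bsg_map (B : V →+ W) (b : Bool) (x : V) : B (bsg b x) = bsg b (B x) := by
  cases b <;> simp [bsg]

lemma rsum_cons {n : ℕ} (h : Fin (n+1) → V) (b : Bool) (ε : Fin n → Bool) :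
    rsum h (Fin.cons b ε) = bsg b (h 0) + rsum (fun i => h i.succ) ε := by
  simp [rsum, Fin.sum_univ_succ]

lemma sum_bool_cons {n : ℕ} (F : (Fin (n+1) → Bool) → V) :
    ∑ ε, F ε = ∑ ε : Fin n → Bool, (F (Fin.cons true ε) + F (Fin.cons false ε)) := by
  rw [← (Fin.consEquiv (fun _ : Fin (n+1) => Bool)).sum_comp, Fintype.sum_prod_type]
  simp [Fin.consEquiv, Finset.sum_add_distrib]

lemma rad_bilin (B : V →+ W →+ U) : ∀ {n : ℕ} (h : Fin n → V) (k : Fin n → W),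
    ∑ ε, B (rsum h ε) (rsum k ε) = 2 ^ n • ∑ i, B (h i) (k i) := by
  intro n
  induction n with
  | zero => intro h k; simp [rsum]
  | succ n ih =>
    intro h k
    rw [sum_bool_cons]
    simp only [rsum_cons]
    have : ∀ ε : Fin n → Bool,
      (B (bsg true (h 0) + rsum (fun i => h i.succ) ε)) (bsg true (k 0) + rsum (fun i => k i.succ) ε) +
      (B (bsg false (h 0) + rsum (fun i => h i.succ) ε)) (bsg false (k 0) + rsum (fun i => k i.succ) ε)
      = 2 • B (h 0) (k 0) + 2 • B (rsum (fun i => h i.succ) ε) (rsum (fun i => k i.succ) ε) := by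
      intro ε
      simp only [bsg, cond_true, cond_false, map_add, AddMonoidHom.add_apply, map_neg,
        AddMonoidHom.neg_apply]
      abel
    simp only [this]
    rw [Finset.sum_add_distrib, ← Finset.smul_sum, ← Finset.smul_sum, ih, Fin.sum_univ_succ]
    simp only [Finset.sum_const, Finset.card_univ, Fintype.card_fun, Fintype.card_bool, Fintype.card_fin]
    rw [smul_smul, smul_smul, smul_add, pow_succ, mul_comm 2 (2 ^ n)]

lemma rad_four {P : Type*} [CStarAlgebra P] [PartialOrder P] [StarOrderedRing P] :
    ∀ {n : ℕ} (h : Fin n → P) (hsa : ∀ i, IsSelfAdjoint (h i)),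
    ∑ ε, (rsum h ε) ^ 4 ≤ 2 ^ n • ((∑ i, h i * h i) * (∑ i, h i * h i) +
      2 • ∑ i, h i * (∑ j, h j * h j) * h i) := by
  intro n
  induction n with
  | zero => intro h _; simp [rsum]
  | succ n ih =>
    intro h hsa
    rw [sum_bool_cons]
    simp only [rsum_cons]
    set a := h 0 with ha
    set h' : Fin n → P := fun i => h i.succ with hh'
    have has : star a = a := hsa 0
    have hrs : ∀ ε, star (rsum h' ε) = rsum h' ε := by
      intro ε
      simp only [rsum, star_sum]
      refine Finset.sum_congr rfl fun i _ => ?_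
      have : star (h' i) = h' i := hsa i.succ
      cases ε i <;> simp [bsg, this]
    have e1 : ∀ ε : Fin n → Bool, (bsg true a + rsum h' ε) ^ 4 + (bsg false a + rsum h' ε) ^ 4
       ≤ 2 • (rsum h' ε ^ 4 + (rsum h' ε * rsum h' ε) * (a * a) + (a * a) * (rsum h' ε * rsum h' ε)
          + 2 • (rsum h' ε * (a * a) * rsum h' ε) + 2 • (a * (rsum h' ε * rsum h' ε) * a)
          + a ^ 4) := by
      intro ε
      have hs := hrs ε
      generalize rsum h' ε = s at *
      rw [← sub_nonneg]
      have : 2 • (s ^ 4 + (s * s) * (a * a) + (a * a) * (s * s)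
          + 2 • (s * (a * a) * s) + 2 • (a * (s * s) * a) + a ^ 4)
          - ((bsg true a + s) ^ 4 + (bsg false a + s) ^ 4)
          = 2 • (star (a * s - s * a) * (a * s - s * a)) := by
        simp only [bsg, cond_true, cond_false, star_sub, star_mul, hs, has]
        noncomm_ring
      rw [this]
      exact nsmul_nonneg (star_mul_self_nonneg _) 2
    refine (Finset.sum_le_sum (fun ε _ => e1 ε)).trans ?_
    set p := ∑ i, h' i * h' i with hp
    have r0 : ∀ c d : P, ∑ ε, c * (rsum h' ε * rsum h' ε) * d = 2 ^ n • (c * p * d) := by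
      intro c d
      rw [← Finset.sum_mul, ← Finset.mul_sum]
      have := rad_bilin (AddMonoidHom.mul (R := P)) h' h'
      simp only [AddMonoidHom.mul_apply] at this
      rw [this, ← hp, mul_smul_comm, smul_mul_assoc]
    have r1 := r0 1 (a * a)
    have r2 := r0 (a * a) 1
    have r3 := r0 a a
    simp only [one_mul, mul_one] at r1 r2
    have r4 : ∑ ε, rsum h' ε * (a * a) * rsum h' ε = 2 ^ n • ∑ i, h' i * (a * a) * h' i := by
      have := rad_bilin ((AddMonoidHom.mul (R := P)).comp (AddMonoidHom.mulRight (a * a))) h' h'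
      simpa [AddMonoidHom.mul_apply] using this
    rw [← Finset.smul_sum]
    simp only [Finset.sum_add_distrib, ← Finset.smul_sum, r1, r2, r3, r4]
    have ih' := ih h' (fun i => hsa i.succ)
    simp only [Finset.sum_const, Finset.card_univ, Fintype.card_fun, Fintype.card_bool, Fintype.card_fin]
    rw [Fin.sum_univ_succ, Fin.sum_univ_succ]
    rw [← ha]
    change _ ≤ 2 ^ (n+1) • ((a * a + p) * (a * a + p) + 2 • (a * (a * a + p) * a
      + ∑ i, h' i * (a * a + p) * h' i))
    have e5 : ∑ i, h' i * (a * a + p) * h' i = ∑ i, h' i * (a * a) * h' i + ∑ i, h' i * p * h' i := by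
      rw [← Finset.sum_add_distrib]
      exact Finset.sum_congr rfl fun i _ => by rw [mul_add, add_mul]
    rw [e5]
    set q := ∑ i, h' i * (a * a) * h' i
    set z := ∑ i, h' i * p * h' i
    rw [pow_succ (2 : ℕ) n, mul_comm _ 2, mul_smul]
    apply nsmul_le_nsmul_right
    refine (add_le_add_left (add_le_add_left (add_le_add_left (add_le_add_left (add_le_add_left ih' _) _) _) _) _).trans ?_
    simp only [← smul_add, smul_comm (2 ^ n) (2 : ℕ)]
    have e6 : (a * a + p) * (a * a + p) + 2 • (a * (a * a + p) * a + (q + z))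
      = (p * p + 2 • z) + p * (a * a) + (a * a) * p + 2 • q + 2 • (a * p * a) + a ^ 4 + 2 • (star (a * a) * (a * a)) := by
      simp only [star_mul, has]
      noncomm_ring
    rw [e6]
    simp only [smul_comm (2 : ℕ) (2 ^ n : ℕ), ← smul_add]
    apply nsmul_le_nsmul_right
    refine le_add_of_nonneg_right (nsmul_nonneg (star_mul_self_nonneg _) 2)
end Rad

section P1c

lemma rad_four_le {P : Type*} [CStarAlgebra P] [PartialOrder P] [StarOrderedRing P]
    {n : ℕ} (h : Fin n → P) (hsa : ∀ i, IsSelfAdjoint (h i)) (h1 : ∑ i, h i * h i ≤ 1) :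
    ∑ ε, (rsum h ε) ^ 4 ≤ 2 ^ n • (3 : P) := by
  refine (rad_four h hsa).trans (nsmul_le_nsmul_right ?_ _)
  set p := ∑ i, h i * h i with hp
  have hpsa : IsSelfAdjoint p := by
    rw [hp, IsSelfAdjoint, star_sum]
    exact Finset.sum_congr rfl fun i _ => by rw [star_mul, (hsa i).star_eq]
  have e1 : ∑ i, h i * p * h i ≤ p := by
    conv_rhs => rw [hp]
    refine Finset.sum_le_sum fun i _ => ?_
    have := star_left_conjugate_le_conjugate h1 (h i)
    rw [(hsa i).star_eq] at this
    simpa using this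
  have hp0 : 0 ≤ p := by
    rw [hp]
    exact Finset.sum_nonneg fun i _ => by
      have := star_mul_self_nonneg (h i)
      rwa [(hsa i).star_eq] at this
  have e2 : p * p ≤ 1 := by
    have hn : ‖p‖ ≤ 1 := by
      rw [CStarAlgebra.norm_le_one_iff_of_nonneg p hp0]; exact h1
    have hpp : 0 ≤ p * p := by
      have := star_mul_self_nonneg p
      rwa [hpsa.star_eq] at this
    rw [← CStarAlgebra.norm_le_one_iff_of_nonneg _ hpp]
    exact (norm_mul_le _ _).trans (mul_le_one₀ hn (norm_nonneg _) hn)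
  calc p * p + 2 • ∑ i, h i * p * h i ≤ 1 + 2 • 1 :=
        add_le_add e2 (nsmul_le_nsmul_right (e1.trans h1) _)
    _ = 3 := by norm_num

lemma rsum_sa {P : Type*} [CStarAlgebra P] {n : ℕ} (h : Fin n → P)
    (hsa : ∀ i, IsSelfAdjoint (h i)) (ε) : IsSelfAdjoint (rsum h ε) := by
  simp only [rsum, IsSelfAdjoint, star_sum]
  refine Finset.sum_congr rfl fun i _ => ?_
  have : star (h i) = h i := hsa i
  cases ε i <;> simp [bsg, this]

lemma bsg_smul {V : Type*} [AddCommGroup V] [Module ℂ V] (b : Bool) (x : V) :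
    bsg b x = (cond b (1 : ℂ) (-1)) • x := by cases b <;> simp [bsg]

lemma norm_le_one_of_sum_sq {P : Type*} [CStarAlgebra P] [PartialOrder P] [StarOrderedRing P]
    {n : ℕ} (h : Fin n → P) (hsa : ∀ i, IsSelfAdjoint (h i)) (h1 : ∑ i, h i * h i ≤ 1) (i) :
    ‖h i‖ ≤ 1 := by
  have hpos : ∀ i, 0 ≤ h i * h i := fun i => by
    have := star_mul_self_nonneg (h i)
    rwa [(hsa i).star_eq] at this
  have : h i * h i ≤ 1 := (Finset.single_le_sum (fun i _ => hpos i) (Finset.mem_univ i)).trans h1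
  rw [← CStarAlgebra.norm_le_one_iff_of_nonneg _ (hpos i)] at this
  have h2 := CStarRing.norm_star_mul_self (x := h i)
  rw [(hsa i).star_eq] at h2
  rw [h2] at this
  nlinarith [norm_nonneg (h i)]

variable {P Q : Type*} [CStarAlgebra P] [CStarAlgebra Q]

lemma bessel {Q : Type*} [CStarAlgebra Q] [PartialOrder Q] [StarOrderedRing Q] {n : ℕ}
    (T : (Fin n → Bool) → Q) (hT : ∀ ε, IsSelfAdjoint (T ε)) (k : Fin n → Q)
    (hk : ∀ i, 2 ^ n • k i = ∑ ε, bsg (ε i) (T ε)) (hksa : ∀ i, IsSelfAdjoint (k i)) :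
    2 ^ n • ∑ i, k i * k i ≤ ∑ ε, T ε * T ε := by
  have h0 : 0 ≤ ∑ ε, (T ε - rsum k ε) * (T ε - rsum k ε) := by
    refine Finset.sum_nonneg fun ε _ => ?_
    have := star_mul_self_nonneg (T ε - rsum k ε)
    rwa [((hT ε).sub (rsum_sa k hksa ε)).star_eq] at this
  have e1 : ∑ ε, T ε * rsum k ε = 2 ^ n • ∑ i, k i * k i := by
    simp only [rsum, Finset.mul_sum, Finset.smul_sum]
    rw [Finset.sum_comm]
    refine Finset.sum_congr rfl fun i _ => ?_
    rw [← smul_mul_assoc, hk, Finset.sum_mul]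
    refine Finset.sum_congr rfl fun ε _ => ?_
    cases ε i <;> simp [bsg]
  have e2 : ∑ ε, rsum k ε * T ε = 2 ^ n • ∑ i, k i * k i := by
    simp only [rsum, Finset.sum_mul, Finset.smul_sum]
    rw [Finset.sum_comm]
    refine Finset.sum_congr rfl fun i _ => ?_
    rw [← mul_smul_comm, hk, Finset.mul_sum]
    refine Finset.sum_congr rfl fun ε _ => ?_
    cases ε i <;> simp [bsg]
  have e3 : ∑ ε, rsum k ε * rsum k ε = 2 ^ n • ∑ i, k i * k i :=
    rad_bilin (AddMonoidHom.mul (R := Q)) k k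
  have : ∑ ε, (T ε - rsum k ε) * (T ε - rsum k ε)
    = ∑ ε, T ε * T ε - ∑ ε, T ε * rsum k ε - ∑ ε, rsum k ε * T ε + ∑ ε, rsum k ε * rsum k ε := by
    rw [← Finset.sum_sub_distrib, ← Finset.sum_sub_distrib, ← Finset.sum_add_distrib]
    exact Finset.sum_congr rfl fun ε _ => by noncomm_ring
  rw [this, e1, e2, e3] at h0
  rw [← sub_nonneg]
  simpa using h0

lemma core_step (G : P →ₗ[ℂ] Q →ₗ[ℂ] ℂ) (hG : ∀ x y, ‖G x y‖ ≤ ‖x‖ * ‖y‖) (η : ℝ)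
    (h11 : 1 - η ≤ (G 1 1).re) [PartialOrder P] [StarOrderedRing P] [PartialOrder Q] [StarOrderedRing Q]
    (n : ℕ) (hη : η * (16 * 16 ^ n + 16 * n * 8 ^ n + 48) ≤ 1)
    (h : Fin n → P) (hsa : ∀ i, IsSelfAdjoint (h i)) (h1 : ∑ i, h i * h i ≤ 1) (B : ℝ)
    (hB : ∀ k : Fin n → Q, (∀ i, IsSelfAdjoint (k i)) → ∑ i, k i * k i ≤ 1 →
      ‖∑ i, G (h i) (k i)‖ ≤ B)
    (k : Fin n → Q) (ksa : ∀ i, IsSelfAdjoint (k i)) (k1 : ∑ i, k i * k i ≤ 1) :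
    ‖∑ i, G (h i) (k i)‖ ≤ B / 2 + 60 := by
  have hη0 := eta_nonneg G hG η h11
  have hc : (0 : ℝ) < 2 ^ n := by positivity
  let c1 : ℝ → ℝ := fun t => max (-1) (min t 1)
  have hc1 : Continuous c1 := by unfold c1; fun_prop
  have hc2 : Continuous (fun t => t - c1 t) := by fun_prop
  set S := rsum h with hS
  set T := rsum k with hT
  have Ssa : ∀ ε, IsSelfAdjoint (S ε) := rsum_sa h hsa
  have Tsa : ∀ ε, IsSelfAdjoint (T ε) := rsum_sa k ksa
  let T1 : (Fin n → Bool) → Q := fun ε => cfc c1 (T ε)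
  let T2 : (Fin n → Bool) → Q := fun ε => cfc (fun t => t - c1 t) (T ε)
  have T2sa : ∀ ε, IsSelfAdjoint (T2 ε) := fun ε => cfc_predicate _ _
  have hT12 : ∀ ε, T ε = T1 ε + T2 ε := by
    intro ε
    have := Tsa ε
    simp only [T1, T2]
    rw [cfc_sub _ _ (T ε) (by fun_prop) (by fun_prop), cfc_id' ℝ (T ε)]; abel
  have hT1n : ∀ ε, ‖T1 ε‖ ≤ 1 := by
    intro ε
    apply norm_cfc_le zero_le_one
    intro t _
    rw [Real.norm_eq_abs, abs_le]
    exact ⟨le_max_left _ _, max_le (by norm_num) (min_le_right _ _)⟩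
  have hT2sq : ∀ ε, T2 ε * T2 ε ≤ (1 / 16 : ℝ) • T ε ^ 4 := by
    intro ε
    have := Tsa ε
    simp only [T2]
    rw [← cfc_mul _ _ _ hc2.continuousOn hc2.continuousOn, ← cfc_pow_id (T ε) 4 (R := ℝ),
      ← cfc_smul (1 / 16 : ℝ) _ _ (by fun_prop)]
    apply cfc_mono _ (by fun_prop) (by fun_prop)
    intro t _
    simp only [smul_eq_mul, c1]
    rcases le_total t 1 with ht | ht
    · rw [min_eq_left ht]
      rcases le_total (-1) t with h2 | h2
      · rw [max_eq_right h2]; simp; positivity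
      · rw [max_eq_left h2]
        nlinarith [mul_nonneg (sq_nonneg (t + 2)) (show 0 ≤ t ^ 2 - 4 * t - 4 by nlinarith)]
    · rw [min_eq_right ht, max_eq_right (by norm_num)]
      nlinarith [mul_nonneg (sq_nonneg (t - 2)) (show 0 ≤ t ^ 2 + 4 * t - 4 by nlinarith)]
  let k2 : Fin n → Q := fun i => (((2 : ℝ) ^ n)⁻¹ : ℝ) • ∑ ε, bsg (ε i) (T2 ε)
  have hk2 : ∀ i, 2 ^ n • k2 i = ∑ ε, bsg (ε i) (T2 ε) := by
    intro i
    simp only [k2]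
    rw [← Nat.cast_smul_eq_nsmul ℝ, smul_smul]
    push_cast
    rw [mul_inv_cancel₀ hc.ne', one_smul]
  have k2sa : ∀ i, IsSelfAdjoint (k2 i) := by
    intro i
    simp only [k2, IsSelfAdjoint, star_smul, star_sum, star_trivial]
    congr 1
    refine Finset.sum_congr rfl fun ε _ => ?_
    have : star (T2 ε) = T2 ε := T2sa ε
    cases ε i <;> simp [bsg, this]
  have hbes := bessel T2 T2sa k2 hk2 k2sa
  have hk2sq : ∑ i, k2 i * k2 i ≤ (3 / 16 : ℝ) • (1 : Q) := by
    have a1 : 2 ^ n • ∑ i, k2 i * k2 i ≤ (1 / 16 : ℝ) • (2 ^ n • (3 : Q)) := by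
      refine hbes.trans ((Finset.sum_le_sum fun ε _ => hT2sq ε).trans ?_)
      rw [← Finset.smul_sum]
      exact smul_le_smul_of_nonneg_left (rad_four_le k ksa k1) (by norm_num)
    have a2 := smul_le_smul_of_nonneg_left a1 (inv_pos.2 hc).le
    rw [← Nat.cast_smul_eq_nsmul ℝ, smul_smul, ← Nat.cast_smul_eq_nsmul ℝ] at a2
    push_cast at a2
    rw [inv_mul_cancel₀ hc.ne', one_smul, smul_comm, smul_smul, smul_smul, mul_assoc, mul_comm,
      mul_assoc, inv_mul_cancel_left₀ hc.ne'] at a2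
    have : (3 : Q) = (3 : ℝ) • (1 : Q) := by
      rw [← Algebra.algebraMap_eq_smul_one, map_ofNat (algebraMap ℝ Q) 3]
    rw [this, smul_smul] at a2
    norm_num at a2
    exact a2
  have hB2 : ‖∑ i, G (h i) (k2 i)‖ ≤ B / 2 := by
    have a := hB (fun i => (2 : ℝ) • k2 i) (fun i => (IsSelfAdjoint.all (2 : ℝ)).smul (k2sa i)) (by
      have : ∀ i, ((2 : ℝ) • k2 i) * ((2 : ℝ) • k2 i) = (4 : ℝ) • (k2 i * k2 i) := by
        intro i; rw [smul_mul_smul_comm]; norm_num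
      simp only [this]
      rw [← Finset.smul_sum]
      refine (smul_le_smul_of_nonneg_left hk2sq (by norm_num)).trans ?_
      rw [smul_smul]
      have h3 : (1 : Q) = (1 : ℝ) • (1 : Q) := by simp
      conv_rhs => rw [h3]
      exact smul_le_smul_of_nonneg_right (by norm_num) zero_le_one)
    have e : ∑ i, G (h i) ((2 : ℝ) • k2 i) = 2 * ∑ i, G (h i) (k2 i) := by
      rw [Finset.mul_sum]
      refine Finset.sum_congr rfl fun i _ => ?_
      rw [← Complex.coe_smul, map_smul]; simp
    rw [e, norm_mul] at a
    simp at a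
    linarith
  -- main identity
  have id1 : (2 : ℂ) ^ n * ∑ i, G (h i) (k i) = ∑ ε, G (S ε) (T ε) := by
    let BG : P →+ Q →+ ℂ := AddMonoidHom.mk' (fun x => (G x).toAddMonoidHom) (by
      intro a b; ext y; simp)
    have := rad_bilin BG h k
    have h2 : ∀ x y, BG x y = G x y := fun _ _ => rfl
    simp only [h2] at this
    rw [hS, hT, this]; simp
  have id2 : ∑ ε, G (S ε) (T2 ε) = (2 : ℂ) ^ n * ∑ i, G (h i) (k2 i) := by
    have : ∀ i, (2 : ℂ) ^ n * G (h i) (k2 i) = ∑ ε, G (bsg (ε i) (h i)) (T2 ε) := by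
      intro i
      have a := congrArg (G (h i)) (hk2 i)
      rw [map_nsmul, map_sum] at a
      simp only [nsmul_eq_mul, Nat.cast_pow, Nat.cast_ofNat] at a
      rw [a]
      refine Finset.sum_congr rfl fun ε _ => ?_
      cases ε i <;> simp [bsg]
    rw [Finset.mul_sum]
    simp only [this]
    rw [Finset.sum_comm]
    refine Finset.sum_congr rfl fun ε _ => ?_
    simp only [hS, rsum, map_sum, LinearMap.sum_apply]
  have hSn : ∀ ε, ‖S ε‖ ≤ 2 ^ n := by
    intro ε
    have : ‖S ε‖ ≤ ∑ i : Fin n, (1 : ℝ) := by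
      refine (norm_sum_le _ _).trans (Finset.sum_le_sum fun i _ => ?_)
      have := norm_le_one_of_sum_sq h hsa h1 i
      cases ε i <;> simpa [bsg] using this
    simp at this
    refine this.trans ?_
    exact_mod_cast (Nat.lt_two_pow_self).le
  have lev : ∀ ε, ‖G (S ε) (T1 ε)‖ ≤ 9 + 16 * (G (S ε ^ 4) 1).re + η * (16 * 16 ^ n + 16 * n * 8 ^ n) :=
    fun ε => G_level G hG η h11 (S ε) (Ssa ε) n (hSn ε) (T1 ε) (cfc_predicate _ _) (hT1n ε)
  have hcard : ((Finset.univ : Finset (Fin n → Bool)).card : ℝ) = 2 ^ n := by simp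
  have hsum : ∑ ε, ‖G (S ε) (T1 ε)‖ ≤ 2 ^ n * (9 + η * (16 * 16 ^ n + 16 * n * 8 ^ n))
      + 16 * (G (∑ ε, S ε ^ 4) 1).re := by
    refine (Finset.sum_le_sum fun ε _ => lev ε).trans (le_of_eq ?_)
    rw [map_sum, LinearMap.sum_apply, Complex.re_sum, Finset.mul_sum, Finset.sum_add_distrib,
      Finset.sum_add_distrib]
    simp only [Finset.sum_const, nsmul_eq_mul, hcard]
    ring
  have hf4 : (G (∑ ε, S ε ^ 4) 1).re ≤ 2 ^ n * (3 + 3 * η) := by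
    have hle := rad_four_le h hsa h1
    have e0 : (2 ^ n • (3 : P)) = ((2 ^ n * 3 : ℝ) : ℂ) • (1 : P) := by
      rw [Complex.coe_smul, ← Algebra.algebraMap_eq_smul_one, nsmul_eq_mul, map_mul, map_pow, map_ofNat (algebraMap ℝ P) 2, map_ofNat (algebraMap ℝ P) 3]
      push_cast; rfl
    have hpos : 0 ≤ ∑ ε, S ε ^ 4 := Finset.sum_nonneg fun ε _ => by
      have := Ssa ε
      rw [← cfc_pow_id (S ε) 4 (R := ℝ)]
      exact cfc_nonneg (fun t _ => by positivity)
    have a := f_lower G hG η h11 (2 ^ n • (3 : P) - ∑ ε, S ε ^ 4) (sub_nonneg.2 hle) (2 ^ n * 3)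
      (by positivity) (by
        refine (CStarAlgebra.norm_le_norm_of_nonneg_of_le (sub_nonneg.2 hle) (sub_le_self _ hpos)).trans ?_
        rw [e0, norm_smul, Complex.norm_of_nonneg (by positivity)]
        exact mul_le_of_le_one_right (by positivity) (cs_norm_one_le P))
    have g11 : (G 1 1).re ≤ 1 := by
      refine (Complex.re_le_norm _).trans ((hG 1 1).trans ?_)
      exact mul_le_one₀ (cs_norm_one_le P) (norm_nonneg _) (cs_norm_one_le Q)
    have e1 : (G (2 ^ n • (3 : P)) 1).re = 2 ^ n * 3 * (G 1 1).re := by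
      rw [e0, map_smul, LinearMap.smul_apply, smul_eq_mul, Complex.re_ofReal_mul]
    rw [map_sub, LinearMap.sub_apply, Complex.sub_re, e1] at a
    nlinarith
  have fin : 2 ^ n * ‖∑ i, G (h i) (k i)‖ ≤ 2 ^ n * (B / 2 + 60) := by
    have e : 2 ^ n * ‖∑ i, G (h i) (k i)‖ = ‖∑ ε, G (S ε) (T ε)‖ := by
      rw [← id1, norm_mul]; simp
    rw [e]
    have e' : ∑ ε, G (S ε) (T ε) = ∑ ε, G (S ε) (T1 ε) + ∑ ε, G (S ε) (T2 ε) := by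
      rw [← Finset.sum_add_distrib]
      exact Finset.sum_congr rfl fun ε _ => by rw [← map_add, ← hT12]
    rw [e']
    refine (norm_add_le _ _).trans ?_
    have n2 : ‖∑ ε, G (S ε) (T2 ε)‖ ≤ 2 ^ n * (B / 2) := by
      rw [id2, norm_mul]; simp; exact hB2
    have n1 : ‖∑ ε, G (S ε) (T1 ε)‖ ≤ 2 ^ n * 60 := by
      refine (norm_sum_le _ _).trans (hsum.trans ?_)
      have : 2 ^ n * (9 + η * (16 * 16 ^ n + 16 * n * 8 ^ n)) + 16 * (2 ^ n * (3 + 3 * η))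
        = 2 ^ n * (57 + η * (16 * 16 ^ n + 16 * n * 8 ^ n + 48)) := by ring
      have h3 : 2 ^ n * (57 + η * (16 * 16 ^ n + 16 * n * 8 ^ n + 48)) ≤ 2 ^ n * 60 := by
        gcongr; linarith
      linarith
    linarith
  exact le_of_mul_le_mul_left fin hc

theorem core (G : P →ₗ[ℂ] Q →ₗ[ℂ] ℂ) (hG : ∀ x y, ‖G x y‖ ≤ ‖x‖ * ‖y‖) (η : ℝ)
    (h11 : 1 - η ≤ (G 1 1).re) [PartialOrder P] [StarOrderedRing P] [PartialOrder Q] [StarOrderedRing Q]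
    (n : ℕ) (hη : η * (16 * 16 ^ n + 16 * n * 8 ^ n + 48) ≤ 1)
    (h : Fin n → P) (hsa : ∀ i, IsSelfAdjoint (h i)) (h1 : ∑ i, h i * h i ≤ 1)
    (k : Fin n → Q) (ksa : ∀ i, IsSelfAdjoint (k i)) (k1 : ∑ i, k i * k i ≤ 1) :
    ‖∑ i, G (h i) (k i)‖ ≤ 120 := by
  have key : ∀ m : ℕ, ∀ k : Fin n → Q, (∀ i, IsSelfAdjoint (k i)) → ∑ i, k i * k i ≤ 1 →
      ‖∑ i, G (h i) (k i)‖ ≤ n * (1 / 2) ^ m + 120 := by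
    intro m
    induction m with
    | zero =>
      intro k ksa k1
      have : ‖∑ i, G (h i) (k i)‖ ≤ ∑ i : Fin n, (1 : ℝ) := by
        refine (norm_sum_le _ _).trans (Finset.sum_le_sum fun i _ => ?_)
        exact (hG _ _).trans (mul_le_one₀ (norm_le_one_of_sum_sq h hsa h1 i) (norm_nonneg _)
          (norm_le_one_of_sum_sq k ksa k1 i))
      simp at this ⊢
      linarith
    | succ m ih =>
      intro k ksa k1
      have := core_step G hG η h11 n hη h hsa h1 _ ih k ksa k1
      refine this.trans (le_of_eq ?_)
      rw [pow_succ]; ring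
  have hlim : Filter.Tendsto (fun m : ℕ => (n : ℝ) * (1 / 2) ^ m + 120) Filter.atTop
      (nhds (n * 0 + 120)) := by
    apply Filter.Tendsto.add_const
    apply Filter.Tendsto.const_mul
    exact tendsto_pow_atTop_nhds_zero_of_lt_one (by norm_num) (by norm_num)
  have := ge_of_tendsto' hlim (fun m => key m k ksa k1)
  simpa using this
end P1c

section P2

lemma unit_two_unitary {P : Type*} [CStarAlgebra P] (y : P) (hu : IsUnit y) (hy : ‖y‖ ≤ 1) :
    ∃ u1 ∈ unitary P, ∃ u2 ∈ unitary P, y + y = u1 + u2 := by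
  letI : PartialOrder P := CStarAlgebra.spectralOrder P
  letI : StarOrderedRing P := CStarAlgebra.spectralOrderedRing P
  have hyy : 0 ≤ star y * y := star_mul_self_nonneg y
  set s := CFC.sqrt (star y * y) with hs
  have hss : s * s = star y * y := CFC.sqrt_mul_sqrt_self _ hyy
  have hs0 : 0 ≤ s := CFC.sqrt_nonneg _
  have hssa : IsSelfAdjoint s := hs0.isSelfAdjoint
  have hsu : IsUnit s := by
    rw [hs, CFC.isUnit_sqrt_iff _ hyy]
    exact (hu.star).mul hu
  obtain ⟨t, ht⟩ := hsu
  have htsa : star (↑t⁻¹ : P) = (↑t⁻¹ : P) := by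
    have h1 : star (↑t⁻¹ : P) * s = 1 := by
      rw [← hssa.star_eq, ← star_mul, ← ht]; simp
    calc star (↑t⁻¹ : P) = star (↑t⁻¹ : P) * (t * ↑t⁻¹) := by simp
      _ = ↑t⁻¹ := by rw [← mul_assoc, ht, h1, one_mul]
  set w := y * (↑t⁻¹ : P) with hw
  have hww : star w * w = 1 := by
    rw [hw, star_mul, htsa]
    calc (↑t⁻¹ : P) * star y * (y * ↑t⁻¹) = ↑t⁻¹ * (star y * y) * ↑t⁻¹ := by noncomm_ring
      _ = 1 := by rw [← hss, ← ht]; simp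
  have hwu : IsUnit w := hu.mul t⁻¹.isUnit
  have hw' : w ∈ unitary P := by
    refine ⟨hww, ?_⟩
    obtain ⟨v, hv⟩ := hwu
    rw [← hv] at hww ⊢
    have : star (v : P) = ↑v⁻¹ := by
      calc star (v : P) = star (v : P) * (v * ↑v⁻¹) := by simp
        _ = ↑v⁻¹ := by rw [← mul_assoc, hww, one_mul]
    rw [this]; simp
  have hsn : ‖s‖ ≤ 1 := by
    have : ‖s‖ * ‖s‖ ≤ 1 := by
      have h2 : ‖star s * s‖ = ‖s‖ * ‖s‖ := CStarRing.norm_star_mul_self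
      rw [← h2, hssa.star_eq, hss, CStarRing.norm_star_mul_self]
      exact mul_le_one₀ hy (norm_nonneg _) hy
    nlinarith [norm_nonneg s]
  have hU := hssa.self_add_I_smul_cfcSqrt_sub_sq_mem_unitary s hsn
  set U := s + Complex.I • CFC.sqrt (1 - s ^ 2) with hUd
  have hys : y = w * s := by rw [hw, mul_assoc, ← ht]; simp
  refine ⟨w * U, mul_mem hw' hU, w * star U, mul_mem hw' (Unitary.star_mem hU), ?_⟩
  have hr : star (CFC.sqrt (1 - s ^ 2)) = CFC.sqrt (1 - s ^ 2) :=
    ((CFC.sqrt_nonneg (1 - s ^ 2)).isSelfAdjoint).star_eq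
  rw [← mul_add, hUd, star_add, star_smul, hssa.star_eq, hr]
  conv_lhs => rw [hys]
  rw [← mul_add]
  congr 1
  simp
  abel

lemma unitary_add_two {P : Type*} [CStarAlgebra P] (v : P) (hv : v ∈ unitary P) (x : P)
    (hx : ‖x‖ < 1) : ∃ u1 ∈ unitary P, ∃ u2 ∈ unitary P, v + x = u1 + u2 := by
  have hvn : ‖star v * x‖ < 1 := by
    rwa [CStarRing.norm_mem_unitary_mul]
    exact Unitary.star_mem hv
  have hu : IsUnit (1 + star v * x) := by
    have := isUnit_one_sub_of_norm_lt_one (x := -(star v * x)) (by rwa [norm_neg])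
    simpa using this
  set y : P := (2⁻¹ : ℂ) • (1 + star v * x) with hy
  have h2 : IsUnit y := by
    have h3 : IsUnit (algebraMap ℂ P 2⁻¹) := (IsUnit.mk0 (2⁻¹ : ℂ) (by norm_num)).map _
    rw [hy, Algebra.smul_def]
    exact h3.mul hu
  have hyn : ‖y‖ ≤ 1 := by
    rw [hy, norm_smul]
    have := norm_add_le (1 : P) (star v * x)
    have h1 := cs_norm_one_le P
    norm_num
    linarith
  obtain ⟨u1, h1, u2, h2', e⟩ := unit_two_unitary y h2 hyn
  refine ⟨v * u1, mul_mem hv h1, v * u2, mul_mem hv h2', ?_⟩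
  rw [← mul_add, ← e, hy, ← add_smul, mul_smul_comm, mul_add, ← mul_assoc, hv.2]
  norm_num

lemma nsmul_add_unitaries {P : Type*} [CStarAlgebra P] (φ : P →ₗ[ℂ] ℂ) (s : ℝ)
    (h : ∀ u ∈ unitary P, ‖φ u‖ ≤ s) (x : P) (hx : ‖x‖ < 1) (n : ℕ) :
    ∀ v ∈ unitary P, ‖φ (v + n • x)‖ ≤ (n + 1) * s := by
  induction n with
  | zero => intro v hv; simpa using h v hv
  | succ n ih =>
    intro v hv
    obtain ⟨u1, h1, u2, h2, e⟩ := unitary_add_two v hv x hx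
    have : v + (n + 1) • x = (u1 + n • x) + u2 := by
      rw [add_smul, one_smul, add_comm (n • x) x, ← add_assoc, e]; abel
    rw [this, map_add]
    refine (norm_add_le _ _).trans ?_
    have := ih u1 h1
    have := h u2 h2
    push_cast
    linarith

lemma russo_dye {P : Type*} [CStarAlgebra P] (φ : P →ₗ[ℂ] ℂ) (s : ℝ)
    (h : ∀ u ∈ unitary P, ‖φ u‖ ≤ s) (x : P) : ‖φ x‖ ≤ s * ‖x‖ := by
  have h1 := h 1 (one_mem _)
  have hs : 0 ≤ s := (norm_nonneg _).trans h1
  have key : ∀ x : P, ‖x‖ < 1 → ‖φ x‖ ≤ s := by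
    intro x hx
    by_contra! hlt
    obtain ⟨n, hn⟩ := exists_nat_gt (2 * s / (‖φ x‖ - s))
    have hp : 0 < ‖φ x‖ - s := by linarith
    rw [div_lt_iff₀ hp] at hn
    have h2 := nsmul_add_unitaries φ s h x hx n 1 (one_mem _)
    have h3 : φ (n • x) = φ (1 + n • x) - φ 1 := by simp
    have h4 : ‖φ (n • x)‖ ≤ (n + 1) * s + s := by
      rw [h3]; exact (norm_sub_le _ _).trans (add_le_add h2 h1)
    rw [map_nsmul, nsmul_eq_mul, norm_mul, Complex.norm_natCast] at h4
    nlinarith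
  refine le_of_forall_pos_le_add fun δ hδ => ?_
  obtain ⟨δ', hδ', hle⟩ : ∃ δ' > 0, s * δ' ≤ δ := by
    refine ⟨δ / (s + 1), by positivity, ?_⟩
    rw [mul_div_assoc', div_le_iff₀ (by positivity)]
    nlinarith
  have hp : 0 < ‖x‖ + δ' := by positivity
  have := key ((((‖x‖ + δ')⁻¹ : ℝ) : ℂ) • x) (by
    rw [norm_smul, Complex.norm_real, Real.norm_of_nonneg (by positivity), inv_mul_lt_iff₀ hp]
    linarith)
  rw [map_smul, norm_smul, Complex.norm_real, Real.norm_of_nonneg (by positivity),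
    inv_mul_le_iff₀ hp] at this
  nlinarith

end P2

section P2b

lemma sa_parts {P : Type*} [CStarAlgebra P] [PartialOrder P] [StarOrderedRing P] {n : ℕ}
    (h : Fin n → P) (r : ‖∑ i, h i * star (h i)‖ ≤ 1) (c : ‖∑ i, star (h i) * h i‖ ≤ 1) :
    ∃ h1 h2 : Fin n → P, (∀ i, IsSelfAdjoint (h1 i)) ∧ (∀ i, IsSelfAdjoint (h2 i)) ∧
      (∀ i, h i = h1 i + Complex.I • h2 i) ∧ ∑ i, h1 i * h1 i ≤ 1 ∧ ∑ i, h2 i * h2 i ≤ 1 := by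
  have r0 : 0 ≤ ∑ i, h i * star (h i) := Finset.sum_nonneg fun i _ => mul_star_self_nonneg _
  have c0 : 0 ≤ ∑ i, star (h i) * h i := Finset.sum_nonneg fun i _ => star_mul_self_nonneg _
  have r1 := (CStarAlgebra.norm_le_one_iff_of_nonneg _ r0).1 r
  have c1 := (CStarAlgebra.norm_le_one_iff_of_nonneg _ c0).1 c
  set h1 : Fin n → P := fun i => (2⁻¹ : ℂ) • (h i + star (h i)) with e1
  set h2 : Fin n → P := fun i => (-(Complex.I * 2⁻¹) : ℂ) • (h i - star (h i)) with e2
  have s1 : ∀ i, IsSelfAdjoint (h1 i) := by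
    intro i; simp only [IsSelfAdjoint, e1, star_smul, star_add, star_star]
    rw [add_comm]; simp
  have s2 : ∀ i, IsSelfAdjoint (h2 i) := by
    intro i; simp only [IsSelfAdjoint, e2, star_smul, star_sub, star_star]
    rw [← neg_sub (h i) (star (h i)), smul_neg, ← neg_smul]; simp
  have hsum : ∑ i, h1 i * h1 i + ∑ i, h2 i * h2 i
      = (2⁻¹ : ℝ) • (∑ i, h i * star (h i)) + (2⁻¹ : ℝ) • (∑ i, star (h i) * h i) := by
    rw [Finset.smul_sum, Finset.smul_sum, ← Finset.sum_add_distrib, ← Finset.sum_add_distrib]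
    refine Finset.sum_congr rfl fun i _ => ?_
    have hr : ∀ z : P, (2⁻¹ : ℝ) • z = (2⁻¹ : ℂ) • z := by
      intro z; rw [← Complex.coe_smul]; norm_num
    simp only [e1, e2, hr, smul_mul_smul_comm]
    have : (-(Complex.I * 2⁻¹)) * (-(Complex.I * 2⁻¹)) = -(4⁻¹ : ℂ) := by
      have := Complex.I_mul_I
      linear_combination (4⁻¹ : ℂ) * this
    rw [this]
    simp only [mul_add, add_mul, mul_sub, sub_mul, smul_add, smul_sub]
    module
  have hle : ∑ i, h1 i * h1 i + ∑ i, h2 i * h2 i ≤ 1 := by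
    rw [hsum]
    calc _ ≤ (2⁻¹ : ℝ) • (1 : P) + (2⁻¹ : ℝ) • (1 : P) :=
          add_le_add (smul_le_smul_of_nonneg_left r1 (by norm_num))
            (smul_le_smul_of_nonneg_left c1 (by norm_num))
      _ = 1 := by rw [← add_smul]; norm_num
  have n1 : 0 ≤ ∑ i, h1 i * h1 i := Finset.sum_nonneg fun i _ => (s1 i).mul_self_nonneg
  have n2 : 0 ≤ ∑ i, h2 i * h2 i := Finset.sum_nonneg fun i _ => (s2 i).mul_self_nonneg
  refine ⟨h1, h2, s1, s2, fun i => ?_, (le_add_of_nonneg_right n2).trans hle,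
    (le_add_of_nonneg_left n1).trans hle⟩
  simp only [e1, e2, smul_smul]
  have : Complex.I * -(Complex.I * 2⁻¹) = (2⁻¹ : ℂ) := by
    have := Complex.I_mul_I
    linear_combination (-2⁻¹ : ℂ) * this
  rw [this]
  module

lemma rot_norm {P : Type*} [CStarAlgebra P] {n : ℕ} (a : Fin n → P) (U : P) (hU : U ∈ unitary P)
    (r : ‖∑ i, a i * star (a i)‖ ≤ 1) (c : ‖∑ i, star (a i) * a i‖ ≤ 1) :
    ‖∑ i, (a i * star U) * star (a i * star U)‖ ≤ 1 ∧
    ‖∑ i, star (a i * star U) * (a i * star U)‖ ≤ 1 := by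
  constructor
  · have : ∀ i, (a i * star U) * star (a i * star U) = a i * star (a i) := by
      intro i
      rw [star_mul, star_star, mul_assoc, ← mul_assoc (star U) U, hU.1, one_mul]
    simpa only [this] using r
  · have : ∀ i, star (a i * star U) * (a i * star U) = U * (star (a i) * a i) * star U := by
      intro i
      rw [star_mul, star_star]; noncomm_ring
    simp only [this]
    rw [← Finset.sum_mul, ← Finset.mul_sum, CStarRing.norm_mul_mem_unitary _ (Unitary.star_mem hU),
      CStarRing.norm_mem_unitary_mul _ hU]
    exact c

lemma unital_groth {P Q : Type*} [CStarAlgebra P] [CStarAlgebra Q]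
    (u : P →ₗ[ℂ] Q →ₗ[ℂ] ℂ) (σ : ℝ) (hσ : 0 < σ) (hu : ∀ x y, ‖u x y‖ ≤ σ * (‖x‖ * ‖y‖))
    (n : ℕ) (η : ℝ) (hη : η * (16 * 16 ^ n + 16 * n * 8 ^ n + 48) ≤ 1)
    (x : P) (y : Q) (hx : ‖x‖ ≤ 1) (hy : ‖y‖ ≤ 1) (hxy : σ * (1 - η) < ‖u x y‖)
    (a : Fin n → P) (b : Fin n → Q)
    (ra : ‖∑ i, a i * star (a i)‖ ≤ 1) (ca : ‖∑ i, star (a i) * a i‖ ≤ 1)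
    (rb : ‖∑ i, b i * star (b i)‖ ≤ 1) (cb : ‖∑ i, star (b i) * b i‖ ≤ 1) :
    ‖∑ i, u (a i) (b i)‖ ≤ 480 * σ := by
  letI : PartialOrder P := CStarAlgebra.spectralOrder P
  letI : StarOrderedRing P := CStarAlgebra.spectralOrderedRing P
  letI : PartialOrder Q := CStarAlgebra.spectralOrder Q
  letI : StarOrderedRing Q := CStarAlgebra.spectralOrderedRing Q
  have hη1 : η ≤ 1 := by
    by_contra! h
    have : (0:ℝ) ≤ 16 * 16 ^ n + 16 * n * 8 ^ n := by positivity
    nlinarith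
  have hs0 : 0 ≤ σ * (1 - η) := mul_nonneg hσ.le (by linarith)
  obtain ⟨U, hU, hUs⟩ : ∃ U ∈ unitary P, σ * (1 - η) < ‖u U y‖ := by
    by_contra! hcon
    have := russo_dye (u.flip y) _ hcon x
    simp only [LinearMap.flip_apply] at this
    nlinarith [mul_le_mul_of_nonneg_left hx hs0]
  obtain ⟨V, hV, hVs⟩ : ∃ V ∈ unitary Q, σ * (1 - η) < ‖u U V‖ := by
    by_contra! hcon
    have := russo_dye (u U) _ hcon y
    nlinarith [mul_le_mul_of_nonneg_left hy hs0]
  set z := u U V with hz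
  have hz0 : 0 < ‖z‖ := lt_of_le_of_lt hs0 hVs
  set c : ℂ := (starRingEnd ℂ z / ‖z‖) * (σ⁻¹ : ℝ) with hc
  have hcn : ‖c‖ = σ⁻¹ := by
    rw [hc, norm_mul, norm_div, RCLike.norm_conj, Complex.norm_real, Complex.norm_real, norm_norm,
      div_self hz0.ne', one_mul, Real.norm_of_nonneg (by positivity)]
  have hcz : c * z = ((‖z‖ * σ⁻¹ : ℝ) : ℂ) := by
    have h1 : starRingEnd ℂ z * z = (‖z‖ : ℂ) ^ 2 := RCLike.conj_mul z
    have h2 : (‖z‖ : ℂ) ≠ 0 := by exact_mod_cast hz0.ne'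
    rw [hc]
    push_cast
    field_simp
    rw [h1]
  set G : P →ₗ[ℂ] Q →ₗ[ℂ] ℂ :=
    c • (u.compl₁₂ (LinearMap.mulRight ℂ U) (LinearMap.mulRight ℂ V)) with hG
  have Gap : ∀ X Y, G X Y = c * u (X * U) (Y * V) := by intro X Y; simp [hG]
  have hGb : ∀ X Y, ‖G X Y‖ ≤ ‖X‖ * ‖Y‖ := by
    intro X Y
    rw [Gap, norm_mul, hcn, inv_mul_le_iff₀ hσ]
    refine (hu _ _).trans ?_
    rw [CStarRing.norm_mul_mem_unitary _ hU, CStarRing.norm_mul_mem_unitary _ hV]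
  have h11 : 1 - η ≤ (G 1 1).re := by
    rw [Gap, one_mul, one_mul, ← hz, hcz, Complex.ofReal_re, ← div_eq_mul_inv,
      le_div_iff₀ hσ]
    nlinarith
  obtain ⟨ra', ca'⟩ := rot_norm a U hU ra ca
  obtain ⟨rb', cb'⟩ := rot_norm b V hV rb cb
  obtain ⟨h1, h2, s1, s2, hh, q1, q2⟩ := sa_parts _ ra' ca'
  obtain ⟨k1, k2, t1, t2, kk, p1, p2⟩ := sa_parts _ rb' cb'
  have c11 := core G hGb η h11 n hη h1 s1 q1 k1 t1 p1
  have c12 := core G hGb η h11 n hη h1 s1 q1 k2 t2 p2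
  have c21 := core G hGb η h11 n hη h2 s2 q2 k1 t1 p1
  have c22 := core G hGb η h11 n hη h2 s2 q2 k2 t2 p2
  have e : ∀ i, c * u (a i) (b i) = G (h1 i) (k1 i) + Complex.I * G (h1 i) (k2 i)
      + (Complex.I * G (h2 i) (k1 i) - G (h2 i) (k2 i)) := by
    intro i
    have : c * u (a i) (b i) = G (a i * star U) (b i * star V) := by
      rw [Gap, mul_assoc (a i), hU.1, mul_assoc (b i), hV.1, mul_one, mul_one]
    rw [this, hh, kk]
    simp only [map_add, LinearMap.add_apply, map_smul, LinearMap.smul_apply, smul_eq_mul]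
    have := Complex.I_mul_I
    linear_combination (G (h2 i) (k2 i)) * this
  have e2 : c * ∑ i, u (a i) (b i) = (∑ i, G (h1 i) (k1 i) + Complex.I * ∑ i, G (h1 i) (k2 i))
      + (Complex.I * ∑ i, G (h2 i) (k1 i) - ∑ i, G (h2 i) (k2 i)) := by
    rw [Finset.mul_sum]
    simp only [e, Finset.sum_add_distrib, Finset.sum_sub_distrib, Finset.mul_sum]
  have e3 : ‖c * ∑ i, u (a i) (b i)‖ ≤ 480 := by
    rw [e2]
    refine (norm_add_le _ _).trans ?_
    have := norm_add_le (∑ i, G (h1 i) (k1 i)) (Complex.I * ∑ i, G (h1 i) (k2 i))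
    have := norm_sub_le (Complex.I * ∑ i, G (h2 i) (k1 i)) (∑ i, G (h2 i) (k2 i))
    simp only [norm_mul, Complex.norm_I, one_mul] at *
    linarith
  rw [norm_mul, hcn, inv_mul_le_iff₀ hσ] at e3
  linarith

/-- Left action of the unitization. -/
def actL {M : Type*} [NonUnitalCStarAlgebra M] (e : M) : Unitization ℂ M →ₗ[ℂ] M where
  toFun X := X.fst • e + X.snd * e
  map_add' X Y := by simp [add_smul, add_mul]; abel
  map_smul' c X := by simp [mul_smul, smul_add, smul_mul_assoc]

lemma inr_actL {M : Type*} [NonUnitalCStarAlgebra M] (e : M) (X : Unitization ℂ M) :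
    (↑(actL e X) : Unitization ℂ M) = X * (e : Unitization ℂ M) := by
  apply Unitization.ext <;> simp [actL]

lemma norm_actL {M : Type*} [NonUnitalCStarAlgebra M] (e : M) (he : ‖e‖ ≤ 1)
    (X : Unitization ℂ M) : ‖actL e X‖ ≤ ‖X‖ := by
  rw [← Unitization.norm_inr (𝕜 := ℂ), inr_actL]
  refine (norm_mul_le _ _).trans ?_
  rw [Unitization.norm_inr]
  exact mul_le_of_le_one_right (norm_nonneg _) he

lemma actL_inr {M : Type*} [NonUnitalCStarAlgebra M] (e x : M) :
    actL e (x : Unitization ℂ M) = x * e := by simp [actL]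

lemma norm_sum_inr {M : Type*} [NonUnitalCStarAlgebra M] {n : ℕ} (a : Fin n → M)
    (r : ‖∑ i, a i * star (a i)‖ ≤ 1) (c : ‖∑ i, star (a i) * a i‖ ≤ 1) :
    ‖∑ i, (a i : Unitization ℂ M) * star (a i : Unitization ℂ M)‖ ≤ 1 ∧
    ‖∑ i, star (a i : Unitization ℂ M) * (a i : Unitization ℂ M)‖ ≤ 1 := by
  constructor
  · have : ∑ i, (a i : Unitization ℂ M) * star (a i : Unitization ℂ M)
        = ((∑ i, a i * star (a i) : M) : Unitization ℂ M) := by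
      rw [← Unitization.inrHom_apply ℂ ℂ M, map_sum]; simp
    rwa [this, Unitization.norm_inr]
  · have : ∑ i, star (a i : Unitization ℂ M) * (a i : Unitization ℂ M)
        = ((∑ i, star (a i) * a i : M) : Unitization ℂ M) := by
      rw [← Unitization.inrHom_apply ℂ ℂ M, map_sum]; simp
    rwa [this, Unitization.norm_inr]

/-- Noncommutative Grothendieck inequality (crude constant). -/
theorem nc_groth {M N : Type*} [NonUnitalCStarAlgebra M] [NonUnitalCStarAlgebra N]
    (u : M →ₗ[ℂ] N →ₗ[ℂ] ℂ) (hu : ∀ x y, ‖u x y‖ ≤ ‖x‖ * ‖y‖)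
    (n : ℕ) (a : Fin n → M) (b : Fin n → N)
    (ra : ‖∑ i, a i * star (a i)‖ ≤ 1) (ca : ‖∑ i, star (a i) * a i‖ ≤ 1)
    (rb : ‖∑ i, b i * star (b i)‖ ≤ 1) (cb : ‖∑ i, star (b i) * b i‖ ≤ 1) :
    ‖∑ i, u (a i) (b i)‖ ≤ 480 := by
  letI : PartialOrder M := CStarAlgebra.spectralOrder M
  letI : StarOrderedRing M := CStarAlgebra.spectralOrderedRing M
  letI : PartialOrder N := CStarAlgebra.spectralOrder N
  letI : StarOrderedRing N := CStarAlgebra.spectralOrderedRing N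
  set T : M →L[ℂ] N →L[ℂ] ℂ := u.mkContinuous₂ 1 (by simpa using hu) with hT
  have Tap : ∀ x y, T x y = u x y := fun x y => rfl
  set S : Set ℝ := {r | ∃ x y, ‖x‖ ≤ 1 ∧ ‖y‖ ≤ 1 ∧ r = ‖u x y‖} with hS
  have hbdd : BddAbove S := by
    refine ⟨1, ?_⟩
    rintro r ⟨x, y, hx, hy, rfl⟩
    exact (hu x y).trans (mul_le_one₀ hx (norm_nonneg _) hy)
  set σ := sSup S with hσd
  have h0S : (0 : ℝ) ∈ S := ⟨0, 0, by simp, by simp, by simp⟩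
  have hσ0 : 0 ≤ σ := le_csSup hbdd h0S
  have hσ1 : σ ≤ 1 := by
    refine csSup_le ⟨0, h0S⟩ ?_
    rintro r ⟨x, y, hx, hy, rfl⟩
    exact (hu x y).trans (mul_le_one₀ hx (norm_nonneg _) hy)
  have hball : ∀ x y, ‖x‖ ≤ 1 → ‖y‖ ≤ 1 → ‖u x y‖ ≤ σ := fun x y hx hy =>
    le_csSup hbdd ⟨x, y, hx, hy, rfl⟩
  have hub : ∀ x y, ‖u x y‖ ≤ σ * (‖x‖ * ‖y‖) := by
    intro x y
    by_cases hx : x = 0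
    · simp [hx]
    by_cases hy : y = 0
    · simp [hy]
    have hx' := norm_pos_iff.2 hx
    have hy' := norm_pos_iff.2 hy
    have := hball (((‖x‖⁻¹ : ℝ) : ℂ) • x) (((‖y‖⁻¹ : ℝ) : ℂ) • y)
      (by rw [norm_smul, Complex.norm_real, norm_inv, norm_norm, inv_mul_cancel₀ hx'.ne'])
      (by rw [norm_smul, Complex.norm_real, norm_inv, norm_norm, inv_mul_cancel₀ hy'.ne'])
    rw [map_smul, map_smul, LinearMap.smul_apply, norm_smul, norm_smul, Complex.norm_real,
      Complex.norm_real, norm_inv, norm_inv, norm_norm, norm_norm, inv_mul_le_iff₀ hy',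
      inv_mul_le_iff₀ hx'] at this
    linarith
  rcases hσ0.eq_or_lt with h0 | hpos
  · have : ∀ x y, u x y = 0 := by
      intro x y
      have := hub x y
      rw [← h0, zero_mul] at this
      exact norm_le_zero_iff.1 this
    simp [this]
  set η : ℝ := (16 * 16 ^ n + 16 * n * 8 ^ n + 48)⁻¹ with hη
  have hηpos : 0 < η := by positivity
  have hη1 : η * (16 * 16 ^ n + 16 * n * 8 ^ n + 48) ≤ 1 := by
    rw [hη, inv_mul_cancel₀ (by positivity)]
  obtain ⟨r, ⟨x, y, hx, hy, rfl⟩, hr⟩ :=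
    exists_lt_of_lt_csSup ⟨0, h0S⟩ (show σ * (1 - η) < σ by nlinarith)
  set l := CStarAlgebra.approximateUnit M
  set l' := CStarAlgebra.approximateUnit N
  have hl := CStarAlgebra.increasingApproximateUnit M
  have hl' := CStarAlgebra.increasingApproximateUnit N
  haveI := hl.neBot
  haveI := hl'.neBot
  have tend : ∀ (p : M) (q : N), Filter.Tendsto (fun z : M × N => u (p * z.1) (q * z.2))
      (l ×ˢ l') (nhds (u p q)) := by
    intro p q
    have t1 : Filter.Tendsto (fun z : M × N => p * z.1) (l ×ˢ l') (nhds p) :=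
      (hl.tendsto_mul_left p).comp Filter.tendsto_fst
    have t2 : Filter.Tendsto (fun z : M × N => q * z.2) (l ×ˢ l') (nhds q) :=
      (hl'.tendsto_mul_left q).comp Filter.tendsto_snd
    have hc : Continuous fun z : M × N => T z.1 z.2 := by fun_prop
    exact (hc.tendsto (p, q)).comp (t1.prodMk_nhds t2)
  have tl := (tendsto_finsetSum (Finset.univ) fun i _ => tend (a i) (b i)).norm
  have ev1 := (tend x y).norm.eventually (lt_mem_nhds hr)
  have ev2 := hl.eventually_norm.prod_mk hl'.eventually_norm
  refine (le_of_tendsto tl ?_).trans (show 480 * σ ≤ 480 by linarith)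
  filter_upwards [ev1, ev2] with z h1 ⟨h2, h3⟩
  obtain ⟨ra', ca'⟩ := norm_sum_inr a ra ca
  obtain ⟨rb', cb'⟩ := norm_sum_inr b rb cb
  have := unital_groth (u.compl₁₂ (actL z.1) (actL z.2)) σ hpos (by
      intro X Y
      simp only [LinearMap.compl₁₂_apply]
      refine (hub _ _).trans ?_
      gcongr
      · exact norm_actL _ h2 _
      · exact norm_actL _ h3 _) n η hη1 (x : Unitization ℂ M) (y : Unitization ℂ N)
      (by rwa [Unitization.norm_inr]) (by rwa [Unitization.norm_inr])
      (by simpa [actL_inr] using h1) (fun i => (a i : Unitization ℂ M))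
      (fun i => (b i : Unitization ℂ N)) ra' ca' rb' cb'
  simpa [actL_inr] using this

end P2b

section P3

abbrev EIdx (N : ℕ) := (Σ j : Fin N, Fin (2 ^ (j : ℕ)))

lemma esum {N : ℕ} (f : Fin N → ℝ) : ∑ s : EIdx N, f s.1 = ∑ j : Fin N, (2:ℝ) ^ (j : ℕ) * f j := by
  rw [Fintype.sum_sigma]
  simp

lemma count_lower (N : ℕ) (r : ℤ) :
    ((N : ℝ) - r.natAbs) ≤ ∑ j : Fin N, ∑ j' : Fin N, (if ((j : ℕ) : ℤ) = (j' : ℕ) + r then (1:ℝ) else 0) := by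
  rw [← Finset.sum_product', Finset.sum_boole]
  have h1 : N - r.natAbs ≤ (Finset.filter (fun x : Fin N × Fin N => ((x.1 : ℕ) : ℤ) = (x.2 : ℕ) + r)
      (Finset.univ ×ˢ Finset.univ)).card := by
    have : Finset.card (Finset.univ : Finset (Fin (N - r.natAbs))) = N - r.natAbs := by simp
    rw [← this]
    refine Finset.card_le_card_of_injOn
      (fun k : Fin (N - r.natAbs) => ((⟨k + r.toNat, by have := k.2; omega⟩ : Fin N),
        (⟨k + (-r).toNat, by have := k.2; omega⟩ : Fin N))) ?_ ?_
    · intro k _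
      simp
      omega
    · intro a _ b _ hab
      simp only [Prod.mk.injEq, Fin.mk.injEq] at hab
      ext; omega
  have h2 : (N : ℝ) - r.natAbs ≤ ((N - r.natAbs : ℕ) : ℝ) := by
    have : N ≤ (N - r.natAbs) + r.natAbs := by omega
    have : (N : ℝ) ≤ ((N - r.natAbs : ℕ) : ℝ) + r.natAbs := by exact_mod_cast this
    linarith
  exact h2.trans (by exact_mod_cast h1)

lemma embez_term (j j' : ℕ) (r : ℤ) (N : ℝ) (hN : 0 < N) (h : (j : ℤ) = j' + r) :
    (2:ℝ) ^ j * (2 ^ j' * ((2 ^ j')⁻¹ * (Real.sqrt ((2 ^ j)⁻¹ / N) * Real.sqrt ((2 ^ j')⁻¹ / N))))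
      = Real.sqrt (2 ^ r) / N := by
  have e1 : (2:ℝ) ^ r = 2 ^ j * (2 ^ j')⁻¹ := by
    have : r = (j : ℤ) - j' := by omega
    rw [this, zpow_sub₀ (by norm_num)]; simp [div_eq_mul_inv]
  rw [mul_inv_cancel_left₀ (by positivity), e1, ← Real.sqrt_mul (by positivity)]
  have : ((2:ℝ) ^ j)⁻¹ / N * ((2 ^ j')⁻¹ / N) = (2 ^ j * (2 ^ j')⁻¹) * ((2 ^ j)⁻¹ / N) ^ 2 := by
    field_simp
  rw [this, Real.sqrt_mul (by positivity), Real.sqrt_sq (by positivity)]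
  field_simp

lemma embez {k : ℕ} (t : Fin k → ℝ) (ht : ∀ i, 0 < t i) :
    ∃ (N : ℕ) (ρ : EIdx N → ℝ) (m : Fin k → EIdx N → EIdx N → ℝ),
      (∀ s, 0 ≤ ρ s) ∧ ∑ s, ρ s ≤ 1 ∧ (∀ i s s', 0 ≤ m i s s') ∧
      (∀ i s, ∑ s', m i s s' ≤ 1) ∧ (∀ i s', ∑ s, m i s s' ≤ t i) ∧
      (∀ i, ∑ s, ∑ s', m i s s' * (Real.sqrt (ρ s) * Real.sqrt (ρ s')) = Real.sqrt (t i) / 4) := by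
  choose r hr using fun i => exists_mem_Ico_zpow (ht i) (one_lt_two)
  set N : ℕ := 2 * (∑ i, (r i).natAbs) + 1 with hN
  have hNpos : (0:ℝ) < N := by rw [hN]; positivity
  set χ : Fin k → Fin N → Fin N → ℝ :=
    fun i j j' => if ((j : ℕ) : ℤ) = (j' : ℕ) + r i then 1 else 0 with hχ
  have χ0 : ∀ i j j', 0 ≤ χ i j j' := by intro i j j'; simp only [hχ]; split_ifs <;> norm_num
  set C : Fin k → ℝ := fun i => ∑ j, ∑ j', χ i j j' with hC
  have hCl : ∀ i, (N:ℝ) / 2 ≤ C i := by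
    intro i
    refine le_trans ?_ (count_lower N (r i))
    have : (r i).natAbs ≤ ∑ i, (r i).natAbs :=
      Finset.single_le_sum (f := fun i => (r i).natAbs) (fun _ _ => Nat.zero_le _) (Finset.mem_univ i)
    have h2 : 2 * (r i).natAbs ≤ N := by omega
    have : (2:ℝ) * (r i).natAbs ≤ N := by exact_mod_cast h2
    linarith
  set c : Fin k → ℝ := fun i => Real.sqrt (2 ^ r i) * C i / N with hc
  have hcl : ∀ i, Real.sqrt (t i) / 4 ≤ c i := by
    intro i
    have h1 : t i ≤ 2 ^ r i * 4 := by
      have := (hr i).2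
      rw [zpow_add₀ (by norm_num), zpow_one] at this
      have : (0:ℝ) < 2 ^ r i := by positivity
      linarith
    have h2 : Real.sqrt (t i) ≤ Real.sqrt (2 ^ r i) * 2 := by
      have := Real.sqrt_le_sqrt h1
      rw [Real.sqrt_mul (by positivity)] at this
      have h4 : Real.sqrt 4 = 2 := by
        rw [show (4:ℝ) = 2 ^ 2 by norm_num, Real.sqrt_sq (by norm_num)]
      rwa [h4] at this
    simp only [hc]
    rw [le_div_iff₀ hNpos]
    have := hCl i
    nlinarith [mul_le_mul_of_nonneg_left (hCl i) (Real.sqrt_nonneg (2 ^ r i))]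
  have hspos : ∀ i, 0 < Real.sqrt (t i) := fun i => Real.sqrt_pos.2 (ht i)
  have hcpos : ∀ i, 0 < c i := fun i => lt_of_lt_of_le (by have := hspos i; positivity) (hcl i)
  set lam : Fin k → ℝ := fun i => Real.sqrt (t i) / 4 / c i with hlam
  have l0 : ∀ i, 0 ≤ lam i := fun i => by have := hspos i; have := hcpos i; simp only [hlam]; positivity
  have l1 : ∀ i, lam i ≤ 1 := fun i => by
    simp only [hlam]; rw [div_le_one (hcpos i)]; exact hcl i
  have χrow : ∀ i j, ∑ j', χ i j j' ≤ 1 := by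
    intro i j
    simp only [hχ]
    rw [Finset.sum_boole]
    have : (Finset.univ.filter fun x : Fin N => ((j : ℕ) : ℤ) = (x : ℕ) + r i).card ≤ 1 := by
      rw [Finset.card_le_one]
      intro a ha b hb
      simp at ha hb
      ext; omega
    exact_mod_cast this
  have χcol : ∀ i j', ∑ j, χ i j j' ≤ 1 := by
    intro i j'
    simp only [hχ]
    rw [Finset.sum_boole]
    have : (Finset.univ.filter fun x : Fin N => ((x : ℕ) : ℤ) = (j' : ℕ) + r i).card ≤ 1 := by
      rw [Finset.card_le_one]
      intro a ha b hb
      simp at ha hb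
      ext; omega
    exact_mod_cast this
  refine ⟨N, fun s => (2 ^ (s.1 : ℕ))⁻¹ / N,
    fun i s s' => lam i * ((2 ^ (s'.1 : ℕ))⁻¹ * χ i s.1 s'.1), fun s => by positivity, ?_,
    fun i s s' => mul_nonneg (l0 i) (mul_nonneg (by positivity) (χ0 _ _ _)), ?_, ?_, ?_⟩
  · rw [esum (fun j => (2 ^ (j : ℕ))⁻¹ / (N:ℝ))]
    have : ∀ j : Fin N, (2:ℝ) ^ (j : ℕ) * ((2 ^ (j : ℕ))⁻¹ / (N:ℝ)) = 1 / N := by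
      intro j; field_simp
    simp only [this]
    simp [hNpos.ne']
  · intro i s
    rw [esum (fun j' => lam i * ((2 ^ (j' : ℕ))⁻¹ * χ i s.1 j'))]
    have : ∀ j : Fin N, (2:ℝ) ^ (j : ℕ) * (lam i * ((2 ^ (j : ℕ))⁻¹ * χ i s.1 j)) = lam i * χ i s.1 j := by
      intro j; field_simp
    simp only [this]
    rw [← Finset.mul_sum]
    exact mul_le_one₀ (l1 i) (Finset.sum_nonneg fun _ _ => χ0 _ _ _) (χrow _ _)
  · intro i s'
    rw [esum (fun j => lam i * ((2 ^ (s'.1 : ℕ))⁻¹ * χ i j s'.1))]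
    have : ∀ j : Fin N, (2:ℝ) ^ (j : ℕ) * (lam i * ((2 ^ (s'.1 : ℕ))⁻¹ * χ i j s'.1))
        = lam i * 2 ^ r i * χ i j s'.1 := by
      intro j
      by_cases h : ((j : ℕ) : ℤ) = (s'.1 : ℕ) + r i
      · have e1 : (2:ℝ) ^ r i = 2 ^ (j : ℕ) * (2 ^ (s'.1 : ℕ))⁻¹ := by
          have : r i = ((j : ℕ) : ℤ) - (s'.1 : ℕ) := by omega
          rw [this, zpow_sub₀ (by norm_num)]; simp [div_eq_mul_inv]
        rw [e1]; ring
      · simp [hχ, h]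
    simp only [this]
    rw [← Finset.mul_sum]
    have h2 : (0:ℝ) < 2 ^ r i := by positivity
    calc lam i * 2 ^ r i * ∑ j, χ i j s'.1 ≤ lam i * 2 ^ r i * 1 :=
          mul_le_mul_of_nonneg_left (χcol _ _) (mul_nonneg (l0 i) h2.le)
      _ ≤ 2 ^ r i := by rw [mul_one]; exact mul_le_of_le_one_left h2.le (l1 i)
      _ ≤ t i := (hr i).1
  · intro i
    have h1 : ∀ s : EIdx N, ∑ s' : EIdx N, lam i * ((2 ^ (s'.1 : ℕ))⁻¹ * χ i s.1 s'.1) *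
        (Real.sqrt ((2 ^ (s.1 : ℕ))⁻¹ / N) * Real.sqrt ((2 ^ (s'.1 : ℕ))⁻¹ / N))
        = ∑ j' : Fin N, 2 ^ (j' : ℕ) * (lam i * ((2 ^ (j' : ℕ))⁻¹ * χ i s.1 j') *
        (Real.sqrt ((2 ^ (s.1 : ℕ))⁻¹ / N) * Real.sqrt ((2 ^ (j' : ℕ))⁻¹ / N))) := fun s =>
      esum (fun j' => lam i * ((2 ^ (j' : ℕ))⁻¹ * χ i s.1 j') *
        (Real.sqrt ((2 ^ (s.1 : ℕ))⁻¹ / N) * Real.sqrt ((2 ^ (j' : ℕ))⁻¹ / N)))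
    simp only [h1]
    rw [esum (fun j => ∑ j' : Fin N, 2 ^ (j' : ℕ) * (lam i * ((2 ^ (j' : ℕ))⁻¹ * χ i j j') *
        (Real.sqrt ((2 ^ (j : ℕ))⁻¹ / N) * Real.sqrt ((2 ^ (j' : ℕ))⁻¹ / N))))]
    have h2 : ∀ j j' : Fin N, (2:ℝ) ^ (j : ℕ) * (2 ^ (j' : ℕ) * (lam i * ((2 ^ (j' : ℕ))⁻¹ * χ i j j') *
        (Real.sqrt ((2 ^ (j : ℕ))⁻¹ / N) * Real.sqrt ((2 ^ (j' : ℕ))⁻¹ / N))))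
        = lam i * (Real.sqrt (2 ^ r i) / N) * χ i j j' := by
      intro j j'
      by_cases h : ((j : ℕ) : ℤ) = (j' : ℕ) + r i
      · rw [← embez_term j j' (r i) N hNpos h]; ring
      · simp [hχ, h]
    simp only [Finset.mul_sum, h2]
    simp only [← Finset.mul_sum]
    have : lam i * (Real.sqrt (2 ^ r i) / N) * C i = Real.sqrt (t i) / 4 := by
      have h3 : Real.sqrt (2 ^ r i) / N * C i = c i := by simp only [hc]; ring
      rw [mul_assoc, h3]
      simp only [hlam]
      field_simp [(hcpos i).ne']
    exact this

end P3

section P3b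

lemma embezFin {k : ℕ} (t : Fin k → ℝ) (ht : ∀ i, 0 < t i) :
    ∃ (d : ℕ) (ρ : Fin d → ℝ) (m : Fin k → Fin d → Fin d → ℝ),
      (∀ s, 0 ≤ ρ s) ∧ ∑ s, ρ s ≤ 1 ∧ (∀ i s s', 0 ≤ m i s s') ∧
      (∀ i s, ∑ s', m i s s' ≤ 1) ∧ (∀ i s', ∑ s, m i s s' ≤ t i) ∧
      (∀ i, ∑ s, ∑ s', m i s s' * (Real.sqrt (ρ s) * Real.sqrt (ρ s')) = Real.sqrt (t i) / 4) := by
  obtain ⟨N, ρ, m, h1, h2, h3, h4, h5, h6⟩ := embez t ht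
  let e := (Fintype.equivFin (EIdx N)).symm
  refine ⟨_, fun s => ρ (e s), fun i s s' => m i (e s) (e s'), fun s => h1 _, ?_,
    fun i s s' => h3 _ _ _, ?_, ?_, ?_⟩
  · rw [Equiv.sum_comp e ρ]; exact h2
  · intro i s; rw [Equiv.sum_comp e (m i (e s))]; exact h4 _ _
  · intro i s'; rw [Equiv.sum_comp e (fun s => m i s (e s'))]; exact h5 _ _
  · intro i
    rw [← h6 i, ← Equiv.sum_comp e]
    refine Finset.sum_congr rfl fun s _ => ?_
    rw [← Equiv.sum_comp e]

variable {A : Type*} [NonUnitalCStarAlgebra A] [PartialOrder A] [StarOrderedRing A]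

lemma csm_sum_apply {d ι : Type*} [Fintype d] (f : ι → CStarMatrix d d A) (F : Finset ι) (i j : d) :
    (∑ k ∈ F, f k) i j = ∑ k ∈ F, f k i j := by
  classical
  induction F using Finset.induction_on with
  | empty => simp
  | insert a s ha ih => rw [Finset.sum_insert ha, Finset.sum_insert ha, CStarMatrix.add_apply, ih]

/-- single entry matrix -/
def sgm {d : ℕ} (s s' : Fin d) (a : A) : CStarMatrix (Fin d) (Fin d) A :=
  CStarMatrix.ofMatrix fun i j => if i = s ∧ j = s' then a else 0

lemma sgm_apply {d : ℕ} (s s' : Fin d) (a : A) (i j : Fin d) :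
    sgm s s' a i j = if i = s ∧ j = s' then a else 0 := rfl

/-- diagonal matrices, as a plain function -/
def dgm0 {d : ℕ} (a : Fin d → A) : CStarMatrix (Fin d) (Fin d) A :=
  CStarMatrix.ofMatrix fun i j => if i = j then a i else 0

lemma dgm0_apply {d : ℕ} (a : Fin d → A) (i j : Fin d) :
    dgm0 a i j = if i = j then a i else 0 := rfl

/-- diagonal matrices -/
def dgm {d : ℕ} : (Fin d → A) →⋆ₙₐ[ℂ] CStarMatrix (Fin d) (Fin d) A where
  toFun a := dgm0 a
  map_smul' c a := by
    ext i j
    simp [dgm0_apply]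
  map_zero' := by ext i j; simp [dgm0_apply]
  map_add' a b := by
    ext i j
    simp only [dgm0_apply, CStarMatrix.add_apply, Pi.add_apply]
    split_ifs <;> simp
  map_mul' a b := by
    ext i j
    simp only [dgm0_apply, CStarMatrix.mul_apply, Pi.mul_apply]
    by_cases h : i = j <;> simp [h]
  map_star' a := by
    ext i j
    simp only [dgm0_apply, CStarMatrix.star_apply, Pi.star_apply]
    by_cases h : i = j
    · simp [h]
    · simp [h, Ne.symm h]

lemma dgm_apply {d : ℕ} (a : Fin d → A) (i j : Fin d) :
    dgm a i j = if i = j then a i else 0 := rfl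

lemma norm_dgm_le {d : ℕ} (a : Fin d → A) (C : ℝ) (hC : 0 ≤ C) (h : ∀ i, ‖a i‖ ≤ C) :
    ‖dgm a‖ ≤ C :=
  (NonUnitalStarAlgHom.norm_apply_le (dgm (A := A)) a).trans ((pi_norm_le_iff_of_nonneg hC).2 h)

lemma star_sgm {d : ℕ} (s s' : Fin d) (a : A) : star (sgm s s' a) = sgm s' s (star a) := by
  ext i j
  rw [CStarMatrix.star_apply, sgm_apply, sgm_apply]
  by_cases h1 : i = s' <;> by_cases h2 : j = s <;> simp [h1, h2]

lemma sgm_mul_sgm {d : ℕ} (s s' s'' : Fin d) (a b : A) :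
    sgm s s' a * sgm s' s'' b = dgm (fun _ => 0) + sgm s s'' (a * b) := by
  ext i j
  simp only [CStarMatrix.mul_apply, sgm_apply, CStarMatrix.add_apply, dgm_apply]
  by_cases h1 : i = s <;> by_cases h2 : j = s'' <;> simp [h1, h2]

lemma norm_wsum_le {k : ℕ} (w q : Fin k → ℝ) (p : Fin k → A) (hp : ∀ i, 0 ≤ p i)
    (hw : ∀ i, 0 ≤ w i) (hwq : ∀ i, w i ≤ q i) :
    ‖∑ i, ((w i : ℝ) : ℂ) • p i‖ ≤ ‖∑ i, ((q i : ℝ) : ℂ) • p i‖ := by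
  simp only [Complex.coe_smul]
  apply CStarAlgebra.norm_le_norm_of_nonneg_of_le
  · exact Finset.sum_nonneg fun i _ => smul_nonneg (hw i) (hp i)
  · exact Finset.sum_le_sum fun i _ => smul_le_smul_of_nonneg_right (hwq i) (hp i)

lemma sum_sgm_row {k d : ℕ} (w : Fin k → Fin d → Fin d → ℝ) (q : Fin k → ℝ)
    (h0 : ∀ i s s', 0 ≤ w i s s') (hr : ∀ i s, ∑ s', w i s s' ≤ q i) (z : Fin k → A)
    (hz : ‖∑ i, ((q i : ℝ) : ℂ) • (z i * star (z i))‖ ≤ 1) :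
    ‖∑ p : Fin k × Fin d × Fin d, sgm p.2.1 p.2.2 ((Real.sqrt (w p.1 p.2.1 p.2.2) : ℂ) • z p.1) *
      star (sgm p.2.1 p.2.2 ((Real.sqrt (w p.1 p.2.1 p.2.2) : ℂ) • z p.1))‖ ≤ 1 := by
  have : ∑ p : Fin k × Fin d × Fin d, sgm p.2.1 p.2.2 ((Real.sqrt (w p.1 p.2.1 p.2.2) : ℂ) • z p.1) *
      star (sgm p.2.1 p.2.2 ((Real.sqrt (w p.1 p.2.1 p.2.2) : ℂ) • z p.1))
      = dgm (fun s => ∑ i, ((∑ s', w i s s' : ℝ) : ℂ) • (z i * star (z i))) := by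
    ext a b
    rw [csm_sum_apply, dgm_apply]
    simp only [star_sgm, sgm_mul_sgm, CStarMatrix.add_apply, dgm_apply, sgm_apply, ite_self, zero_add]
    rw [Fintype.sum_prod_type]
    simp only [Fintype.sum_prod_type]
    by_cases hab : a = b
    · subst hab
      simp only [and_self, if_true]
      refine Finset.sum_congr rfl fun i _ => ?_
      rw [Finset.sum_eq_single a (fun x _ hx => by simp [Ne.symm hx]) (by simp)]
      simp only [if_true]
      push_cast
      rw [Finset.sum_smul]
      refine Finset.sum_congr rfl fun s' _ => ?_
      rw [star_smul, smul_mul_smul_comm]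
      congr 1
      rw [Complex.star_def, Complex.conj_ofReal, ← Complex.ofReal_mul, Real.mul_self_sqrt (h0 _ _ _)]
    · rw [if_neg hab]
      refine Finset.sum_eq_zero fun i _ => Finset.sum_eq_zero fun s _ => Finset.sum_eq_zero fun s' _ => ?_
      rw [if_neg]
      rintro ⟨rfl, rfl⟩; exact hab rfl
  rw [this]
  refine norm_dgm_le _ 1 zero_le_one fun s => ?_
  exact (norm_wsum_le _ q _ (fun i => mul_star_self_nonneg _)
    (fun i => Finset.sum_nonneg fun _ _ => h0 _ _ _) (fun i => hr i s)).trans hz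

lemma sum_sgm_col {k d : ℕ} (w : Fin k → Fin d → Fin d → ℝ) (q : Fin k → ℝ)
    (h0 : ∀ i s s', 0 ≤ w i s s') (hr : ∀ i s', ∑ s, w i s s' ≤ q i) (z : Fin k → A)
    (hz : ‖∑ i, ((q i : ℝ) : ℂ) • (star (z i) * z i)‖ ≤ 1) :
    ‖∑ p : Fin k × Fin d × Fin d, star (sgm p.2.1 p.2.2 ((Real.sqrt (w p.1 p.2.1 p.2.2) : ℂ) • z p.1)) *
      (sgm p.2.1 p.2.2 ((Real.sqrt (w p.1 p.2.1 p.2.2) : ℂ) • z p.1))‖ ≤ 1 := by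
  have := sum_sgm_row (fun i s s' => w i s' s) q (fun i s s' => h0 _ _ _) (fun i s => hr i s)
    (fun i => star (z i)) (by simpa using hz)
  convert this using 2
  rw [Fintype.sum_prod_type, Fintype.sum_prod_type]
  refine Finset.sum_congr rfl fun i _ => ?_
  rw [← Equiv.sum_comp (Equiv.prodComm (Fin d) (Fin d))]
  refine Finset.sum_congr rfl fun p _ => ?_
  simp only [star_sgm, Equiv.prodComm_apply, Prod.fst_swap, Prod.snd_swap, star_star, star_smul]
  simp

theorem nc_groth_fintype {M N ι : Type*} [NonUnitalCStarAlgebra M] [NonUnitalCStarAlgebra N] [Fintype ι]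
    (u : M →ₗ[ℂ] N →ₗ[ℂ] ℂ) (hu : ∀ x y, ‖u x y‖ ≤ ‖x‖ * ‖y‖)
    (a : ι → M) (b : ι → N)
    (ra : ‖∑ i, a i * star (a i)‖ ≤ 1) (ca : ‖∑ i, star (a i) * a i‖ ≤ 1)
    (rb : ‖∑ i, b i * star (b i)‖ ≤ 1) (cb : ‖∑ i, star (b i) * b i‖ ≤ 1) :
    ‖∑ i, u (a i) (b i)‖ ≤ 480 := by
  let e := (Fintype.equivFin ι).symm
  rw [← Equiv.sum_comp e] at *
  exact nc_groth u hu _ (fun i => a (e i)) (fun i => b (e i)) ra ca rb cb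

variable {B : Type*} [NonUnitalCStarAlgebra B] [PartialOrder B] [StarOrderedRing B]

/-- The bilinear form on matrices induced by a functional and weights. -/
def matForm (u : A ⊗[ℂ] B →ₗ[ℂ] ℂ) {d : ℕ} (ρ : Fin d → ℝ) :
    CStarMatrix (Fin d) (Fin d) A →ₗ[ℂ] CStarMatrix (Fin d) (Fin d) B →ₗ[ℂ] ℂ :=
  LinearMap.mk₂ ℂ (fun S T => u (∑ s, ∑ s', ((Real.sqrt (ρ s) * Real.sqrt (ρ s') : ℝ) : ℂ) •
      (S s s' ⊗ₜ[ℂ] T s s')))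
    (by intro S S' T
        rw [← map_add, ← Finset.sum_add_distrib]
        simp only [← Finset.sum_add_distrib, CStarMatrix.add_apply, TensorProduct.add_tmul, smul_add])
    (by intro c S T
        rw [← map_smul, Finset.smul_sum]
        simp only [Finset.smul_sum, CStarMatrix.smul_apply, ← TensorProduct.smul_tmul',
          smul_comm c])
    (by intro S T T'
        rw [← map_add, ← Finset.sum_add_distrib]
        simp only [← Finset.sum_add_distrib, CStarMatrix.add_apply, TensorProduct.tmul_add, smul_add])
    (by intro c S T
        rw [← map_smul, Finset.smul_sum]
        simp only [Finset.smul_sum, CStarMatrix.smul_apply, TensorProduct.tmul_smul,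
          smul_comm c])

lemma matForm_sgm (u : A ⊗[ℂ] B →ₗ[ℂ] ℂ) {d : ℕ} (ρ : Fin d → ℝ) (s s' : Fin d) (a : A) (b : B) :
    matForm u ρ (sgm s s' a) (sgm s s' b) =
      ((Real.sqrt (ρ s) * Real.sqrt (ρ s') : ℝ) : ℂ) * u (a ⊗ₜ b) := by
  simp only [matForm, LinearMap.mk₂_apply]
  rw [Finset.sum_eq_single s, Finset.sum_eq_single s']
  · simp [sgm_apply]
  · intro x _ hx; simp [sgm_apply, hx]
  · simp
  · intro x _ hx; simp [sgm_apply, hx]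
  · simp

theorem weighted_bound (u : A ⊗[ℂ] B →ₗ[ℂ] ℂ)
    (Hos : ∀ (d : ℕ) (ρ : Fin d → ℝ), (∀ s, 0 ≤ ρ s) → ∑ s, ρ s ≤ 1 →
      ∀ (S : CStarMatrix (Fin d) (Fin d) A) (T : CStarMatrix (Fin d) (Fin d) B),
      ‖u (∑ s, ∑ s', ((Real.sqrt (ρ s) * Real.sqrt (ρ s') : ℝ) : ℂ) • (S s s' ⊗ₜ[ℂ] T s s'))‖
        ≤ ‖S‖ * ‖T‖)
    {k : ℕ} (x : Fin k → A) (y : Fin k → B) (t : Fin k → ℝ) (ht : ∀ i, 0 < t i)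
    (h1 : ‖∑ i, x i * star (x i)‖ ≤ 1)
    (h2 : ‖∑ i, ((t i : ℝ) : ℂ) • (star (x i) * x i)‖ ≤ 1)
    (h3 : ‖∑ i, star (y i) * y i‖ ≤ 1)
    (h4 : ‖∑ i, (((t i)⁻¹ : ℝ) : ℂ) • (y i * star (y i))‖ ≤ 1) :
    ‖u (∑ i, x i ⊗ₜ[ℂ] y i)‖ ≤ 1920 := by
  obtain ⟨d, ρ, m, r0, r1, m0, mr, mc, mm⟩ := embezFin t ht
  have hm' : ∀ i s s', 0 ≤ m i s s' / t i := fun i s s' => div_nonneg (m0 _ _ _) (ht i).le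
  have := nc_groth_fintype (matForm u ρ) (Hos d ρ r0 r1)
    (fun p : Fin k × Fin d × Fin d => sgm p.2.1 p.2.2 ((Real.sqrt (m p.1 p.2.1 p.2.2) : ℂ) • x p.1))
    (fun p : Fin k × Fin d × Fin d => sgm p.2.1 p.2.2 ((Real.sqrt (m p.1 p.2.1 p.2.2 / t p.1) : ℂ) • y p.1))
    (sum_sgm_row m (fun _ => 1) m0 mr x (by simpa using h1))
    (sum_sgm_col m t m0 mc x h2)
    (sum_sgm_row (fun i s s' => m i s s' / t i) (fun i => (t i)⁻¹) hm' (fun i s => by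
      rw [← Finset.sum_div, div_le_iff₀ (ht i), inv_mul_cancel₀ (ht i).ne']; exact mr i s) y h4)
    (sum_sgm_col (fun i s s' => m i s s' / t i) (fun _ => 1) hm' (fun i s => by
      rw [← Finset.sum_div, div_le_iff₀ (ht i), one_mul]; exact mc i s) y (by simpa using h3))
  simp only [matForm_sgm] at this
  have e : ∀ i s s', ((Real.sqrt (ρ s) * Real.sqrt (ρ s') : ℝ) : ℂ) *
      u (((Real.sqrt (m i s s') : ℂ) • x i) ⊗ₜ[ℂ] ((Real.sqrt (m i s s' / t i) : ℂ) • y i))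
      = (((Real.sqrt (t i))⁻¹ * (m i s s' * (Real.sqrt (ρ s) * Real.sqrt (ρ s'))) : ℝ) : ℂ)
        * u (x i ⊗ₜ[ℂ] y i) := by
    intro i s s'
    rw [TensorProduct.smul_tmul_smul, map_smul, smul_eq_mul, ← mul_assoc]
    congr 1
    rw [← Complex.ofReal_mul, ← Complex.ofReal_mul, Real.sqrt_div (m0 i s s')]
    congr 1
    have := Real.mul_self_sqrt (m0 i s s')
    rw [mul_div_assoc', this]
    field_simp
  rw [Fintype.sum_prod_type] at this
  simp only [Fintype.sum_prod_type, e, ← Finset.sum_mul, ← Complex.ofReal_sum, ← Finset.mul_sum, mm] at this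
  have e2 : ∀ i, (Real.sqrt (t i))⁻¹ * (Real.sqrt (t i) / 4) = (1/4 : ℝ) := by
    intro i
    have := (Real.sqrt_pos.2 (ht i)).ne'
    field_simp
  simp only [e2, ← Finset.mul_sum, norm_mul, Complex.norm_real] at this
  rw [map_sum]
  norm_num at this
  linarith

end P3b

section P4

open Matrix in
/-- linear action of a scalar matrix on a family -/
def mact {V : Type*} [AddCommGroup V] [Module ℂ V] {m n : Type*} [Fintype n]
    (T : Matrix m n ℂ) (a : n → V) : m → V := fun i => ∑ k, T i k • a k

lemma mact_mact {V : Type*} [AddCommGroup V] [Module ℂ V] {l m n : Type*} [Fintype n] [Fintype m]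
    (S : Matrix l m ℂ) (T : Matrix m n ℂ) (a : n → V) :
    mact S (mact T a) = mact (S * T) a := by
  funext i
  simp only [mact, Finset.smul_sum, Matrix.mul_apply, Finset.sum_smul, mul_smul]
  exact Finset.sum_comm

lemma mact_one {V : Type*} [AddCommGroup V] [Module ℂ V] {n : Type*} [Fintype n] [DecidableEq n]
    (a : n → V) : mact (1 : Matrix n n ℂ) a = a := by
  funext i
  simp [mact, Matrix.one_apply]

lemma sum_mact_tmul {V W : Type*} [AddCommGroup V] [Module ℂ V] [AddCommGroup W] [Module ℂ W]
    {m n : Type*} [Fintype n] [Fintype m] (T : Matrix m n ℂ) (a : n → V) (b : m → W) :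
    ∑ i, mact T a i ⊗ₜ[ℂ] b i = ∑ k, a k ⊗ₜ[ℂ] mact T.transpose b k := by
  simp only [mact, TensorProduct.sum_tmul, TensorProduct.tmul_sum, Matrix.transpose_apply,
    TensorProduct.tmul_smul, TensorProduct.smul_tmul']
  exact Finset.sum_comm

variable {A : Type*} [NonUnitalCStarAlgebra A]

/-- The two sesquilinear `A`-valued forms. -/
def qf (σ : Bool) (a b : A) : A := bif σ then star a * b else b * star a

lemma qf_sum {n : Type*} [Fintype n] (σ : Bool) (c d : n → ℂ) (a : n → A) :
    qf σ (∑ k, c k • a k) (∑ l, d l • a l) = ∑ k, ∑ l, (star (c k) * d l) • qf σ (a k) (a l) := by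
  cases σ
  · simp only [qf, cond_false, star_sum, star_smul, Finset.sum_mul, Finset.mul_sum, smul_mul_smul_comm]
    refine Finset.sum_congr rfl fun k _ => Finset.sum_congr rfl fun l _ => ?_
    rw [mul_comm]
  · simp only [qf, cond_true, star_sum, star_smul, Finset.sum_mul, Finset.mul_sum, smul_mul_smul_comm]
    rw [Finset.sum_comm]

lemma qf_self_nonneg [PartialOrder A] [StarOrderedRing A] (σ : Bool) (a : A) : 0 ≤ qf σ a a := by
  cases σ
  · exact mul_star_self_nonneg a
  · exact star_mul_self_nonneg a

lemma qf_zero (σ : Bool) : qf σ (0 : A) 0 = 0 := by cases σ <;> simp [qf]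

lemma qf_smul (σ : Bool) (c : ℂ) (a : A) : qf σ (c • a) (c • a) = (star c * c) • qf σ a a := by
  cases σ <;> simp [qf, smul_mul_smul_comm, mul_comm]

/-- quadratic form with scalar matrix -/
def QF {n : Type*} [Fintype n] (σ : Bool) (M : Matrix n n ℂ) (a : n → A) : A :=
  ∑ k, ∑ l, M k l • qf σ (a k) (a l)

/-- the sum of squares -/
def sqs {n : Type*} [Fintype n] (σ : Bool) (a : n → A) : A := ∑ k, qf σ (a k) (a k)

lemma sq_nonneg' {n : Type*} [Fintype n] [PartialOrder A] [StarOrderedRing A] (σ : Bool) (a : n → A) :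
    0 ≤ sqs σ a := Finset.sum_nonneg fun _ _ => qf_self_nonneg _ _

lemma QF_diagonal {n : Type*} [Fintype n] [DecidableEq n] (σ : Bool) (t : n → ℂ) (a : n → A) :
    QF σ (Matrix.diagonal t) a = ∑ k, t k • qf σ (a k) (a k) := by
  simp only [QF, Matrix.diagonal_apply]
  refine Finset.sum_congr rfl fun k _ => ?_
  rw [Finset.sum_eq_single k]
  · simp
  · intro l _ h; simp [Ne.symm h]
  · simp

lemma QF_one {n : Type*} [Fintype n] [DecidableEq n] (σ : Bool) (a : n → A) :
    QF σ (1 : Matrix n n ℂ) a = sqs σ a := by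
  rw [← Matrix.diagonal_one, QF_diagonal]; simp [sqs]

lemma QF_mact {m n : Type*} [Fintype n] [Fintype m] (σ : Bool) (M : Matrix m m ℂ)
    (T : Matrix m n ℂ) (a : n → A) :
    QF σ M (mact T a) = QF σ (T.conjTranspose * M * T) a := by
  simp only [QF, mact, qf_sum, Matrix.mul_apply, Matrix.conjTranspose_apply, Finset.smul_sum, Finset.sum_mul,
    Finset.sum_smul, smul_smul]
  calc _ = ∑ x : m, ∑ x_1 : n, ∑ x_2 : m, ∑ x_3 : n,
        (M x x_2 * (star (T x x_1) * T x_2 x_3)) • qf σ (a x_1) (a x_3) := 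
        Finset.sum_congr rfl fun _ _ => Finset.sum_comm
    _ = ∑ x_1 : n, ∑ x : m, ∑ x_2 : m, ∑ x_3 : n,
        (M x x_2 * (star (T x x_1) * T x_2 x_3)) • qf σ (a x_1) (a x_3) := Finset.sum_comm
    _ = _ := by
        refine Finset.sum_congr rfl fun k _ => ?_
        calc _ = ∑ x : m, ∑ x_3 : n, ∑ x_2 : m, 
              (M x x_2 * (star (T x k) * T x_2 x_3)) • qf σ (a k) (a x_3) :=
              Finset.sum_congr rfl fun _ _ => Finset.sum_comm
          _ = ∑ x_3 : n, ∑ x : m, ∑ x_2 : m, 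
              (M x x_2 * (star (T x k) * T x_2 x_3)) • qf σ (a k) (a x_3) := Finset.sum_comm
          _ = _ := by
            refine Finset.sum_congr rfl fun l _ => ?_
            rw [Finset.sum_comm]
            refine Finset.sum_congr rfl fun i _ => Finset.sum_congr rfl fun j _ => ?_
            congr 1; ring

lemma sqs_mact {m n : Type*} [Fintype n] [Fintype m] (σ : Bool)
    (T : Matrix m n ℂ) (a : n → A) :
    sqs σ (mact T a) = QF σ (T.conjTranspose * T) a := by
  classical
  rw [← QF_one, QF_mact, Matrix.mul_one]

lemma sqs_mact_unitary {n : Type*} [Fintype n] [DecidableEq n] (σ : Bool)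
    (T : Matrix n n ℂ) (hT : T.conjTranspose * T = 1) (a : n → A) :
    sqs σ (mact T a) = sqs σ a := by
  rw [sqs_mact, hT, QF_one]

lemma QF_add {n : Type*} [Fintype n] (σ : Bool) (M N : Matrix n n ℂ) (a : n → A) :
    QF σ (M + N) a = QF σ M a + QF σ N a := by
  simp [QF, add_smul, Finset.sum_add_distrib]

lemma QF_proj_le {n : Type*} [Fintype n] [DecidableEq n] [PartialOrder A] [StarOrderedRing A] (σ : Bool)
    (E : Matrix n n ℂ) (h1 : E.conjTranspose = E) (h2 : E * E = E) (a : n → A) :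
    QF σ E a ≤ sqs σ a := by
  have h3 : (1 - E).conjTranspose * (1 - E) = 1 - E := by
    rw [Matrix.conjTranspose_sub, Matrix.conjTranspose_one, h1, mul_sub, sub_mul, sub_mul, h2]
    simp
  have h4 := sq_nonneg' σ (mact (1 - E) a)
  rw [sqs_mact, h3] at h4
  have : sqs σ a = QF σ E a + QF σ (1 - E) a := by
    rw [← QF_add, ← QF_one]; simp
  rw [this]
  exact le_add_of_nonneg_right h4

lemma exists_unitary_row {n : ℕ} (c : Fin (n+1) → ℂ) (hc : c ≠ 0) :
    ∃ (U : Matrix (Fin (n+1)) (Fin (n+1)) ℂ) (r : ℂ), U * U.conjTranspose = 1 ∧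
      U.conjTranspose * U = 1 ∧ ∀ j, U 0 j = r * c j := by
  set v : EuclideanSpace ℂ (Fin (n+1)) := WithLp.toLp 2 c with hv
  have hv0 : v ≠ 0 := by
    intro h
    apply hc
    funext i
    have : v i = 0 := by rw [h]; rfl
    simpa [hv] using this
  set r : ℂ := ((‖v‖⁻¹ : ℝ) : ℂ) with hr
  have hn : ‖r • v‖ = 1 := by
    rw [norm_smul, hr, Complex.norm_real, norm_inv, norm_norm, inv_mul_cancel₀ (norm_ne_zero_iff.2 hv0)]
  have ho : Orthonormal ℂ (({0} : Set (Fin (n+1))).restrict (fun _ : Fin (n+1) => r • v)) := by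
    refine ⟨fun i => hn, ?_⟩
    rintro ⟨i, hi⟩ ⟨j, hj⟩ hij
    exact absurd (Subtype.ext (hi.trans hj.symm)) hij
  obtain ⟨b, hb⟩ := ho.exists_orthonormalBasis_extension_of_card_eq (by simp)
  set U : Matrix (Fin (n+1)) (Fin (n+1)) ℂ := fun i j => b i j with hU
  have h1 : U * U.conjTranspose = 1 := by
    ext i k
    rw [Matrix.mul_apply]
    have := orthonormal_iff_ite.1 b.orthonormal k i
    rw [PiLp.inner_apply] at this
    simp only [Matrix.conjTranspose_apply, hU, Matrix.one_apply]
    simp only [eq_comm (a := k)] at this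
    rw [← this]
    refine Finset.sum_congr rfl fun j _ => ?_
    rw [RCLike.inner_apply]
    rfl
  refine ⟨U, r, h1, mul_eq_one_comm.1 h1, fun j => ?_⟩
  simp only [hU]
  rw [hb 0 rfl]
  simp [hv]

variable {B : Type*} [NonUnitalCStarAlgebra B]

lemma conj_unitary {n : Type*} [Fintype n] [DecidableEq n] (U : Matrix n n ℂ) (h : U.conjTranspose * U = 1) :
    (U.map star).conjTranspose * U.map star = 1 := by
  have : (U.map star).conjTranspose * U.map star = (U.conjTranspose * U).map star := by
    ext i j
    simp [Matrix.mul_apply]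
  rw [this, h]
  ext i j
  by_cases hij : i = j <;> simp [Matrix.one_apply, hij]

lemma reduce_rep [PartialOrder A] [StarOrderedRing A] [PartialOrder B] [StarOrderedRing B]
    (σ τ : Bool) (δ : ℝ) (n : ℕ) :
    ∀ (a : Fin n → A) (b : Fin n → B), ‖sqs σ a‖ ≤ δ → ‖sqs τ b‖ ≤ δ →
    ∃ (m : ℕ) (a' : Fin m → A) (b' : Fin m → B), ‖sqs σ a'‖ ≤ δ ∧ ‖sqs τ b'‖ ≤ δ ∧
      LinearIndependent ℂ a' ∧ ∑ i, a i ⊗ₜ[ℂ] b i = ∑ i, a' i ⊗ₜ[ℂ] b' i := by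
  induction n with
  | zero => intro a b h1 h2; exact ⟨0, a, b, h1, h2, linearIndependent_empty_type, rfl⟩
  | succ n ih =>
    intro a b h1 h2
    by_cases hli : LinearIndependent ℂ a
    · exact ⟨_, a, b, h1, h2, hli, rfl⟩
    rw [Fintype.not_linearIndependent_iff] at hli
    obtain ⟨c, hc0, i0, hi0⟩ := hli
    obtain ⟨U, r, hU1, hU2, hUr⟩ := exists_unitary_row c (fun h => hi0 (by rw [h]; rfl))
    have ha0 : mact U a 0 = 0 := by
      simp only [mact, hUr, mul_smul]
      rw [← Finset.smul_sum, hc0, smul_zero]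
    have key : ∑ i, a i ⊗ₜ[ℂ] b i = ∑ i, mact U a i ⊗ₜ[ℂ] mact (U.map star) b i := by
      rw [sum_mact_tmul, mact_mact]
      have : U.transpose * U.map star = 1 := by
        have h := conj_unitary U hU2
        convert h using 2
        ext i j; simp
      rw [this, mact_one]
    have e1 : sqs σ (fun i : Fin n => mact U a i.succ) = sqs σ a := by
      rw [← sqs_mact_unitary σ U hU2 a]
      simp only [sqs, Fin.sum_univ_succ (n := n), ha0, qf_zero, zero_add]
    have e2 : ‖sqs τ (fun i : Fin n => mact (U.map star) b i.succ)‖ ≤ ‖sqs τ b‖ := by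
      rw [← sqs_mact_unitary τ _ (conj_unitary U hU2) b]
      refine CStarAlgebra.norm_le_norm_of_nonneg_of_le (sq_nonneg' _ _) ?_
      simp only [sqs, Fin.sum_univ_succ (n := n)]
      exact le_add_of_nonneg_left (qf_self_nonneg _ _)
    obtain ⟨m, a', b', g1, g2, g3, g4⟩ := ih _ _ (e1.symm ▸ h1) (e2.trans h2)
    refine ⟨m, a', b', g1, g2, g3, ?_⟩
    rw [key, ← g4, Fin.sum_univ_succ, ha0]
    simp

end P4

section P4b

lemma exists_dual {V : Type*} [AddCommGroup V] [Module ℂ V] {n : Type*} [Fintype n] [DecidableEq n]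
    (v : n → V) (hv : LinearIndependent ℂ v) :
    ∃ ψ : n → V →ₗ[ℂ] ℂ, ∀ i j, ψ i (v j) = if i = j then 1 else 0 := by
  have h : ∀ i, ∃ g : V →ₗ[ℂ] ℂ, g ∘ₗ (Submodule.span ℂ (Set.range v)).subtype =
      (Finsupp.lapply i) ∘ₗ hv.repr := fun i => LinearMap.exists_extend _
  choose g hg using h
  refine ⟨g, fun i j => ?_⟩
  have h2 := LinearMap.congr_fun (hg i) ⟨v j, Submodule.subset_span ⟨j, rfl⟩⟩
  simp only [LinearMap.comp_apply, Submodule.subtype_apply] at h2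
  rw [h2, hv.repr_eq_single j _ rfl]
  simp [Finsupp.single_apply, eq_comm]

variable {A B : Type*} [NonUnitalCStarAlgebra A] [NonUnitalCStarAlgebra B]
  [PartialOrder A] [StarOrderedRing A] [PartialOrder B] [StarOrderedRing B]

lemma common_mat {V W : Type*} [AddCommGroup V] [Module ℂ V] [AddCommGroup W] [Module ℂ W]
    {n m : Type*} [Fintype n] [Fintype m] [DecidableEq n] [DecidableEq m]
    (a : n → V) (b : n → W) (c : m → V) (d : m → W) (ha : LinearIndependent ℂ a)
    (hd : LinearIndependent ℂ d) (h : ∑ i, a i ⊗ₜ[ℂ] b i = ∑ k, c k ⊗ₜ[ℂ] d k) :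
    ∃ S : Matrix n m ℂ, c = mact S.transpose a ∧ b = mact S d := by
  obtain ⟨ψ, hψ⟩ := exists_dual d hd
  obtain ⟨φ, hφ⟩ := exists_dual a ha
  set S : Matrix n m ℂ := fun i k => ψ k (b i) with hS
  have hc : c = mact S.transpose a := by
    funext k
    have := congrArg (TensorProduct.lift (LinearMap.lsmul ℂ V).flip ∘ₗ
      TensorProduct.map LinearMap.id (ψ k)) h
    simp only [map_sum, LinearMap.comp_apply, TensorProduct.map_tmul, TensorProduct.lift.tmul,
      LinearMap.flip_apply, LinearMap.id_apply, hψ] at this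
    simp only [mact, hS, Matrix.transpose_apply]
    have h2 : ∀ (r : ℂ) (v : V), (LinearMap.lsmul ℂ V) r v = r • v := fun _ _ => rfl
    simp only [h2, ite_smul, one_smul, zero_smul, Finset.sum_ite_eq, Finset.mem_univ, if_true] at this
    exact this.symm
  refine ⟨S, hc, ?_⟩
  rw [hc, sum_mact_tmul, Matrix.transpose_transpose] at h
  funext i
  have := congrArg (TensorProduct.lift (LinearMap.lsmul ℂ W) ∘ₗ
      TensorProduct.map (φ i) LinearMap.id) h
  have h2 : ∀ (r : ℂ) (v : W), (LinearMap.lsmul ℂ W) r v = r • v := fun _ _ => rfl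
  simpa only [map_sum, LinearMap.comp_apply, TensorProduct.map_tmul, TensorProduct.lift.tmul,
      LinearMap.id_apply, hφ, h2, ite_smul, one_smul, zero_smul, Finset.sum_ite_eq, Finset.mem_univ, if_true] using this

open scoped ComplexOrder in
lemma common_rep {n m : ℕ} (δ : ℝ) 
    (a : Fin n → A) (b : Fin n → B) (c : Fin m → A) (d : Fin m → B) (ha : LinearIndependent ℂ a)
    (hd : LinearIndependent ℂ d) (h : ∑ i, a i ⊗ₜ[ℂ] b i = ∑ k, c k ⊗ₜ[ℂ] d k)
    (h1 : ‖sqs false a‖ ≤ δ) (h2 : ‖sqs true b‖ ≤ δ) (h3 : ‖sqs true c‖ ≤ δ)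
    (h4 : ‖sqs false d‖ ≤ δ) :
    ∃ (x : Fin n → A) (y : Fin n → B) (t : Fin n → ℝ), (∀ i, 0 < t i) ∧
      ∑ i, x i ⊗ₜ[ℂ] y i = ∑ i, a i ⊗ₜ[ℂ] b i ∧
      ‖sqs false x‖ ≤ δ ∧ ‖sqs true y‖ ≤ δ ∧ 
      ‖∑ i, ((t i : ℝ) : ℂ) • qf true (x i) (x i)‖ ≤ δ ∧
      ‖∑ i, (((t i)⁻¹ : ℝ) : ℂ) • qf false (y i) (y i)‖ ≤ δ := by
  obtain ⟨S, hc, hb⟩ := common_mat a b c d ha hd h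
  have hH : (S * S.conjTranspose).PosSemidef := Matrix.posSemidef_self_mul_conjTranspose S
  set t : Fin n → ℝ := hH.isHermitian.eigenvalues with ht
  have ht0 : ∀ i, 0 ≤ t i := hH.eigenvalues_nonneg
  set D : Matrix (Fin n) (Fin n) ℂ := Matrix.diagonal (fun i => ((t i : ℝ) : ℂ)) with hD
  obtain ⟨V, hV1, hV2, hVD⟩ : ∃ V : Matrix (Fin n) (Fin n) ℂ, V.conjTranspose * V = 1 ∧
      V * V.conjTranspose = 1 ∧ S * S.conjTranspose = V.conjTranspose * D * V := by
    refine ⟨(hH.isHermitian.eigenvectorUnitary : Matrix (Fin n) (Fin n) ℂ).conjTranspose, ?_, ?_, ?_⟩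
    · rw [Matrix.conjTranspose_conjTranspose]
      exact (Matrix.mem_unitaryGroup_iff.1 hH.isHermitian.eigenvectorUnitary.2)
    · rw [Matrix.conjTranspose_conjTranspose]
      exact (Matrix.mem_unitaryGroup_iff'.1 hH.isHermitian.eigenvectorUnitary.2)
    · rw [Matrix.conjTranspose_conjTranspose]
      have := hH.isHermitian.spectral_theorem
      rw [Unitary.conjStarAlgAut_apply] at this
      exact this
  set T := V * S with hT
  have hTT : T * T.conjTranspose = D := by
    rw [hT, Matrix.conjTranspose_mul]
    calc V * S * (S.conjTranspose * V.conjTranspose) = V * (S * S.conjTranspose) * V.conjTranspose := by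
          simp only [Matrix.mul_assoc]
      _ = (V * V.conjTranspose) * D * (V * V.conjTranspose) := by rw [hVD]; simp only [Matrix.mul_assoc]
      _ = D := by rw [hV2]; simp
  set x0 := mact (V.map star) a with hx0
  set y := mact V b with hy
  have hyT : y = mact T d := by rw [hy, hb, mact_mact]
  have hVc := conj_unitary V hV1
  have hsum : ∑ i, x0 i ⊗ₜ[ℂ] y i = ∑ i, a i ⊗ₜ[ℂ] b i := by
    rw [hx0, hy, sum_mact_tmul, mact_mact]
    have : (V.map star).transpose * V = 1 := hV1
    rw [this, mact_one]
  have hx1 : sqs false x0 = sqs false a := sqs_mact_unitary _ _ hVc _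
  have hy1 : sqs true y = sqs true b := sqs_mact_unitary _ _ hV1 _
  have hx2 : ∑ i, ((t i : ℝ) : ℂ) • qf true (x0 i) (x0 i) = sqs true c := by
    rw [← QF_diagonal true (fun i => ((t i : ℝ) : ℂ)) x0, hx0, QF_mact, hc, sqs_mact]
    congr 1
    have e : S.transpose.conjTranspose * S.transpose = (S * S.conjTranspose).map star := by
      ext i j; simp [Matrix.mul_apply]
    rw [e, hVD]
    ext i j
    simp [Matrix.mul_apply, hD, Matrix.diagonal_apply, mul_comm]
  have hy2 : ∑ i, (((t i)⁻¹ : ℝ) : ℂ) • qf false (y i) (y i) ≤ sqs false d := by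
    rw [← QF_diagonal false (fun i => (((t i)⁻¹ : ℝ) : ℂ)) y, hyT, QF_mact]
    set D' : Matrix (Fin n) (Fin n) ℂ := Matrix.diagonal (fun i => (((t i)⁻¹ : ℝ) : ℂ)) with hD'
    have hDc : D'.conjTranspose = D' := by
      rw [hD', Matrix.diagonal_conjTranspose]
      congr 1; funext i
      simp
    have hDD : D' * D * D' = D' := by
      rw [hD', hD, Matrix.diagonal_mul_diagonal, Matrix.diagonal_mul_diagonal]
      congr 1; funext i
      by_cases h0 : t i = 0
      · simp [h0]
      · rw [← Complex.ofReal_mul, ← Complex.ofReal_mul, inv_mul_cancel₀ h0, one_mul]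
    apply QF_proj_le
    · rw [Matrix.conjTranspose_mul (T.conjTranspose * D') T, Matrix.conjTranspose_mul T.conjTranspose D', hDc, Matrix.conjTranspose_conjTranspose,
        Matrix.mul_assoc]
    · calc T.conjTranspose * D' * T * (T.conjTranspose * D' * T) = 
          T.conjTranspose * (D' * (T * T.conjTranspose) * D') * T := by simp only [Matrix.mul_assoc]
        _ = _ := by rw [hTT, hDD]
  have hy0 : ∀ i, t i = 0 → y i = 0 := by
    intro i hi
    have h5 : (T * T.conjTranspose) i i = 0 := by rw [hTT, hD]; simp [hi]
    rw [Matrix.mul_apply] at h5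
    have h6 : ∀ k, T i k = 0 := by
      have h7 : ∑ k, ‖T i k‖ ^ 2 = 0 := by
        have : ((∑ k, ‖T i k‖ ^ 2 : ℝ) : ℂ) = 0 := by
          rw [← h5]; push_cast
          refine Finset.sum_congr rfl fun k _ => ?_
          rw [Matrix.conjTranspose_apply]
          exact (Complex.mul_conj' _).symm
        exact_mod_cast this
      intro k
      have := (Finset.sum_eq_zero_iff_of_nonneg (fun k _ => by positivity)).1 h7 k (Finset.mem_univ k)
      simpa using this
    rw [hyT]
    simp [mact, h6]
  refine ⟨fun i => if t i = 0 then 0 else x0 i, y, fun i => if t i = 0 then 1 else t i, ?_, ?_, ?_, ?_, ?_, ?_⟩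
  · intro i
    by_cases hi : t i = 0
    · simp [hi]
    · simp only [hi, if_false]; exact lt_of_le_of_ne (ht0 i) (Ne.symm hi)
  · rw [← hsum]
    refine Finset.sum_congr rfl fun i _ => ?_
    by_cases hi : t i = 0
    · simp [hi, hy0 i hi]
    · simp [hi]
  · rw [← hx1] at h1
    refine le_trans (CStarAlgebra.norm_le_norm_of_nonneg_of_le (sq_nonneg' _ _) ?_) h1
    refine Finset.sum_le_sum fun i _ => ?_
    by_cases hi : t i = 0
    · simp only [hi, if_true, qf_zero]; exact qf_self_nonneg _ _
    · simp [hi]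
  · rw [hy1]; exact h2
  · rw [← hx2] at h3
    refine le_trans (le_of_eq ?_) h3
    congr 1
    refine Finset.sum_congr rfl fun i _ => ?_
    by_cases hi : t i = 0
    · simp [hi, qf_zero]
    · simp [hi]
  · refine le_trans ?_ h4
    refine le_trans (le_of_eq ?_) (CStarAlgebra.norm_le_norm_of_nonneg_of_le ?_ hy2)
    · congr 1
      refine Finset.sum_congr rfl fun i _ => ?_
      by_cases hi : t i = 0
      · simp [hi, qf_zero, hy0 i hi]
      · simp [hi]
    · refine Finset.sum_nonneg fun i _ => ?_
      rw [Complex.coe_smul]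
      exact smul_nonneg (inv_nonneg.2 (ht0 i)) (qf_self_nonneg _ _)

theorem hyp2_core (u : A ⊗[ℂ] B →ₗ[ℂ] ℂ) (Hos : ∀ (d : ℕ) (ρ : Fin d → ℝ), (∀ s, 0 ≤ ρ s) → ∑ s, ρ s ≤ 1 → ∀ (S : CStarMatrix (Fin d) (Fin d) A) (T : CStarMatrix (Fin d) (Fin d) B), ‖u (∑ s, ∑ s', ((Real.sqrt (ρ s) * Real.sqrt (ρ s') : ℝ) : ℂ) • (S s s' ⊗ₜ[ℂ] T s s'))‖ ≤ ‖S‖ * ‖T‖)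
    {n m : ℕ} (δ : ℝ) (hδ : 0 < δ)
    (a : Fin n → A) (b : Fin n → B) (c : Fin m → A) (d : Fin m → B) 
    (h : ∑ i, a i ⊗ₜ[ℂ] b i = ∑ k, c k ⊗ₜ[ℂ] d k)
    (h1 : ‖sqs false a‖ ≤ δ) (h2 : ‖sqs true b‖ ≤ δ) (h3 : ‖sqs true c‖ ≤ δ)
    (h4 : ‖sqs false d‖ ≤ δ) : ‖u (∑ i, a i ⊗ₜ[ℂ] b i)‖ ≤ 1920 * δ := by
  obtain ⟨n', a', b', e1, e2, e3, e4⟩ := reduce_rep false true δ n a b h1 h2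
  obtain ⟨m', d', c', f1, f2, f3, f4⟩ := reduce_rep false true δ m d c h4 h3
  have f4' := congrArg (TensorProduct.comm ℂ B A) f4
  simp only [map_sum, TensorProduct.comm_tmul] at f4'
  have h' : ∑ i, a' i ⊗ₜ[ℂ] b' i = ∑ k, c' k ⊗ₜ[ℂ] d' k := by rw [← e4, h, f4']
  obtain ⟨x, y, t, g0, g1, g2, g3, g4, g5⟩ := common_rep δ a' b' c' d' e3 f3 h' e1 e2 f2 f1
  rw [e4, ← g1]
  set r : ℝ := (Real.sqrt δ)⁻¹ with hr
  have hrr : r * r = δ⁻¹ := by rw [hr, ← mul_inv, Real.mul_self_sqrt hδ.le]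
  have hq : ∀ (σ : Bool), (∀ x : A, qf σ ((r : ℂ) • x) ((r : ℂ) • x) = ((δ⁻¹ : ℝ) : ℂ) • qf σ x x) := by
    intro σ x
    rw [qf_smul, ← hrr]; simp
  have hq' : ∀ (σ : Bool), (∀ x : B, qf σ ((r : ℂ) • x) ((r : ℂ) • x) = ((δ⁻¹ : ℝ) : ℂ) • qf σ x x) := by
    intro σ x
    rw [qf_smul, ← hrr]; simp
  have hn : ∀ s : ℝ, s ≤ δ → δ⁻¹ * s ≤ 1 := by
    intro s hs
    rw [inv_mul_le_iff₀ hδ, mul_one]; exact hs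
  have key := weighted_bound u Hos (fun i => (r : ℂ) • x i) (fun i => (r : ℂ) • y i) t g0
    (by
      have e : ∑ i, ((r : ℂ) • x i) * star ((r : ℂ) • x i) = ((δ⁻¹ : ℝ) : ℂ) • sqs false x := by
        rw [sqs, Finset.smul_sum]
        exact Finset.sum_congr rfl fun i _ => hq false (x i)
      rw [e, norm_smul, Complex.norm_real, Real.norm_of_nonneg (inv_nonneg.2 hδ.le)]
      exact hn _ g2)
    (by
      have e : ∑ i, ((t i : ℝ) : ℂ) • (star ((r : ℂ) • x i) * ((r : ℂ) • x i)) = ((δ⁻¹ : ℝ) : ℂ) • ∑ i, ((t i : ℝ) : ℂ) • qf true (x i) (x i) := by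
        rw [Finset.smul_sum]
        refine Finset.sum_congr rfl fun i _ => ?_
        rw [smul_comm, ← hq true (x i)]; rfl
      rw [e, norm_smul, Complex.norm_real, Real.norm_of_nonneg (inv_nonneg.2 hδ.le)]
      exact hn _ g4)
    (by
      have e : ∑ i, star ((r : ℂ) • y i) * ((r : ℂ) • y i) = ((δ⁻¹ : ℝ) : ℂ) • sqs true y := by
        rw [sqs, Finset.smul_sum]
        exact Finset.sum_congr rfl fun i _ => hq' true (y i)
      rw [e, norm_smul, Complex.norm_real, Real.norm_of_nonneg (inv_nonneg.2 hδ.le)]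
      exact hn _ g3)
    (by
      have e : ∑ i, (((t i)⁻¹ : ℝ) : ℂ) • (((r : ℂ) • y i) * star ((r : ℂ) • y i)) = ((δ⁻¹ : ℝ) : ℂ) • ∑ i, (((t i)⁻¹ : ℝ) : ℂ) • qf false (y i) (y i) := by
        rw [Finset.smul_sum]
        refine Finset.sum_congr rfl fun i _ => ?_
        rw [smul_comm, ← hq' false (y i)]; rfl
      rw [e, norm_smul, Complex.norm_real, Real.norm_of_nonneg (inv_nonneg.2 hδ.le)]
      exact hn _ g5)
  have e : ∑ i, ((r : ℂ) • x i) ⊗ₜ[ℂ] ((r : ℂ) • y i) = ((δ⁻¹ : ℝ) : ℂ) • ∑ i, x i ⊗ₜ[ℂ] y i := by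
    rw [Finset.smul_sum]
    refine Finset.sum_congr rfl fun i _ => ?_
    rw [TensorProduct.smul_tmul_smul, ← hrr]; simp
  rw [e, map_smul, norm_smul, Complex.norm_real, Real.norm_of_nonneg (inv_nonneg.2 hδ.le),
    inv_mul_le_iff₀ hδ] at key
  linarith

end P4b

section P5

lemma matnorm_eq {A : Type*} [NonUnitalCStarAlgebra A] [PartialOrder A] [StarOrderedRing A] {p : ℕ}
    (N : Matrix (Fin p) (Fin p) A → ℝ) (hN : IsCStarNorm N) (v : Matrix (Fin p) (Fin p) A) :
    N v = ‖CStarMatrix.ofMatrix v‖ := by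
  have h : IsCStarNorm (M := CStarMatrix (Fin p) (Fin p) A) (fun M => N (CStarMatrix.ofMatrix.symm M)) :=
    ⟨fun x y => hN.add_le _ _, fun c x => hN.smul_eq _ _, fun x hx => hN.eq_zero_of _ hx,
      fun x y => hN.mul_le _ _, fun x => hN.star_mul_self _⟩
  exact h.eq_norm (CStarMatrix.ofMatrix v)

section rowcol
variable {A : Type*} [NonUnitalCStarAlgebra A] [PartialOrder A] [StarOrderedRing A]

open WithCStarModule in
lemma row_bound {p : ℕ} (v : CStarMatrix (Fin p) (Fin p) A) (α : Fin p → ℂ) :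
    ‖sqs false (fun j => ∑ i, α i • v i j)‖ ≤ (∑ i, ‖α i‖ ^ 2) * ‖v‖ ^ 2 := by
  have hu := CStarAlgebra.increasingApproximateUnit A
  haveI := hu.neBot
  set r : Fin p → A := fun j => ∑ i, α i • v i j with hr
  have hbd : ∀ e : A, ‖e‖ ≤ 1 → ‖e * sqs false r * star e‖ ≤ (∑ i, ‖α i‖ ^ 2) * ‖v‖ ^ 2 := by
    intro e he
    set x : C⋆ᵐᵒᵈ(A, Fin p → A) := (WithCStarModule.equiv _ _).symm (fun i => α i • e) with hx
    have h1 : ‖x‖ ^ 2 ≤ ∑ i, ‖α i‖ ^ 2 := by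
      rw [pi_norm_sq]
      refine (norm_sum_le _ _).trans (Finset.sum_le_sum fun i _ => ?_)
      have : x i = α i • e := rfl
      rw [this, inner_def]
      have h2 : ‖α i • e‖ ≤ ‖α i‖ := by
        rw [norm_smul]
        exact mul_le_of_le_one_right (norm_nonneg _) he
      rw [CStarRing.norm_self_mul_star, ← sq]
      exact pow_le_pow_left₀ (norm_nonneg _) h2 2
    have h3 : ∀ j, CStarMatrix.toCLM v x j = e * r j := by
      intro j
      have : CStarMatrix.toCLM v x j = ∑ i, x i * v i j := by
        rw [CStarMatrix.toCLM_apply_eq_sum]; rfl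
      rw [this, hr, Finset.mul_sum]
      refine Finset.sum_congr rfl fun i _ => ?_
      have : x i = α i • e := rfl
      rw [this, smul_mul_assoc, mul_smul_comm]
    have h4 : ‖CStarMatrix.toCLM v x‖ ^ 2 = ‖e * sqs false r * star e‖ := by
      rw [pi_norm_sq]
      congr 1
      rw [sqs, Finset.mul_sum, Finset.sum_mul]
      refine Finset.sum_congr rfl fun j _ => ?_
      rw [h3, inner_def]
      simp [qf, mul_assoc]
    rw [← h4]
    have h5 : ‖CStarMatrix.toCLM v x‖ ≤ ‖v‖ * ‖x‖ := (CStarMatrix.toCLM v).le_opNorm x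
    calc ‖CStarMatrix.toCLM v x‖ ^ 2 ≤ (‖v‖ * ‖x‖) ^ 2 := pow_le_pow_left₀ (norm_nonneg _) h5 2
      _ = ‖x‖ ^ 2 * ‖v‖ ^ 2 := by ring
      _ ≤ _ := mul_le_mul_of_nonneg_right h1 (by positivity)
  have ht : Filter.Tendsto (fun e : A => ‖∑ j, (e * r j) * star (e * r j)‖) (CStarAlgebra.approximateUnit A) (nhds ‖sqs false r‖) := by
    refine Filter.Tendsto.norm (tendsto_finsetSum _ fun j _ => ?_)
    exact (hu.tendsto_mul_right (r j)).mul (hu.tendsto_mul_right (r j)).star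
  refine le_of_tendsto ht ?_
  filter_upwards [hu.eventually_norm] with e he
  refine le_trans (le_of_eq ?_) (hbd e he)
  congr 1
  rw [sqs, Finset.mul_sum, Finset.sum_mul]
  refine Finset.sum_congr rfl fun j _ => ?_
  simp [qf, mul_assoc]

lemma col_bound {p : ℕ} (v : CStarMatrix (Fin p) (Fin p) A) (β : Fin p → ℂ) :
    ‖sqs true (fun i => ∑ j, β j • v i j)‖ ≤ (∑ i, ‖β i‖ ^ 2) * ‖v‖ ^ 2 := by
  have h := row_bound (star v) (fun i => star (β i))
  rw [norm_star] at h
  simp only [norm_star] at h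
  refine le_trans (le_of_eq ?_) h
  congr 1
  refine Finset.sum_congr rfl fun i _ => ?_
  simp [qf, CStarMatrix.star_apply]

lemma sqs_prod_le {n m : Type*} [Fintype n] [Fintype m] (σ : Bool) (a : n × m → A) (C : m → ℝ)
    (h : ∀ k, ‖sqs σ (fun j => a (j, k))‖ ≤ C k) : ‖sqs σ a‖ ≤ ∑ k, C k := by
  rw [sqs, Fintype.sum_prod_type_right]
  exact (norm_sum_le _ _).trans (Finset.sum_le_sum fun k _ => h k)

lemma sqs_prod_le' {n m : Type*} [Fintype n] [Fintype m] (σ : Bool) (a : n × m → A) (C : n → ℝ)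
    (h : ∀ j, ‖sqs σ (fun k => a (j, k))‖ ≤ C j) : ‖sqs σ a‖ ≤ ∑ k, C k := by
  rw [sqs, Fintype.sum_prod_type]
  exact (norm_sum_le _ _).trans (Finset.sum_le_sum fun k _ => h k)

lemma sqs_smul {n : Type*} [Fintype n] (σ : Bool) (s : ℝ) (a : n → A) :
    ‖sqs σ (fun i => (s : ℂ) • a i)‖ = s ^ 2 * ‖sqs σ a‖ := by
  have : sqs σ (fun i => (s : ℂ) • a i) = ((s ^ 2 : ℝ) : ℂ) • sqs σ a := by
    rw [sqs, sqs, Finset.smul_sum]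
    refine Finset.sum_congr rfl fun i _ => ?_
    rw [qf_smul]; simp [sq]
  rw [this, norm_smul, Complex.norm_real, Real.norm_of_nonneg (sq_nonneg s)]

end rowcol

lemma balance (x y δ : ℝ) (hx : 0 ≤ x) (hy : 0 ≤ y) (hxy : x * y < δ) :
    ∃ s : ℝ, 0 < s ∧ s ^ 2 * x ^ 2 ≤ δ ∧ s⁻¹ ^ 2 * y ^ 2 ≤ δ := by
  have hδ : 0 < δ := lt_of_le_of_lt (mul_nonneg hx hy) hxy
  have hsq : Real.sqrt δ ^ 2 = δ := Real.sq_sqrt hδ.le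
  have hs0 : 0 < Real.sqrt δ := Real.sqrt_pos.2 hδ
  rcases hx.eq_or_lt with h0 | h0
  · refine ⟨y / Real.sqrt δ + 1, by positivity, by rw [← h0]; simp [hδ.le], ?_⟩
    rw [← mul_pow]
    calc _ ≤ (Real.sqrt δ) ^ 2 := by
          refine pow_le_pow_left₀ (by positivity) ?_ 2
          rw [inv_mul_le_iff₀ (by positivity), add_mul, div_mul_cancel₀ _ hs0.ne']
          linarith
      _ = δ := hsq
  · refine ⟨Real.sqrt δ / x, by positivity, ?_, ?_⟩
    · rw [div_pow, hsq, div_mul_cancel₀ _ (by positivity)]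
    · rw [inv_div, div_pow, hsq, div_mul_eq_mul_div, div_le_iff₀ hδ, ← mul_pow, ← sq]
      exact pow_le_pow_left₀ (by positivity) hxy.le 2

/-- `w` has a representation of row-column (or column-row) size at most `δ`. -/
def HasRep {A B : Type*} [NonUnitalCStarAlgebra A] [NonUnitalCStarAlgebra B]
    (σ : Bool) (δ : ℝ) (w : A ⊗[ℂ] B) : Prop :=
  ∃ (n : ℕ) (a : Fin n → A) (b : Fin n → B), w = ∑ i, a i ⊗ₜ[ℂ] b i ∧
    ‖sqs σ a‖ ≤ δ ∧ ‖sqs (!σ) b‖ ≤ δ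

lemma HasRep.of_fintype {A B : Type*} [NonUnitalCStarAlgebra A] [NonUnitalCStarAlgebra B]
    {σ : Bool} {δ : ℝ} {w : A ⊗[ℂ] B} {n : Type*} [Fintype n] (a : n → A) (b : n → B)
    (hw : w = ∑ i, a i ⊗ₜ[ℂ] b i) (h1 : ‖sqs σ a‖ ≤ δ) (h2 : ‖sqs (!σ) b‖ ≤ δ) : HasRep σ δ w := by
  let e := Fintype.equivFin n
  refine ⟨Fintype.card n, a ∘ e.symm, b ∘ e.symm, ?_, ?_, ?_⟩
  · rw [hw]; exact (e.symm.sum_comp (fun i => a i ⊗ₜ[ℂ] b i)).symm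
  · refine le_trans (le_of_eq ?_) h1
    exact congrArg _ (e.symm.sum_comp (fun i => qf σ (a i) (a i)))
  · refine le_trans (le_of_eq ?_) h2
    exact congrArg _ (e.symm.sum_comp (fun i => qf (!σ) (b i) (b i)))

lemma HasRep.of_balance {A B : Type*} [NonUnitalCStarAlgebra A] [NonUnitalCStarAlgebra B]
    [PartialOrder A] [StarOrderedRing A] [PartialOrder B] [StarOrderedRing B]
    {σ : Bool} {δ : ℝ} {w : A ⊗[ℂ] B} {n : Type*} [Fintype n] (a : n → A) (b : n → B) (x y : ℝ)
    (hw : w = ∑ i, a i ⊗ₜ[ℂ] b i) (h1 : ‖sqs σ a‖ ≤ x ^ 2) (h2 : ‖sqs (!σ) b‖ ≤ y ^ 2)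
    (hx : 0 ≤ x) (hy : 0 ≤ y) (hxy : x * y < δ) : HasRep σ δ w := by
  obtain ⟨s, hs, e1, e2⟩ := balance x y δ hx hy hxy
  refine HasRep.of_fintype (fun i => (s : ℂ) • a i) (fun i => ((s⁻¹ : ℝ) : ℂ) • b i) ?_ ?_ ?_
  · rw [hw]
    refine Finset.sum_congr rfl fun i _ => ?_
    rw [TensorProduct.smul_tmul_smul, ← Complex.ofReal_mul, mul_inv_cancel₀ hs.ne']; simp
  · rw [sqs_smul]; exact le_trans (by gcongr) e1
  · rw [sqs_smul]; exact le_trans (by gcongr) e2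

lemma HasRep.symm {A B : Type*} [NonUnitalCStarAlgebra A] [NonUnitalCStarAlgebra B]
    {σ : Bool} {δ : ℝ} {w : A ⊗[ℂ] B} (h : HasRep σ δ w) :
    HasRep (!σ) δ (TensorProduct.comm ℂ A B w) := by
  obtain ⟨n, a, b, h1, h2, h3⟩ := h
  refine ⟨n, b, a, ?_, h3, by simpa using h2⟩
  rw [h1]; simp

section main
variable {A B : Type u} [NonUnitalCStarAlgebra A] [NonUnitalCStarAlgebra B]
  [PartialOrder A] [StarOrderedRing A] [PartialOrder B] [StarOrderedRing B]
    (NA : ∀ p : ℕ, Matrix (Fin p) (Fin p) A → ℝ)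
    (NB : ∀ q : ℕ, Matrix (Fin q) (Fin q) B → ℝ)

lemma os_le (hNA : ∀ p, IsCStarNorm (NA p)) (hNB : ∀ q, IsCStarNorm (NB q)) (u : A ⊗[ℂ] B) (p q : ℕ) (α : Fin p × Fin q → ℂ) (v : Matrix (Fin p) (Fin p) A)
      (w : Matrix (Fin q) (Fin q) B) (β : Fin p × Fin q → ℂ)
      (hu : u = ∑ ik : Fin p × Fin q, ∑ jl : Fin p × Fin q,
            (α ik * β jl) • (v ik.1 jl.1 ⊗ₜ[ℂ] w ik.2 jl.2)) :
      osProjNorm NA NB u ≤ Real.sqrt (∑ ik, ‖α ik‖ ^ 2) * NA p v * NB q w *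
            Real.sqrt (∑ jl, ‖β jl‖ ^ 2) := by
  refine csInf_le ⟨0, ?_⟩ ⟨p, q, α, v, w, β, hu, rfl⟩
  rintro r ⟨p, q, α, v, w, β, -, rfl⟩
  rw [matnorm_eq _ (hNA p), matnorm_eq _ (hNB q)]
  positivity

lemma os_exists (hNA : ∀ p, IsCStarNorm (NA p)) (hNB : ∀ q, IsCStarNorm (NB q)) (u : A ⊗[ℂ] B) (δ : ℝ) (h : osProjNorm NA NB u < δ) :
    ∃ (p q : ℕ) (α : Fin p × Fin q → ℂ) (v : Matrix (Fin p) (Fin p) A)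
      (w : Matrix (Fin q) (Fin q) B) (β : Fin p × Fin q → ℂ),
      u = ∑ ik : Fin p × Fin q, ∑ jl : Fin p × Fin q,
            (α ik * β jl) • (v ik.1 jl.1 ⊗ₜ[ℂ] w ik.2 jl.2) ∧
       Real.sqrt (∑ ik, ‖α ik‖ ^ 2) * ‖CStarMatrix.ofMatrix v‖ * ‖CStarMatrix.ofMatrix w‖ *
            Real.sqrt (∑ jl, ‖β jl‖ ^ 2) < δ := by
  obtain ⟨r, ⟨p, q, α, v, w, β, hu, rfl⟩, hr⟩ := exists_lt_of_csInf_lt (by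
    obtain ⟨n, a, b, hab⟩ : ∃ (n : ℕ) (a : Fin n → A) (b : Fin n → B), u = ∑ i, a i ⊗ₜ[ℂ] b i := by
      obtain ⟨S, hS⟩ := TensorProduct.exists_finset u
      refine ⟨S.card, fun i => (S.equivFin.symm i).1.1, fun i => (S.equivFin.symm i).1.2, ?_⟩
      rw [hS, ← Finset.sum_coe_sort]
      exact (S.equivFin.symm.sum_comp (fun i : S => i.1.1 ⊗ₜ[ℂ] i.1.2)).symm
    refine ⟨_, n, n, fun ik => if ik.1 = ik.2 then 1 else 0, Matrix.diagonal a, Matrix.diagonal b,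
      fun ik => if ik.1 = ik.2 then 1 else 0, ?_, rfl⟩
    rw [hab]
    simp [Fintype.sum_prod_type, Matrix.diagonal_apply, TensorProduct.ite_tmul, TensorProduct.tmul_ite, ite_and]) h
  rw [matnorm_eq _ (hNA p), matnorm_eq _ (hNB q)] at hr
  exact ⟨p, q, α, v, w, β, hu, hr⟩

theorem hyp1 (hNA : ∀ p, IsCStarNorm (NA p)) (hNB : ∀ q, IsCStarNorm (NB q)) (u : A ⊗[ℂ] B) (δ : ℝ) (h : osProjNorm NA NB u < δ) (σ : Bool) : HasRep σ δ u := by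
  obtain ⟨p, q, α, v, w, β, hu, hr⟩ := os_exists NA NB hNA hNB u δ h
  have s1 : ∀ (f : Fin p × Fin q → ℂ) (r : ℝ), (Real.sqrt (∑ ik, ‖f ik‖ ^ 2) * r) ^ 2 = (∑ ik, ‖f ik‖ ^ 2) * r ^ 2 := by
    intro f r
    rw [mul_pow, Real.sq_sqrt (by positivity)]
  have split : ∀ (f : Fin p × Fin q → ℂ) (r : ℝ), (∑ ik, ‖f ik‖ ^ 2) * r ^ 2 = 
      ∑ k, (∑ i, ‖f (i, k)‖ ^ 2) * r ^ 2 := by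
    intro f r; rw [Fintype.sum_prod_type_right, Finset.sum_mul]
  have split' : ∀ (f : Fin p × Fin q → ℂ) (r : ℝ), (∑ ik, ‖f ik‖ ^ 2) * r ^ 2 = 
      ∑ i, (∑ k, ‖f (i, k)‖ ^ 2) * r ^ 2 := by
    intro f r; rw [Fintype.sum_prod_type, Finset.sum_mul]
  cases σ
  · refine HasRep.of_balance (n := Fin p × Fin q) (fun jk => ∑ i, α (i, jk.2) • v i jk.1)
      (fun jk => ∑ l, β (jk.1, l) • w jk.2 l) (Real.sqrt (∑ ik, ‖α ik‖ ^ 2) * ‖CStarMatrix.ofMatrix v‖)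
      (Real.sqrt (∑ ik, ‖β ik‖ ^ 2) * ‖CStarMatrix.ofMatrix w‖) ?_ ?_ ?_ (by positivity) (by positivity)
      (by nlinarith [hr])
    · rw [hu]
      simp only [TensorProduct.sum_tmul, TensorProduct.tmul_sum, TensorProduct.smul_tmul_smul, Fintype.sum_prod_type]
      refine (Finset.sum_congr rfl fun i _ => Finset.sum_comm).trans ?_
      refine Finset.sum_comm.trans (Finset.sum_congr rfl fun j _ => ?_)
      refine Finset.sum_comm.trans (Finset.sum_congr rfl fun k _ => ?_)
      exact Finset.sum_comm
    · rw [s1, split]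
      exact sqs_prod_le _ _ _ fun k => row_bound (CStarMatrix.ofMatrix v) (fun i => α (i, k))
    · rw [s1, split']
      exact sqs_prod_le' _ _ _ fun k => col_bound (CStarMatrix.ofMatrix w) (fun i => β (k, i))
  · refine HasRep.of_balance (n := Fin p × Fin q) (fun il => ∑ j, β (j, il.2) • v il.1 j)
      (fun il => ∑ k, α (il.1, k) • w k il.2) (Real.sqrt (∑ ik, ‖β ik‖ ^ 2) * ‖CStarMatrix.ofMatrix v‖)
      (Real.sqrt (∑ ik, ‖α ik‖ ^ 2) * ‖CStarMatrix.ofMatrix w‖) ?_ ?_ ?_ (by positivity) (by positivity)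
      (by nlinarith [hr])
    · rw [hu]
      simp only [TensorProduct.sum_tmul, TensorProduct.tmul_sum, TensorProduct.smul_tmul_smul, Fintype.sum_prod_type]
      refine Finset.sum_congr rfl fun i _ => ?_
      refine (Finset.sum_congr rfl fun k _ => Finset.sum_comm).trans ?_
      refine Finset.sum_comm.trans ?_
      refine Finset.sum_congr rfl fun l _ => Finset.sum_congr rfl fun k _ => Finset.sum_congr rfl fun j _ => ?_
      rw [mul_comm]
    · rw [s1, split]
      exact sqs_prod_le _ _ _ fun k => col_bound (CStarMatrix.ofMatrix v) (fun i => β (i, k))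
    · rw [s1, split']
      exact sqs_prod_le' _ _ _ fun k => row_bound (CStarMatrix.ofMatrix w) (fun i => α (k, i))

theorem hyp2 (hNA : ∀ p, IsCStarNorm (NA p)) (hNB : ∀ q, IsCStarNorm (NB q)) {X : Type u} [NormedAddCommGroup X] [NormedSpace ℂ X] (ι : A ⊗[ℂ] B →ₗ[ℂ] X)
    (hι : ∀ u, ‖ι u‖ = osProjNorm NA NB u) (δ : ℝ) (hδ : 0 < δ) (w : A ⊗[ℂ] B)
    (h1 : HasRep false δ w) (h2 : HasRep true δ w) : ‖ι w‖ ≤ 1920 * δ := by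
  obtain ⟨ℓ, hℓ, hℓw⟩ := exists_dual_vector'' ℂ (ι w)
  obtain ⟨n, a, b, e1, e2, e3⟩ := h1
  obtain ⟨m, c, d, f1, f2, f3⟩ := h2
  have key := hyp2_core (ℓ.toLinearMap ∘ₗ ι) ?_ δ hδ a b c d (e1.symm.trans f1) e2 e3 f2 f3
  · rw [← e1] at key
    have : (ℓ.toLinearMap ∘ₗ ι) w = (‖ι w‖ : ℂ) := hℓw
    rw [this, Complex.norm_real, norm_norm] at key
    exact key
  · intro d ρ hρ hρ1 S T
    have hle := os_le NA NB hNA hNB _ d d (fun ik => if ik.1 = ik.2 then ((Real.sqrt (ρ ik.1) : ℝ) : ℂ) else 0) (CStarMatrix.ofMatrix.symm S) (CStarMatrix.ofMatrix.symm T)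
      (fun ik => if ik.1 = ik.2 then ((Real.sqrt (ρ ik.1) : ℝ) : ℂ) else 0) rfl
    have e : (∑ ik : Fin d × Fin d, ‖if ik.1 = ik.2 then ((Real.sqrt (ρ ik.1) : ℝ) : ℂ) else 0‖ ^ 2) = ∑ s, ρ s := by
      rw [Fintype.sum_prod_type]
      refine Finset.sum_congr rfl fun s _ => ?_
      rw [Finset.sum_eq_single s]
      · simp [abs_of_nonneg (Real.sqrt_nonneg _), Real.sq_sqrt (hρ s)]
      · intro k _ hk; simp [Ne.symm hk]
      · simp
    rw [e, matnorm_eq _ (hNA d), matnorm_eq _ (hNB d)] at hle; simp only [Equiv.apply_symm_apply] at hle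
    have e4 : (∑ ik : Fin d × Fin d, ∑ jl : Fin d × Fin d,
            ((if ik.1 = ik.2 then ((Real.sqrt (ρ ik.1) : ℝ) : ℂ) else 0) * (if jl.1 = jl.2 then ((Real.sqrt (ρ jl.1) : ℝ) : ℂ) else 0)) • (S ik.1 jl.1 ⊗ₜ[ℂ] T ik.2 jl.2)) = 
          ∑ s, ∑ s', ((Real.sqrt (ρ s) * Real.sqrt (ρ s') : ℝ) : ℂ) • (S s s' ⊗ₜ[ℂ] T s s') := by
      simp [Fintype.sum_prod_type]
    rw [← e4]
    refine (ℓ.le_opNorm _).trans ?_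
    have hb : ‖ℓ‖ * ‖ι (∑ ik : Fin d × Fin d, ∑ jl : Fin d × Fin d,
            ((if ik.1 = ik.2 then ((Real.sqrt (ρ ik.1) : ℝ) : ℂ) else 0) * (if jl.1 = jl.2 then ((Real.sqrt (ρ jl.1) : ℝ) : ℂ) else 0)) • (S ik.1 jl.1 ⊗ₜ[ℂ] T ik.2 jl.2))‖ ≤ 
            1 * (Real.sqrt (∑ s, ρ s) * ‖S‖ * ‖T‖ * Real.sqrt (∑ s, ρ s)) := by
      refine mul_le_mul hℓ ?_ (norm_nonneg _) zero_le_one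
      rw [hι]; exact hle
    refine hb.trans ?_
    have hs : 0 ≤ ∑ s, ρ s := Finset.sum_nonneg fun s _ => hρ s
    calc _ = (Real.sqrt (∑ s, ρ s) * Real.sqrt (∑ s, ρ s)) * (‖S‖ * ‖T‖) := by
          change 1 * (Real.sqrt (∑ s, ρ s) * ‖S‖ * ‖T‖ * Real.sqrt (∑ s, ρ s)) = _
          ring
      _ ≤ _ := by
          rw [Real.mul_self_sqrt hs]
          exact mul_le_of_le_one_left (by positivity) hρ1

end main
end P5

section P6

section
variable {A : Type*} [NonUnitalCStarAlgebra A] [PartialOrder A] [StarOrderedRing A]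

/-- row or column norm -/
def rn {n : Type*} [Fintype n] (σ : Bool) (a : n → A) : ℝ := Real.sqrt ‖sqs σ a‖

lemma rn_nonneg {n : Type*} [Fintype n] (σ : Bool) (a : n → A) : 0 ≤ rn σ a := Real.sqrt_nonneg _

lemma rn_sq {n : Type*} [Fintype n] (σ : Bool) (a : n → A) : rn σ a ^ 2 = ‖sqs σ a‖ :=
  Real.sq_sqrt (norm_nonneg _)

lemma rn_true {n : Type*} [Fintype n] (a : n → A) : rn true a = rn false (star a) := by
  simp [rn, sqs, qf]

open WithCStarModule in
lemma rn_false {n : Type*} [Fintype n] (a : n → A) :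
    rn false a = ‖((WithCStarModule.equiv A (n → A)).symm a : C⋆ᵐᵒᵈ(A, n → A))‖ := by
  rw [pi_norm]; rfl

open WithCStarModule in
lemma rn_add {n : Type*} [Fintype n] (σ : Bool) (a b : n → A) : rn σ (a + b) ≤ rn σ a + rn σ b := by
  have h : ∀ a b : n → A, rn false (a + b) ≤ rn false a + rn false b := by
    intro a b
    simp only [rn_false]
    exact norm_add_le _ _
  cases σ
  · exact h a b
  · simp only [rn_true, star_add]; exact h _ _

lemma rn_zero {n : Type*} [Fintype n] (σ : Bool) : rn σ (0 : n → A) = 0 := by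
  simp [rn, sqs, qf_zero]

lemma rn_sum {n ι : Type*} [Fintype n] (σ : Bool) (f : ι → n → A) (F : Finset ι) :
    rn σ (∑ k ∈ F, f k) ≤ ∑ k ∈ F, rn σ (f k) := by
  classical
  induction F using Finset.induction_on with
  | empty => simp [rn_zero]
  | insert a s ha ih =>
    rw [Finset.sum_insert ha, Finset.sum_insert ha]
    exact (rn_add _ _ _).trans (by gcongr)

lemma continuous_qf (σ : Bool) : Continuous (fun a : A => qf σ a a) := by
  cases σ
  · exact continuous_id.mul continuous_id.star
  · exact continuous_id.star.mul continuous_id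

lemma continuous_rn {n : Type*} [Fintype n] (σ : Bool) : Continuous (fun a : n → A => rn σ a) := by
  refine Real.continuous_sqrt.comp (continuous_norm.comp ?_)
  exact continuous_finsetSum _ fun i _ => (continuous_qf σ).comp (continuous_apply i)

open scoped ComplexOrder MatrixOrder Matrix.Norms.L2Operator in
lemma psd_factor {n : Type*} [Fintype n] [DecidableEq n] (N : Matrix n n ℂ) (h : N.PosSemidef) :
    ∃ T : Matrix n n ℂ, N = T.conjTranspose * T :=
  CStarAlgebra.nonneg_iff_eq_star_mul_self.mp h.nonneg

open scoped ComplexOrder in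
lemma QF_le_of_psd {n : Type*} [Fintype n] [DecidableEq n] (σ : Bool)
    (N : Matrix n n ℂ) (h : (1 - N).PosSemidef) (a : n → A) : QF σ N a ≤ sqs σ a := by
  obtain ⟨T, hT⟩ := psd_factor _ h
  have h4 := sq_nonneg' σ (mact T a)
  rw [sqs_mact, ← hT] at h4
  have : sqs σ a = QF σ N a + QF σ (1 - N) a := by
    rw [← QF_add, ← QF_one]; simp
  rw [this]
  exact le_add_of_nonneg_right h4

open scoped ComplexOrder in
lemma rn_contr {H : Type*} [NormedAddCommGroup H] [InnerProductSpace ℂ H]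
    {n m : Type*} [Fintype n] [Fintype m] (σ : Bool) (e : n → H) (he : Orthonormal ℂ e) (g : m → H)
    (hg : Orthonormal ℂ g) (Q : H →ₗ[ℂ] H) (hQ : ∀ x, ‖Q x‖ ≤ ‖x‖) (hQs : ∀ x y, inner ℂ (Q x) y = inner ℂ x (Q y))
    (a : n → A) : rn σ (fun s => ∑ i, (inner ℂ (e i) (Q (g s)) : ℂ) • a i) ≤ rn σ a := by
  classical
  refine Real.sqrt_le_sqrt ?_
  refine CStarAlgebra.norm_le_norm_of_nonneg_of_le (sq_nonneg' _ _) ?_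
  set T : Matrix m n ℂ := fun s i => inner ℂ (e i) (Q (g s)) with hT
  change sqs σ (mact T a) ≤ sqs σ a
  rw [sqs_mact]
  apply QF_le_of_psd
  refine Matrix.PosSemidef.of_dotProduct_mulVec_nonneg ?_ ?_
  · rw [Matrix.IsHermitian, Matrix.conjTranspose_sub, Matrix.conjTranspose_mul]; simp
  · intro x
    set w : H := ∑ i, star (x i) • e i with hw
    have hw2 : ‖w‖ ^ 2 = ∑ i, ‖x i‖ ^ 2 := by
      have h0 := he.inner_sum (fun i => star (x i)) (fun i => star (x i)) Finset.univ
      rw [← hw, inner_self_eq_norm_sq_to_K] at h0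
      have : ((‖w‖ ^ 2 : ℝ) : ℂ) = ((∑ i, ‖x i‖ ^ 2 : ℝ) : ℂ) := by
        push_cast
        refine h0.trans (Finset.sum_congr rfl fun i _ => ?_)
        simp only [RCLike.star_def, Complex.conj_conj]
        exact Complex.mul_conj' _
      exact_mod_cast this
    have h1 : ∀ s, T.mulVec x s = inner ℂ w (Q (g s)) := by
      intro s
      rw [hw, sum_inner]
      simp only [Matrix.mulVec, dotProduct, hT, inner_smul_left]
      refine Finset.sum_congr rfl fun i _ => ?_
      simp [mul_comm]
    have h2 : ∑ s, ‖T.mulVec x s‖ ^ 2 ≤ ‖w‖ ^ 2 := by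
      have h5 := hg.sum_inner_products_le (Q w) (s := Finset.univ)
      refine le_trans (le_of_eq (Finset.sum_congr rfl fun s _ => ?_)) (h5.trans
        (pow_le_pow_left₀ (norm_nonneg _) (hQ w) 2))
      rw [h1, ← hQs, norm_inner_symm]
    have h3 : star x ⬝ᵥ (1 - T.conjTranspose * T).mulVec x = ((∑ i, ‖x i‖ ^ 2 - ∑ s, ‖T.mulVec x s‖ ^ 2 : ℝ) : ℂ) := by
      rw [Matrix.sub_mulVec, dotProduct_sub, Matrix.one_mulVec, ← Matrix.mulVec_mulVec,
        Matrix.dotProduct_mulVec, ← Matrix.star_mulVec]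
      push_cast
      simp only [dotProduct, Pi.star_apply]
      congr 1 <;> exact Finset.sum_congr rfl fun i _ => Complex.conj_mul' _
    rw [h3]
    rw [Complex.zero_le_real]
    rw [← hw2]; linarith

lemma norm_qf (σ : Bool) (a : A) : ‖qf σ a a‖ = ‖a‖ ^ 2 := by
  cases σ
  · simp [qf, CStarRing.norm_self_mul_star, sq]
  · simp [qf, CStarRing.norm_star_mul_self, sq]

lemma norm_le_rn {n : Type*} [Fintype n] (σ : Bool) (a : n → A) (i : n) : ‖a i‖ ≤ rn σ a := by
  refine Real.le_sqrt_of_sq_le ?_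
  rw [← norm_qf σ]
  refine CStarAlgebra.norm_le_norm_of_nonneg_of_le (qf_self_nonneg _ _) ?_
  exact Finset.single_le_sum (f := fun i => qf σ (a i) (a i)) (fun i _ => qf_self_nonneg σ _) (Finset.mem_univ i)

lemma norm_comb_le {n : ℕ} (σ : Bool) (c : Fin n → ℂ) (a : Fin n → A) :
    ‖∑ i, c i • a i‖ ≤ Real.sqrt (∑ i, ‖c i‖ ^ 2) * rn σ a := by
  rcases n with _ | n
  · simp
  by_cases hc : c = 0
  · simp [hc]
  obtain ⟨U, r, h1, h2, h3⟩ := exists_unitary_row c hc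
  have e0 : mact U a 0 = r • ∑ i, c i • a i := by
    simp only [mact, h3, mul_smul, Finset.smul_sum]
  have e1 : ‖r‖ * ‖∑ i, c i • a i‖ ≤ rn σ a := by
    have := norm_le_rn σ (mact U a) 0
    rw [e0, norm_smul, rn, sqs_mact_unitary _ _ h2] at this
    exact this
  have e2 : ‖r‖ ^ 2 * (∑ i, ‖c i‖ ^ 2) = 1 := by
    have h4 : (U * U.conjTranspose) 0 0 = 1 := by rw [h1]; simp
    rw [Matrix.mul_apply] at h4
    have : ((‖r‖ ^ 2 * (∑ i, ‖c i‖ ^ 2) : ℝ) : ℂ) = 1 := by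
      rw [← h4, Finset.mul_sum]; push_cast
      refine Finset.sum_congr rfl fun i _ => ?_
      rw [Matrix.conjTranspose_apply, h3, ← mul_pow, ← Complex.ofReal_mul, ← norm_mul]
      exact (Complex.mul_conj' _).symm
    exact_mod_cast this
  have e3 : Real.sqrt (∑ i, ‖c i‖ ^ 2) * ‖r‖ = 1 := by
    rw [← Real.sqrt_one, ← e2, mul_comm (‖r‖ ^ 2), Real.sqrt_mul (by positivity), Real.sqrt_sq (norm_nonneg _)]
  calc ‖∑ i, c i • a i‖ = Real.sqrt (∑ i, ‖c i‖ ^ 2) * (‖r‖ * ‖∑ i, c i • a i‖) := by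
        rw [← mul_assoc, e3, one_mul]
    _ ≤ _ := by gcongr

lemma dual_l2_le {n : ℕ} (σ : Bool) (ψ : A →L[ℂ] ℂ) (a : Fin n → A) :
    Real.sqrt (∑ i, ‖ψ (a i)‖ ^ 2) ≤ ‖ψ‖ * rn σ a := by
  set S := Real.sqrt (∑ i, ‖ψ (a i)‖ ^ 2) with hS
  have hSS : S ^ 2 = ∑ i, ‖ψ (a i)‖ ^ 2 := Real.sq_sqrt (by positivity)
  have h1 := norm_comb_le σ (fun i => star (ψ (a i))) a
  have h2 : ψ (∑ i, star (ψ (a i)) • a i) = ((S ^ 2 : ℝ) : ℂ) := by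
    rw [hSS, map_sum]; push_cast
    refine Finset.sum_congr rfl fun i _ => ?_
    rw [map_smul, smul_eq_mul]
    exact Complex.conj_mul' _
  have h3 := ψ.le_opNorm (∑ i, star (ψ (a i)) • a i)
  rw [h2, Complex.norm_real, Real.norm_of_nonneg (sq_nonneg S)] at h3
  simp only [norm_star] at h1
  rw [← hS] at h1
  by_cases h0 : S = 0
  · rw [h0]; exact mul_nonneg (norm_nonneg _) (rn_nonneg _ _)
  · have hpos : 0 < S := lt_of_le_of_ne (Real.sqrt_nonneg _) (Ne.symm h0)
    have h4 : S * S ≤ S * (‖ψ‖ * rn σ a) := by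
      calc S * S = S ^ 2 := by ring
        _ ≤ ‖ψ‖ * (S * rn σ a) := h3.trans (by gcongr)
        _ = _ := by ring
    exact le_of_mul_le_mul_left h4 hpos

end

lemma HasRep.add {A B : Type*} [NonUnitalCStarAlgebra A] [NonUnitalCStarAlgebra B]
    {σ : Bool} {δ δ' : ℝ} {w w' : A ⊗[ℂ] B} (h : HasRep σ δ w) (h' : HasRep σ δ' w') :
    HasRep σ (δ + δ') (w + w') := by
  obtain ⟨n, a, b, h1, h2, h3⟩ := h
  obtain ⟨m, c, d, f1, f2, f3⟩ := h'
  refine HasRep.of_fintype (Sum.elim a c) (Sum.elim b d) ?_ ?_ ?_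
  · rw [h1, f1]; simp
  · simp only [sqs, Fintype.sum_sum_type, Sum.elim_inl, Sum.elim_inr]
    exact (norm_add_le _ _).trans (add_le_add h2 f2)
  · simp only [sqs, Fintype.sum_sum_type, Sum.elim_inl, Sum.elim_inr]
    exact (norm_add_le _ _).trans (add_le_add h3 f3)

lemma HasRep.mono {A B : Type*} [NonUnitalCStarAlgebra A] [NonUnitalCStarAlgebra B]
    {σ : Bool} {δ δ' : ℝ} {w : A ⊗[ℂ] B} (h : HasRep σ δ w) (hd : δ ≤ δ') : HasRep σ δ' w := by
  obtain ⟨n, a, b, h1, h2, h3⟩ := h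
  exact ⟨n, a, b, h1, h2.trans hd, h3.trans hd⟩

end P6

section P7

lemma sqs_sigma_le {A : Type*} [NonUnitalCStarAlgebra A] [PartialOrder A] [StarOrderedRing A]
    {n : ℕ → ℕ} (σ : Bool) (a : ∀ k, Fin (n k) → A) (s : ℕ → ℝ) (hs : Summable s)
    (ha : ∀ k, rn σ (a k) ≤ s k) (N : ℕ) :
    ‖sqs σ (fun p : Σ k : Fin N, Fin (n k) => a p.1 p.2)‖ ≤ (∑' k, s k) ^ 2 := by
  have hs0 : ∀ k, 0 ≤ s k := fun k => (rn_nonneg _ _).trans (ha k)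
  have h1 : sqs σ (fun p : Σ k : Fin N, Fin (n k) => a p.1 p.2) = ∑ k : Fin N, sqs σ (a k) := by
    simp only [sqs, Fintype.sum_sigma]
  rw [h1]
  calc _ ≤ ∑ k : Fin N, s k ^ 2 := by
        refine (norm_sum_le _ _).trans (Finset.sum_le_sum fun k _ => ?_)
        rw [← rn_sq]; exact pow_le_pow_left₀ (rn_nonneg _ _) (ha k) 2
    _ = ∑ k ∈ Finset.range N, s k ^ 2 := Fin.sum_univ_eq_sum_range (fun k => s k ^ 2) N
    _ ≤ (∑ k ∈ Finset.range N, s k) ^ 2 := Finset.sum_sq_le_sq_sum_of_nonneg fun k _ => hs0 k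
    _ ≤ _ := pow_le_pow_left₀ (Finset.sum_nonneg fun k _ => hs0 k) (hs.sum_le_tsum _ fun k _ => hs0 k) 2

lemma slice_core {A B H : Type*} [NonUnitalCStarAlgebra A] [NonUnitalCStarAlgebra B]
    [PartialOrder A] [StarOrderedRing A] [PartialOrder B] [StarOrderedRing B]
    [NormedAddCommGroup H] [InnerProductSpace ℂ H] [CompleteSpace H]
    {n : ℕ → ℕ} (e : (Σ k, Fin (n k)) → H) (he : Orthonormal ℂ e)
    (σ : Bool) (a : ∀ k, Fin (n k) → A) (b : ∀ k, Fin (n k) → B) (s : ℕ → ℝ) (hs : Summable s)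
    (ha : ∀ k, rn σ (a k) ≤ s k) (hb : ∀ k, rn (!σ) (b k) ≤ s k)
    (I : Submodule ℂ A) (hI : IsClosed (I : Set A))
    (hsl : ∀ ψ : B →L[ℂ] ℂ, ∑' k, ∑ j, ψ (b k j) • a k j ∈ I) (ε : ℝ) (hε : 0 < ε) :
    ∃ N0, ∀ N ≥ N0, ∃ y ∈ Submodule.span ℂ (Set.image2 (fun a b => a ⊗ₜ[ℂ] b) (I : Set A) (Set.univ : Set B)),
      HasRep σ ε (∑ k ∈ Finset.range N, ∑ j, a k j ⊗ₜ[ℂ] b k j - y) := by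
  have hs0 : ∀ k, 0 ≤ s k := fun k => (rn_nonneg _ _).trans (ha k)
  have hek : ∀ k, Orthonormal ℂ (fun j : Fin (n k) => e ⟨k, j⟩) := fun k =>
    he.comp (fun j : Fin (n k) => (⟨k, j⟩ : Σ k, Fin (n k)))
      (fun i j h => by simpa using h)
  have bessel : ∀ k (ξ : H), Real.sqrt (∑ j : Fin (n k), ‖(inner ℂ (e ⟨k, j⟩) ξ : ℂ)‖ ^ 2) ≤ ‖ξ‖ := by
    intro k ξ
    rw [Real.sqrt_le_left (norm_nonneg _)]
    exact (hek k).sum_inner_products_le ξ (s := Finset.univ)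
  -- the operator
  let T : ℕ → H →L[ℂ] A := fun k => ∑ i : Fin (n k), (innerSL ℂ (e ⟨k, i⟩)).smulRight (a k i)
  have hT : ∀ k ξ, T k ξ = ∑ i : Fin (n k), (inner ℂ (e ⟨k, i⟩) ξ : ℂ) • a k i := by
    intro k ξ; simp [T, ContinuousLinearMap.sum_apply]
  have hTn : ∀ k, ‖T k‖ ≤ s k := by
    intro k
    refine ContinuousLinearMap.opNorm_le_bound _ (hs0 k) fun ξ => ?_
    rw [hT, mul_comm]
    refine (norm_comb_le σ _ _).trans ?_
    exact mul_le_mul (bessel k ξ) (ha k) (rn_nonneg _ _) (norm_nonneg _)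
  have hTs : Summable T := Summable.of_norm_bounded hs hTn
  let TT : H →L[ℂ] A := ∑' k, T k
  have hTT : ∀ ξ, HasSum (fun k => T k ξ) (TT ξ) := fun ξ =>
    hTs.hasSum.mapL (ContinuousLinearMap.apply ℂ A ξ)
  have hTe : ∀ k j, TT (e ⟨k, j⟩) = a k j := by
    intro k j
    refine (hTT _).unique ?_
    have hd : ∀ l, T l (e ⟨k, j⟩) = if l = k then a k j else 0 := by
      intro l
      rw [hT]
      classical
      split_ifs with h
      · subst h
        rw [Finset.sum_eq_single j]
        · rw [(orthonormal_iff_ite.1 he)]; simp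
        · intro i _ hi
          rw [(orthonormal_iff_ite.1 he)]; simp [hi]
        · simp
      · refine Finset.sum_eq_zero fun i _ => ?_
        rw [(orthonormal_iff_ite.1 he), if_neg]; · simp
        intro h'; exact h (congrArg Sigma.fst h')
    simp only [hd]
    exact hasSum_ite_eq k (a k j)
  let W : Submodule ℂ H := I.comap (TT : H →ₗ[ℂ] A)
  have hW : IsClosed (W : Set H) := hI.preimage TT.continuous
  haveI : CompleteSpace W := hW.completeSpace_coe
  let Q : H →L[ℂ] H := Wᗮ.starProjection
  have hQ : ∀ x, ‖Q x‖ ≤ ‖x‖ := fun x => Wᗮ.norm_starProjection_apply_le x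
  have hQs : ∀ x y, inner ℂ (Q x) y = inner ℂ x (Q y) := fun x y =>
    Wᗮ.inner_starProjection_left_eq_right x y
  have hQP : ∀ x, x = W.starProjection x + Q x := by
    intro x; simp [Q, Submodule.starProjection_orthogonal']
  have hen : ∀ p, ‖e p‖ = 1 := he.1
  -- coefficients
  have hc : ∀ p k, Real.sqrt (∑ j : Fin (n k), ‖(inner ℂ (e p) (Q (e ⟨k, j⟩)) : ℂ)‖ ^ 2) ≤ 1 := by
    intro p k
    refine le_trans (le_of_eq ?_) ((bessel k (Q (e p))).trans ((hQ _).trans (hen p).le))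
    congr 1
    refine Finset.sum_congr rfl fun j _ => ?_
    rw [← hQs, norm_inner_symm]
  have hDs : ∀ p, Summable (fun k => ∑ j : Fin (n k), (inner ℂ (e p) (Q (e ⟨k, j⟩)) : ℂ) • b k j) := by
    intro p
    refine Summable.of_norm_bounded hs fun k => ?_
    refine (norm_comb_le (!σ) _ _).trans ?_
    calc _ ≤ 1 * s k := mul_le_mul (hc p k) (hb k) (rn_nonneg _ _) zero_le_one
      _ = s k := one_mul _
  have hD0 : ∀ p, ∑' k, ∑ j : Fin (n k), (inner ℂ (e p) (Q (e ⟨k, j⟩)) : ℂ) • b k j = 0 := by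
    intro p
    refine SeparatingDual.eq_zero_of_forall_dual_eq_zero (R := ℂ) fun ψ => ?_
    have hξs : Summable (fun k => ∑ j : Fin (n k), ψ (b k j) • e ⟨k, j⟩) := by
      refine Summable.of_norm_bounded (hs.mul_left ‖ψ‖) fun k => ?_
      have h1 := dual_l2_le (!σ) ψ (b k)
      refine le_trans (le_trans (le_of_eq ?_) h1) (by gcongr; exact hb k)
      rw [← Real.sqrt_sq (norm_nonneg (∑ j : Fin (n k), ψ (b k j) • e ⟨k, j⟩))]
      congr 1
      have h0 := (hek k).inner_sum (fun i => ψ (b k i)) (fun i => ψ (b k i)) Finset.univ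
      rw [inner_self_eq_norm_sq_to_K] at h0
      have : ((‖∑ j : Fin (n k), ψ (b k j) • e ⟨k, j⟩‖ ^ 2 : ℝ) : ℂ) = ((∑ i, ‖ψ (b k i)‖ ^ 2 : ℝ) : ℂ) := by
        push_cast
        refine h0.trans (Finset.sum_congr rfl fun i _ => ?_)
        exact Complex.conj_mul' _
      exact_mod_cast this
    have hξW : (∑' k, ∑ j : Fin (n k), ψ (b k j) • e ⟨k, j⟩) ∈ W := by
      change TT _ ∈ I
      have h1 := (hξs.hasSum.mapL TT).tsum_eq
      simp only [map_sum, map_smul, hTe] at h1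
      rw [← h1]; exact hsl ψ
    have hQ0 : Q (∑' k, ∑ j : Fin (n k), ψ (b k j) • e ⟨k, j⟩) = 0 := by
      rw [Submodule.starProjection_apply_eq_zero_iff]
      exact Submodule.le_orthogonal_orthogonal W hξW
    have h2 := (hξs.hasSum.mapL ((innerSL ℂ (e p)).comp Q)).tsum_eq
    have h3 := ((hDs p).hasSum.mapL ψ).tsum_eq
    rw [← h3]
    simp only [ContinuousLinearMap.comp_apply, hQ0] at h2
    simp only [map_sum, map_smul, innerSL_apply_apply, map_zero, smul_eq_mul] at h2 ⊢
    rw [← h2]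
    refine tsum_congr fun k => Finset.sum_congr rfl fun j _ => mul_comm _ _
  -- choice of M
  set S : ℝ := ∑' k, s k with hS
  have hS0 : 0 ≤ S := tsum_nonneg hs0
  set η : ℝ := ε / (4 * (S + 1)) with hη
  have hη0 : 0 < η := by positivity
  have hSη : S * η < ε / 2 := by
    rw [hη, mul_div_assoc', div_lt_div_iff₀ (by positivity) (by positivity)]
    nlinarith
  obtain ⟨M, hM⟩ := ((tendsto_sum_nat_add s).eventually (gt_mem_nhds hη0)).exists
  -- choice of N
  let d : ℕ → (Σ l : Fin M, Fin (n l)) → B := fun N p =>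
    ∑ k ∈ Finset.range N, ∑ j : Fin (n k), (inner ℂ (e ⟨p.1, p.2⟩) (Q (e ⟨k, j⟩)) : ℂ) • b k j
  have hd : Filter.Tendsto (fun N => rn (!σ) (d N)) Filter.atTop (nhds 0) := by
    have h1 : Filter.Tendsto d Filter.atTop (nhds 0) := by
      rw [tendsto_pi_nhds]
      intro p
      have := (hDs ⟨p.1, p.2⟩).tendsto_sum_tsum_nat
      rw [hD0] at this
      exact this
    have h2 := ((continuous_rn (!σ)).tendsto (0 : (Σ l : Fin M, Fin (n l)) → B)).comp h1
    rwa [rn_zero] at h2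
  obtain ⟨N0, hN0⟩ := Filter.eventually_atTop.1 (hd.eventually (gt_mem_nhds hη0))
  refine ⟨N0, fun N hN => ?_⟩
  refine ⟨∑ k ∈ Finset.range N, ∑ j : Fin (n k), TT (W.starProjection (e ⟨k, j⟩)) ⊗ₜ[ℂ] b k j, ?_, ?_⟩
  · refine Submodule.sum_mem _ fun k _ => Submodule.sum_mem _ fun j _ => Submodule.subset_span ?_
    exact ⟨_, Submodule.starProjection_apply_mem W (e ⟨k, j⟩), _, Set.mem_univ _, rfl⟩
  let τ : (Σ k : Fin N, Fin (n k)) → A := fun p => ∑' l, T (l + M) (Q (e ⟨p.1, p.2⟩))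
  have hTTM : ∀ ξ, TT ξ = ∑ l : Fin M, T l ξ + ∑' l, T (l + M) ξ := by
    intro ξ
    rw [← (hTT ξ).tsum_eq, ← (hTT ξ).summable.sum_add_tsum_nat_add M,
      Fin.sum_univ_eq_sum_range (fun l => T l ξ) M]
  have hsplit : ∑ k ∈ Finset.range N, ∑ j, a k j ⊗ₜ[ℂ] b k j
        - ∑ k ∈ Finset.range N, ∑ j : Fin (n k), TT (W.starProjection (e ⟨k, j⟩)) ⊗ₜ[ℂ] b k j
      = (∑ p : (Σ l : Fin M, Fin (n l)), a p.1 p.2 ⊗ₜ[ℂ] d N p)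
        + ∑ p : (Σ k : Fin N, Fin (n k)), τ p ⊗ₜ[ℂ] b p.1 p.2 := by
    have h1 : ∀ k (j : Fin (n k)), a k j ⊗ₜ[ℂ] b k j - TT (W.starProjection (e ⟨k, j⟩)) ⊗ₜ[ℂ] b k j
        = (∑ l : Fin M, T l (Q (e ⟨k, j⟩))) ⊗ₜ[ℂ] b k j + (∑' l, T (l + M) (Q (e ⟨k, j⟩))) ⊗ₜ[ℂ] b k j := by
      intro k j
      rw [← TensorProduct.add_tmul, ← TensorProduct.sub_tmul, ← hTTM, ← hTe k j]
      congr 1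
      rw [sub_eq_iff_eq_add', ← map_add, ← hQP]
    simp only [← Finset.sum_sub_distrib, h1, Finset.sum_add_distrib]
    congr 1
    · simp only [hT, Fintype.sum_sigma, d, TensorProduct.sum_tmul, TensorProduct.tmul_sum,
        TensorProduct.tmul_smul, TensorProduct.smul_tmul']
      refine (Finset.sum_congr rfl fun k _ => Finset.sum_comm).trans (Finset.sum_comm.trans ?_)
      refine Finset.sum_congr rfl fun l _ => ?_
      refine (Finset.sum_congr rfl fun k _ => Finset.sum_comm).trans Finset.sum_comm
    · simp only [Fintype.sum_sigma, τ]
      exact (Fin.sum_univ_eq_sum_range (fun k => ∑ j : Fin (n k), (∑' l, T (l + M) (Q (e ⟨k, j⟩))) ⊗ₜ[ℂ] b k j) N).symm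
  rw [hsplit, ← add_halves ε]
  have hτ : rn σ τ ≤ η := by
    have hlim : Filter.Tendsto (fun L => ∑ l ∈ Finset.range L, (fun p : (Σ k : Fin N, Fin (n k)) => T (l + M) (Q (e ⟨p.1, p.2⟩))))
        Filter.atTop (nhds τ) := by
      rw [tendsto_pi_nhds]
      intro p
      simp only [Finset.sum_apply]
      exact ((summable_nat_add_iff M).2 (hTT (Q (e ⟨p.1, p.2⟩))).summable).tendsto_sum_tsum_nat
    refine le_of_tendsto (((continuous_rn σ).tendsto τ).comp hlim) (Filter.Eventually.of_forall fun L => ?_)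
    refine (rn_sum _ _ _).trans ?_
    refine le_trans (Finset.sum_le_sum (g := fun l => s (l + M)) fun l _ => ?_)
      ((((summable_nat_add_iff M).2 hs).sum_le_tsum _ fun k _ => hs0 _).trans hM.le)
    refine le_trans ?_ (ha (l + M))
    simp only [hT]
    refine rn_contr σ (fun i => e ⟨l + M, i⟩) (hek _) (fun p : (Σ k : Fin N, Fin (n k)) => e ⟨p.1, p.2⟩) ?_ Q hQ hQs (a (l + M))
    refine he.comp (fun p : (Σ k : Fin N, Fin (n k)) => (⟨p.1, p.2⟩ : Σ k, Fin (n k))) ?_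
    rintro ⟨⟨k, hk⟩, j⟩ ⟨⟨k', hk'⟩, j'⟩ h
    simp only [Sigma.mk.injEq] at h
    obtain ⟨rfl, h⟩ := h
    simp only [heq_eq_eq] at h
    rw [h]
  refine HasRep.add ?_ ?_
  · refine HasRep.of_balance _ _ S η rfl (sqs_sigma_le σ a s hs ha M) ?_ hS0 hη0.le hSη
    rw [← rn_sq]
    exact pow_le_pow_left₀ (rn_nonneg _ _) (hN0 N hN).le 2
  · refine HasRep.of_balance _ _ η S rfl ?_ (sqs_sigma_le (!σ) b s hs hb N) hη0.le hS0 (by rwa [mul_comm])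
    rw [← rn_sq]
    exact pow_le_pow_left₀ (rn_nonneg _ _) hτ 2

lemma slice_lemma {A B : Type*} [NonUnitalCStarAlgebra A] [NonUnitalCStarAlgebra B]
    [PartialOrder A] [StarOrderedRing A] [PartialOrder B] [StarOrderedRing B]
    (σ : Bool) (z : ℕ → A ⊗[ℂ] B) (δ : ℕ → ℝ) (hs : Summable fun k => Real.sqrt (δ k))
    (hz : ∀ k, HasRep σ (δ k) (z k))
    (I : Submodule ℂ A) (hI : IsClosed (I : Set A))
    (hsl : ∀ ψ : B →L[ℂ] ℂ, ∑' k, TensorProduct.rid ℂ A (TensorProduct.map LinearMap.id (ψ : B →ₗ[ℂ] ℂ) (z k)) ∈ I) (ε : ℝ) (hε : 0 < ε) :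
    ∃ N0, ∀ N ≥ N0, ∃ y ∈ Submodule.span ℂ (Set.image2 (fun a b => a ⊗ₜ[ℂ] b) (I : Set A) (Set.univ : Set B)),
      HasRep σ ε (∑ k ∈ Finset.range N, z k - y) := by
  choose n a b h1 h2 h3 using hz
  let hb : HilbertBasis (Σ k, Fin (n k)) ℂ (lp (fun _ : (Σ k, Fin (n k)) => ℂ) 2) :=
    HilbertBasis.ofRepr (LinearIsometryEquiv.refl ℂ _)
  have := slice_core _ hb.orthonormal σ a b _ hs (fun k => Real.sqrt_le_sqrt (h2 k))
    (fun k => Real.sqrt_le_sqrt (h3 k)) I hI (fun ψ => ?_) ε hε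
  · simpa only [← h1] using this
  · have h := hsl ψ
    simp only [h1, map_sum, TensorProduct.map_tmul, TensorProduct.rid_tmul, LinearMap.id_apply] at h
    exact h

end P7

section P8

lemma approx_unit {A : Type*} [NonUnitalCStarAlgebra A] [PartialOrder A] [StarOrderedRing A]
    (I : Submodule ℂ A) (hr : ∀ c ∈ I, ∀ a, c * a ∈ I) (F : Finset A) (hF : ∀ c ∈ F, c ∈ I)
    (ε : ℝ) (hε : 0 < ε) : ∃ e ∈ I, ‖e‖ ≤ 1 ∧ ∀ c ∈ F, ‖c - e * c‖ ≤ ε := by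
  set κ : ℝ := ε ^ 2 with hκ
  have hκ0 : 0 < κ := by positivity
  set f : ℝ → ℝ := fun t => t ^ 2 / (t ^ 2 + κ ^ 2) with hf
  set g : ℝ → ℝ := fun t => t / (t ^ 2 + κ ^ 2) with hg
  have hden : ∀ t : ℝ, t ^ 2 + κ ^ 2 ≠ 0 := fun t => by positivity
  have hfc : Continuous f := by
    refine Continuous.div (by fun_prop) (by fun_prop) hden
  have hgc : Continuous g := by
    refine Continuous.div (by fun_prop) (by fun_prop) hden
  have hf0 : f 0 = 0 := by simp [hf]
  have hg0 : g 0 = 0 := by simp [hg]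
  set h : A := ∑ c ∈ F, c * star c with hh
  have hI : h ∈ I := Submodule.sum_mem _ fun c hc => hr c (hF c hc) _
  have hsa : IsSelfAdjoint h := by
    rw [hh]
    refine isSelfAdjoint_sum _ fun c _ => IsSelfAdjoint.mul_star_self c
  set e : A := cfcₙ f h with he
  have heg : e = h * cfcₙ g h := by
    rw [he]
    nth_rewrite 2 [← cfcₙ_id ℝ h]
    rw [← cfcₙ_mul id g h (by fun_prop) (by simp) hgc.continuousOn hg0]
    congr 1
    funext t
    simp only [hf, hg, id]
    ring
  have hesa : star e = e := (cfcₙ_predicate f h : IsSelfAdjoint _)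
  refine ⟨e, heg ▸ hr _ hI _, ?_, ?_⟩
  · refine norm_cfcₙ_le fun t _ => ?_
    rw [Real.norm_of_nonneg (by simp only [hf]; positivity)]
    simp only [hf]
    rw [div_le_one (by positivity)]
    nlinarith
  · intro c hc
    have h1 : ∑ c ∈ F, (c - e * c) * star (c - e * c) = h - e * h - (h * e - e * h * e) := by
      simp only [hh, Finset.mul_sum, Finset.sum_mul, ← Finset.sum_sub_distrib]
      refine Finset.sum_congr rfl fun c _ => ?_
      rw [star_sub, star_mul, hesa]
      noncomm_ring
    have h2 : h - e * h - (h * e - e * h * e) =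
        cfcₙ (fun t : ℝ => t - f t * t - (t * f t - f t * t * f t)) h := by
      have c1 : ContinuousOn f (quasispectrum ℝ h) := hfc.continuousOn
      rw [cfcₙ_sub (a := h) (fun t : ℝ => t - f t * t) (fun t => t * f t - f t * t * f t) (by fun_prop) (by simp) (by fun_prop) (by simp),
        cfcₙ_sub (a := h) (fun t : ℝ => t) (fun t => f t * t) (by fun_prop) (by simp) (by fun_prop) (by simp),
        cfcₙ_sub (a := h) (fun t : ℝ => t * f t) (fun t => f t * t * f t) (by fun_prop) (by simp) (by fun_prop) (by simp),
        cfcₙ_mul (a := h) (fun t : ℝ => f t * t) (fun t => f t) (by fun_prop) (by simp) (by fun_prop) (by simp [hf0]),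
        cfcₙ_mul (a := h) (fun t : ℝ => f t) (fun t => t) (by fun_prop) (by simp [hf0]) (by fun_prop) (by simp),
        cfcₙ_mul (a := h) (fun t : ℝ => t) (fun t => f t) (by fun_prop) (by simp) (by fun_prop) (by simp [hf0])]
      rw [cfcₙ_id' ℝ h]
    have h3 : ‖∑ c ∈ F, (c - e * c) * star (c - e * c)‖ ≤ κ := by
      rw [h1, h2]
      refine norm_cfcₙ_le fun t _ => ?_
      have e1 : t - f t * t - (t * f t - f t * t * f t) = t * κ ^ 4 / (t ^ 2 + κ ^ 2) ^ 2 := by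
        have := hden t
        simp only [hf]
        field_simp
        ring
      rw [e1, Real.norm_eq_abs, abs_div, abs_mul, abs_of_pos (show 0 < κ ^ 4 by positivity),
        abs_of_pos (show 0 < (t ^ 2 + κ ^ 2) ^ 2 by positivity), div_le_iff₀ (by positivity)]
      have e2 : |t| * κ ≤ t ^ 2 + κ ^ 2 := by
        rw [← sq_abs t]; nlinarith [sq_nonneg (|t| - κ), abs_nonneg t, mul_nonneg (abs_nonneg t) hκ0.le]
      have e3 : κ ^ 2 ≤ t ^ 2 + κ ^ 2 := by nlinarith [sq_nonneg t]
      have e4 := mul_le_mul e2 e3 (by positivity) (by positivity)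
      calc |t| * κ ^ 4 = κ * (|t| * κ * κ ^ 2) := by ring
        _ ≤ κ * ((t ^ 2 + κ ^ 2) * (t ^ 2 + κ ^ 2)) := by gcongr
        _ = _ := by ring
    have h4 : ‖(c - e * c) * star (c - e * c)‖ ≤ κ := by
      refine le_trans (CStarAlgebra.norm_le_norm_of_nonneg_of_le (mul_star_self_nonneg _) ?_) h3
      exact Finset.single_le_sum (f := fun c => (c - e * c) * star (c - e * c)) (fun i _ => mul_star_self_nonneg _) hc
    rw [CStarRing.norm_self_mul_star, ← sq, hκ] at h4
    exact le_of_sq_le_sq h4 hε.le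

section
variable {A B : Type*} [NonUnitalCStarAlgebra A] [NonUnitalCStarAlgebra B]

/-- left multiplication by `e` in the first tensor factor -/
def TE (B : Type*) [NonUnitalCStarAlgebra B] (e : A) : A ⊗[ℂ] B →ₗ[ℂ] A ⊗[ℂ] B :=
  TensorProduct.map (LinearMap.mulLeft ℂ e) LinearMap.id

@[simp] lemma TE_tmul (e a : A) (b : B) : TE B e (a ⊗ₜ b) = (e * a) ⊗ₜ[ℂ] b := by simp [TE]

lemma HasRep.neg {σ : Bool} {δ : ℝ} {w : A ⊗[ℂ] B} (h : HasRep σ δ w) : HasRep σ δ (-w) := by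
  obtain ⟨n, a, b, h1, h2, h3⟩ := h
  refine ⟨n, fun i => - a i, b, ?_, ?_, h3⟩
  · rw [h1]; simp [TensorProduct.neg_tmul]
  · refine le_trans (le_of_eq ?_) h2
    cases σ <;> simp [sqs, qf]

variable [PartialOrder A] [StarOrderedRing A] [PartialOrder B] [StarOrderedRing B]

lemma HasRep.te {σ : Bool} {δ : ℝ} {w : A ⊗[ℂ] B} (h : HasRep σ δ w) (e : A) (he : ‖e‖ ≤ 1) :
    HasRep σ δ (TE B e w) := by
  obtain ⟨n, a, b, h1, h2, h3⟩ := h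
  refine ⟨n, fun i => e * a i, b, ?_, le_trans ?_ h2, h3⟩
  · rw [h1]; simp
  cases σ
  · have : sqs false (fun i => e * a i) = e * sqs false a * star e := by
      simp [sqs, qf, Finset.mul_sum, Finset.sum_mul, mul_assoc]
    rw [this]
    calc ‖e * sqs false a * star e‖ ≤ ‖e‖ * ‖sqs false a‖ * ‖star e‖ :=
          (norm_mul_le _ _).trans (by gcongr; exact norm_mul_le _ _)
      _ ≤ 1 * ‖sqs false a‖ * 1 := by rw [norm_star]; gcongr
      _ = _ := by ring
  · refine CStarAlgebra.norm_le_norm_of_nonneg_of_le (sq_nonneg' _ _) ?_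
    refine Finset.sum_le_sum fun i _ => ?_
    simp only [qf, if_true, star_mul]
    have h5 := CStarAlgebra.star_left_conjugate_le_norm_smul (a := a i) (b := star e * e) (IsSelfAdjoint.star_mul_self e)
    rw [mul_assoc, ← mul_assoc (star e), ← mul_assoc]
    refine h5.trans ?_
    rw [CStarRing.norm_star_mul_self]
    have h6 : ‖e‖ * ‖e‖ ≤ 1 := by nlinarith [norm_nonneg e]
    have h7 := smul_le_smul_of_nonneg_right h6 (star_mul_self_nonneg (a i))
    rwa [one_smul] at h7

lemma span_rep (I : Submodule ℂ A) (y : A ⊗[ℂ] B)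
    (hy : y ∈ Submodule.span ℂ (Set.image2 (fun a b => a ⊗ₜ[ℂ] b) (I : Set A) (Set.univ : Set B))) :
    ∃ (n : ℕ) (c : Fin n → A) (b : Fin n → B), (∀ i, c i ∈ I) ∧ y = ∑ i, c i ⊗ₜ[ℂ] b i := by
  induction hy using Submodule.span_induction with
  | mem x hx =>
    obtain ⟨a, ha, b, -, rfl⟩ := hx
    exact ⟨1, fun _ => a, fun _ => b, fun _ => ha, by simp⟩
  | zero => exact ⟨0, fun _ => 0, fun _ => 0, fun i => i.elim0, by simp⟩
  | add x y _ _ hx hy =>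
    obtain ⟨n, c, b, h1, h2⟩ := hx
    obtain ⟨m, d, b', h3, h4⟩ := hy
    refine ⟨n + m, Fin.append c d, Fin.append b b', fun i => ?_, ?_⟩
    · refine Fin.addCases (fun i => ?_) (fun i => ?_) i <;> simp [h1, h3]
    · rw [h2, h4, Fin.sum_univ_add]; simp
  | smul r x _ hx =>
    obtain ⟨n, c, b, h1, h2⟩ := hx
    refine ⟨n, fun i => r • c i, b, fun i => I.smul_mem _ (h1 i), ?_⟩
    rw [h2, Finset.smul_sum]; simp [TensorProduct.smul_tmul']

lemma approx_te (I : Submodule ℂ A) (y : A ⊗[ℂ] B)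
    (hy : y ∈ Submodule.span ℂ (Set.image2 (fun a b => a ⊗ₜ[ℂ] b) (I : Set A) (Set.univ : Set B)))
    (ε : ℝ) (hε : 0 < ε) : ∃ (F : Finset A) (κ : ℝ), 0 < κ ∧ (∀ c ∈ F, c ∈ I) ∧
      ∀ e, (∀ c ∈ F, ‖c - e * c‖ ≤ κ) → ∀ σ, HasRep σ ε (y - TE B e y) := by
  classical
  obtain ⟨n, c, b, h1, h2⟩ := span_rep I y hy
  set S : ℝ := rn true b + rn false b with hS
  have hS0 : 0 ≤ S := add_nonneg (rn_nonneg _ _) (rn_nonneg _ _)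
  refine ⟨Finset.univ.image c, ε / ((n + 1) * (S + 1)), by positivity, ?_, ?_⟩
  · simpa using h1
  intro e he σ
  have he' : ∀ i, ‖c i - e * c i‖ ≤ ε / ((n + 1) * (S + 1)) := fun i => he _ (by simp)
  refine HasRep.of_balance (fun i => c i - e * c i) b (n * (ε / ((n + 1) * (S + 1)))) S ?_ ?_ ?_ (by positivity) hS0 ?_
  · rw [h2, map_sum, ← Finset.sum_sub_distrib]
    refine Finset.sum_congr rfl fun i _ => ?_
    rw [TE_tmul, TensorProduct.sub_tmul]
  · refine (norm_sum_le _ _).trans ?_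
    simp only [norm_qf]
    refine (Finset.sum_sq_le_sq_sum_of_nonneg fun i _ => norm_nonneg _).trans ?_
    refine pow_le_pow_left₀ (Finset.sum_nonneg fun i _ => norm_nonneg _) ?_ 2
    refine (Finset.sum_le_sum fun i _ => he' i).trans ?_
    simp
  · rw [← rn_sq]
    refine pow_le_pow_left₀ (rn_nonneg _ _) ?_ 2
    have := rn_nonneg true b
    have := rn_nonneg false b
    cases σ <;> simp only [Bool.not_true, Bool.not_false, hS] <;> linarith
  · rw [mul_div_assoc', div_mul_eq_mul_div, div_lt_iff₀ (by positivity)]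
    have : (0:ℝ) ≤ n := Nat.cast_nonneg n
    nlinarith [mul_pos hε (show (0:ℝ) < n + S + 1 by positivity)]

lemma te_mem (I : Submodule ℂ A) (hr : ∀ c ∈ I, ∀ a, c * a ∈ I) (J : Set B) (e : A) (he : e ∈ I) (z : A ⊗[ℂ] B)
    (hz : z ∈ Submodule.span ℂ (Set.image2 (fun a b => a ⊗ₜ[ℂ] b) (Set.univ : Set A) J)) :
    TE B e z ∈ Submodule.span ℂ (Set.image2 (fun a b => a ⊗ₜ[ℂ] b) (I : Set A) J) := by
  rw [← Submodule.mem_comap]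
  refine (Submodule.span_le.2 ?_) hz
  rintro _ ⟨a, -, b, hb, rfl⟩
  rw [SetLike.mem_coe, Submodule.mem_comap, TE_tmul]
  exact Submodule.subset_span ⟨_, hr e he a, b, hb, rfl⟩

lemma span_all (z : A ⊗[ℂ] B) :
    z ∈ Submodule.span ℂ (Set.image2 (fun a b => a ⊗ₜ[ℂ] b) (Set.univ : Set A) (Set.univ : Set B)) := by
  induction z using TensorProduct.induction_on with
  | zero => exact Submodule.zero_mem _
  | tmul a b => exact Submodule.subset_span ⟨a, trivial, b, trivial, rfl⟩
  | add x y hx hy => exact Submodule.add_mem _ hx hy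

variable {X : Type*} [NormedAddCommGroup X] [NormedSpace ℂ X]

theorem one_side (ι : A ⊗[ℂ] B →ₗ[ℂ] X) (hd : DenseRange ι)
    (h1 : ∀ σ u δ, ‖ι u‖ < δ → HasRep σ δ u) (K : ℝ) (hK : 0 ≤ K)
    (h2 : ∀ δ w, 0 < δ → HasRep false δ w → HasRep true δ w → ‖ι w‖ ≤ K * δ)
    (I : Submodule ℂ A) (hr : ∀ c ∈ I, ∀ a, c * a ∈ I) (hI : IsClosed (I : Set A))
    (L : (B →L[ℂ] ℂ) → X →L[ℂ] A) (hL : ∀ ψ a b, L ψ (ι (a ⊗ₜ b)) = ψ b • a)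
    (x : X) (hx : ∀ ψ, L ψ x ∈ I) :
    x ∈ closure (ι '' (Submodule.span ℂ (Set.image2 (fun a b => a ⊗ₜ[ℂ] b) (I : Set A) (Set.univ : Set B)))) := by
  classical
  have hLz : ∀ ψ : B →L[ℂ] ℂ, ∀ z, TensorProduct.rid ℂ A (TensorProduct.map LinearMap.id (ψ : B →ₗ[ℂ] ℂ) z) = L ψ (ι z) := by
    intro ψ z
    induction z using TensorProduct.induction_on with
    | zero => simp
    | tmul a b => simp [hL]
    | add x y hx hy => simp only [map_add, hx, hy]
  set q : ℕ → ℝ := fun k => ((1 / 4 : ℝ) ^ k) with hq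
  have hq0 : ∀ k, 0 < q k := fun k => by positivity
  have hqs : Summable q := summable_geometric_of_lt_one (by norm_num) (by norm_num)
  have hq1 : ∀ k, q (k + 1) ≤ q k := fun k => by
    simp only [hq, pow_succ]; have := hq0 k; simp only [hq] at this; linarith
  have hqle : ∀ k, q k ≤ 1 := fun k => pow_le_one₀ (by norm_num) (by norm_num)
  have hu : ∀ k, ∃ u, ‖x - ι u‖ < q k ^ 2 := by
    intro k
    obtain ⟨u, hu⟩ := Metric.denseRange_iff.1 hd x (q k ^ 2) (by have := hq0 k; positivity)
    exact ⟨u, by rwa [dist_eq_norm] at hu⟩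
  choose u hu using hu
  have hux : Filter.Tendsto (fun k => ι (u k)) Filter.atTop (nhds x) := by
    rw [tendsto_iff_norm_sub_tendsto_zero]
    refine squeeze_zero (fun k => norm_nonneg _) (fun k => ?_) hqs.tendsto_atTop_zero
    rw [norm_sub_rev]
    exact (hu k).le.trans (by have := hq0 k; have := hqle k; nlinarith)
  let z : ℕ → A ⊗[ℂ] B := fun k => Nat.casesOn k (u 0) (fun k => u (k + 1) - u k)
  let δ : ℕ → ℝ := fun k => Nat.casesOn k (‖ι (u 0)‖ + 1) (fun k => (2 * q k) ^ 2)
  have hzδ : ∀ k, ‖ι (z k)‖ < δ k := by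
    intro k
    rcases k with _ | k
    · exact lt_add_one _
    · change ‖ι (u (k + 1) - u k)‖ < (2 * q k) ^ 2
      rw [map_sub, show ι (u (k + 1)) - ι (u k) = (x - ι (u k)) - (x - ι (u (k + 1))) by abel]
      refine (norm_sub_le _ _).trans_lt ?_
      have := hu k
      have := hu (k + 1)
      have := hq1 k
      have := hq0 (k + 1)
      have := hq0 k
      nlinarith
  have hδs : Summable fun k => Real.sqrt (δ k) := by
    rw [← summable_nat_add_iff 1]
    refine (hqs.mul_left 2).congr fun k => ?_
    exact (Real.sqrt_sq (by have := hq0 k; positivity)).symm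
  have hδ1 : Summable δ := by
    rw [← summable_nat_add_iff 1]
    refine Summable.of_nonneg_of_le (fun k => sq_nonneg _) (fun k => ?_) (hqs.mul_left 4)
    change (2 * q k) ^ 2 ≤ 4 * q k
    have := hq0 k; have := hqle k; nlinarith
  have hsum : ∀ N, ∑ k ∈ Finset.range (N + 1), z k = u N := by
    intro N
    rw [Finset.sum_range_succ']
    change ∑ k ∈ Finset.range N, (u (k + 1) - u k) + u 0 = u N
    rw [Finset.sum_range_sub]; abel
  have hsl : ∀ ψ : B →L[ℂ] ℂ, ∑' k, TensorProduct.rid ℂ A (TensorProduct.map LinearMap.id (ψ : B →ₗ[ℂ] ℂ) (z k)) ∈ I := by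
    intro ψ
    simp only [hLz]
    have hs : Summable (fun k => L ψ (ι (z k))) := by
      refine Summable.of_norm_bounded (hδ1.mul_left ‖L ψ‖) fun k => ?_
      exact (L ψ).le_of_opNorm_le_of_le le_rfl (hzδ k).le
    have ht := (Filter.tendsto_add_atTop_iff_nat 1).2 hs.tendsto_sum_tsum_nat
    have ht2 : Filter.Tendsto (fun N => ∑ k ∈ Finset.range (N + 1), L ψ (ι (z k))) Filter.atTop (nhds (L ψ x)) := by
      refine (((L ψ).continuous.tendsto x).comp hux).congr fun N => ?_
      simp only [Function.comp, ← map_sum, hsum]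
    rw [tendsto_nhds_unique ht ht2]
    exact hx ψ
  rw [Metric.mem_closure_iff]
  intro ε0 hε0
  set ε := ε0 / (4 * K + 2) with hε
  have hεp : 0 < ε := by positivity
  obtain ⟨N1, hN1⟩ := slice_lemma false z δ hδs (fun k => h1 _ _ _ (hzδ k)) I hI hsl ε hεp
  obtain ⟨N2, hN2⟩ := slice_lemma true z δ hδs (fun k => h1 _ _ _ (hzδ k)) I hI hsl ε hεp
  obtain ⟨N3, hN3⟩ := Filter.eventually_atTop.1 (hqs.tendsto_atTop_zero.eventually (gt_mem_nhds hεp))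
  set N := max N1 (max N2 N3) with hN
  obtain ⟨y, hy, hy1⟩ := hN1 (N + 1) (by omega)
  obtain ⟨y', hy', hy1'⟩ := hN2 (N + 1) (by omega)
  rw [hsum] at hy1 hy1'
  obtain ⟨F, κ, hκ, hF, hFe⟩ := approx_te I y hy ε hεp
  obtain ⟨F', κ', hκ', hF', hFe'⟩ := approx_te I y' hy' ε hεp
  obtain ⟨e, heI, he1, hec⟩ := approx_unit I hr (F ∪ F') (fun c hc => by
    rcases Finset.mem_union.1 hc with h | h
    · exact hF c h
    · exact hF' c h) (min κ κ') (lt_min hκ hκ')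
  have hxN : ‖x - ι (u N)‖ < ε := by
    refine (hu N).trans (lt_of_le_of_lt ?_ (hN3 N (by omega)))
    have := hq0 N; have := hqle N; nlinarith
  have hdec : ∀ y, u N - TE B e (u N) = (u N - y) + -(TE B e (u N - y)) + (y - TE B e y) := by
    intro y; rw [map_sub]; abel
  have r1 : HasRep false (ε + ε + ε) (u N - TE B e (u N)) := by
    rw [hdec y]
    refine (hy1.add (hy1.te e he1).neg).add (hFe e (fun c hc => ?_) false)
    exact (hec c (Finset.mem_union_left _ hc)).trans (min_le_left _ _)
  have r2 : HasRep true (ε + ε + ε) (u N - TE B e (u N)) := by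
    rw [hdec y']
    refine (hy1'.add (hy1'.te e he1).neg).add (hFe' e (fun c hc => ?_) true)
    exact (hec c (Finset.mem_union_right _ hc)).trans (min_le_right _ _)
  have r3 := h2 _ _ (by positivity) r1 r2
  refine ⟨_, ⟨TE B e (u N), te_mem I hr Set.univ e heI _ (span_all _), rfl⟩, ?_⟩
  rw [dist_eq_norm, show x - ι (TE B e (u N)) = (x - ι (u N)) + ι (u N - TE B e (u N)) by rw [map_sub]; abel]
  refine (norm_add_le _ _).trans_lt ?_
  have : ε0 = ε * (4 * K + 2) := by rw [hε]; field_simp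
  nlinarith [mul_nonneg hK hεp.le]

theorem both_sides (ι : A ⊗[ℂ] B →ₗ[ℂ] X)
    (h1 : ∀ σ u δ, ‖ι u‖ < δ → HasRep σ δ u) (K : ℝ) (hK : 0 ≤ K)
    (h2 : ∀ δ w, 0 < δ → HasRep false δ w → HasRep true δ w → ‖ι w‖ ≤ K * δ)
    (I : Submodule ℂ A) (hr : ∀ c ∈ I, ∀ a, c * a ∈ I) (J : Set B) (x : X)
    (hx1 : x ∈ closure (ι '' (Submodule.span ℂ (Set.image2 (fun a b => a ⊗ₜ[ℂ] b) (I : Set A) (Set.univ : Set B)))))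
    (hx2 : x ∈ closure (ι '' (Submodule.span ℂ (Set.image2 (fun a b => a ⊗ₜ[ℂ] b) (Set.univ : Set A) J)))) :
    x ∈ closure (ι '' (Submodule.span ℂ (Set.image2 (fun a b => a ⊗ₜ[ℂ] b) (I : Set A) J))) := by
  rw [Metric.mem_closure_iff] at hx1 hx2 ⊢
  intro ε0 hε0
  set ε := ε0 / (4 * K + 2) with hε
  have hεp : 0 < ε := by positivity
  obtain ⟨_, ⟨z, hz, rfl⟩, hxz⟩ := hx1 ε hεp
  obtain ⟨_, ⟨y, hy, rfl⟩, hxy⟩ := hx2 ε hεp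
  obtain ⟨F, κ, hκ, hF, hFe⟩ := approx_te I z hz ε hεp
  obtain ⟨e, heI, he1, hec⟩ := approx_unit I hr F hF κ hκ
  refine ⟨_, ⟨TE B e y, te_mem I hr J e heI y hy, rfl⟩, ?_⟩
  rw [dist_eq_norm] at hxz hxy ⊢
  have a1 := h2 ε _ hεp (hFe e hec false) (hFe e hec true)
  have a2 : ‖ι (z - y)‖ < 2 * ε := by
    rw [map_sub, show ι z - ι y = (x - ι y) - (x - ι z) by abel]
    refine (norm_sub_le _ _).trans_lt (by linarith)
  have a3 := h2 (2 * ε) (TE B e (z - y)) (by positivity) ((h1 _ _ _ a2).te e he1) ((h1 _ _ _ a2).te e he1)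
  rw [show x - ι (TE B e y) = (x - ι z) + ι (z - TE B e z) + ι (TE B e (z - y)) by
    simp only [map_sub]; abel]
  refine (norm_add_le _ _).trans_lt ?_
  have := norm_add_le (x - ι z) (ι (z - TE B e z))
  have : ε0 = ε * (4 * K + 2) := by rw [hε]; field_simp
  nlinarith [mul_nonneg hK hεp.le]

end
end P8

section P9

/-- A closed two-sided ideal of a C*-algebra, as a complex subspace. -/
def idealSub {A : Type*} [NonUnitalCStarAlgebra A] (I : TwoSidedIdeal A) (hI : IsClosed (I : Set A)) :
    Submodule ℂ A where
  carrier := I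
  add_mem' := fun ha hb => I.add_mem ha hb
  zero_mem' := I.zero_mem
  smul_mem' := by
    letI : PartialOrder A := CStarAlgebra.spectralOrder A
    letI : StarOrderedRing A := CStarAlgebra.spectralOrderedRing A
    intro r c hc
    have hu := CStarAlgebra.increasingApproximateUnit A
    haveI := hu.neBot
    refine hI.mem_of_tendsto ((hu.tendsto_mul_right c).const_smul r) (Filter.Eventually.of_forall fun x => ?_)
    change r • (x * c) ∈ I
    rw [← smul_mul_assoc]
    exact I.mul_mem_left _ _ hc

lemma span_symm_image {A B X : Type*} [NonUnitalCStarAlgebra A] [NonUnitalCStarAlgebra B]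
    [AddCommGroup X] [Module ℂ X] (ι : A ⊗[ℂ] B →ₗ[ℂ] X) (S : Set A) (T : Set B) :
    (ι ∘ₗ (TensorProduct.comm ℂ B A).toLinearMap) '' (Submodule.span ℂ (Set.image2 (fun b a => b ⊗ₜ[ℂ] a) T S) : Set (B ⊗[ℂ] A))
      ⊆ ι '' (Submodule.span ℂ (Set.image2 (fun a b => a ⊗ₜ[ℂ] b) S T) : Set (A ⊗[ℂ] B)) := by
  rintro _ ⟨w, hw, rfl⟩
  refine ⟨TensorProduct.comm ℂ B A w, ?_, rfl⟩
  have : Submodule.span ℂ (Set.image2 (fun b a => b ⊗ₜ[ℂ] a) T S) ≤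
    (Submodule.span ℂ (Set.image2 (fun a b => a ⊗ₜ[ℂ] b) S T)).comap (TensorProduct.comm ℂ B A).toLinearMap := by
    refine Submodule.span_le.2 ?_
    rintro _ ⟨b, hb, a, ha, rfl⟩
    exact Submodule.subset_span ⟨a, ha, b, hb, by simp⟩
  exact this hw

end P9

/-- For closed two-sided ideals `I ⊆ A` and `J ⊆ B`, the product ideal
`I ⊗̂ J` consists exactly of those `x ∈ A ⊗̂ B` with `R_φ(x) ∈ J` for all `φ ∈ A*` and
`L_ψ(x) ∈ I` for all `ψ ∈ B*`. -/
theorem tensorIdeal_eq_slice_preimages {A B X : Type u} [NonUnitalCStarAlgebra A] [NonUnitalCStarAlgebra B]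
    [NonUnitalNormedRing X] [StarRing X] [NormedSpace ℂ X] [CompleteSpace X]
    [IsScalarTower ℂ X X] [SMulCommClass ℂ X X]
    (NA : ∀ p : ℕ, Matrix (Fin p) (Fin p) A → ℝ)
    (NB : ∀ q : ℕ, Matrix (Fin q) (Fin q) B → ℝ)
    (hNA : ∀ p, IsCStarNorm (NA p)) (hNB : ∀ q, IsCStarNorm (NB q))
    (ι : A ⊗[ℂ] B →ₗ[ℂ] X) (hX : IsTensorCompletion (osProjNorm NA NB) X ι)
    (I : TwoSidedIdeal A) (J : TwoSidedIdeal B)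
    (hI : IsClosed (I : Set A)) (hJ : IsClosed (J : Set B))
    (R : (A →L[ℂ] ℂ) → X →L[ℂ] B)
    (hR : ∀ (φ : A →L[ℂ] ℂ) (a : A) (b : B), R φ (ι (a ⊗ₜ[ℂ] b)) = φ a • b)
    (L : (B →L[ℂ] ℂ) → X →L[ℂ] A)
    (hL : ∀ (ψ : B →L[ℂ] ℂ) (a : A) (b : B), L ψ (ι (a ⊗ₜ[ℂ] b)) = ψ b • a) :
    tensorIdeal ι (I : Set A) (J : Set B) =
      {x : X | (∀ φ : A →L[ℂ] ℂ, R φ x ∈ J) ∧ (∀ ψ : B →L[ℂ] ℂ, L ψ x ∈ I)} := by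
  letI : PartialOrder A := CStarAlgebra.spectralOrder A
  letI : StarOrderedRing A := CStarAlgebra.spectralOrderedRing A
  letI : PartialOrder B := CStarAlgebra.spectralOrder B
  letI : StarOrderedRing B := CStarAlgebra.spectralOrderedRing B
  have h1 : ∀ σ u δ, ‖ι u‖ < δ → HasRep σ δ u := by
    intro σ u δ h
    exact hyp1 NA NB hNA hNB u δ (by rwa [hX.norm_eq] at h) σ
  have h2 : ∀ δ w, 0 < δ → HasRep false δ w → HasRep true δ w → ‖ι w‖ ≤ 1920 * δ :=
    fun δ w hδ r1 r2 => hyp2 NA NB hNA hNB ι hX.norm_eq δ hδ w r1 r2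
  let I' : Submodule ℂ A := idealSub I hI
  let J' : Submodule ℂ B := idealSub J hJ
  have hIr : ∀ c ∈ I', ∀ a, c * a ∈ I' := fun c hc a => I.mul_mem_right _ _ hc
  have hJr : ∀ c ∈ J', ∀ a, c * a ∈ J' := fun c hc a => J.mul_mem_right _ _ hc
  apply Set.Subset.antisymm
  · have hcl : IsClosed {x : X | (∀ φ : A →L[ℂ] ℂ, R φ x ∈ J) ∧ (∀ ψ : B →L[ℂ] ℂ, L ψ x ∈ I)} := by
      simp only [Set.setOf_and, Set.setOf_forall]
      exact (isClosed_iInter fun φ => hJ.preimage (R φ).continuous).inter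
        (isClosed_iInter fun ψ => hI.preimage (L ψ).continuous)
    refine closure_minimal ?_ hcl
    rintro _ ⟨w, hw, rfl⟩
    refine ⟨fun φ => ?_, fun ψ => ?_⟩
    · have : Submodule.span ℂ (Set.image2 (fun a b => a ⊗ₜ[ℂ] b) (I : Set A) (J : Set B)) ≤
          J'.comap ((R φ : X →ₗ[ℂ] B) ∘ₗ ι) := by
        refine Submodule.span_le.2 ?_
        rintro _ ⟨a, ha, b, hb, rfl⟩
        change R φ (ι (a ⊗ₜ b)) ∈ J'
        rw [hR]; exact J'.smul_mem _ hb
      exact this hw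
    · have : Submodule.span ℂ (Set.image2 (fun a b => a ⊗ₜ[ℂ] b) (I : Set A) (J : Set B)) ≤
          I'.comap ((L ψ : X →ₗ[ℂ] A) ∘ₗ ι) := by
        refine Submodule.span_le.2 ?_
        rintro _ ⟨a, ha, b, hb, rfl⟩
        change L ψ (ι (a ⊗ₜ b)) ∈ I'
        rw [hL]; exact I'.smul_mem _ ha
      exact this hw
  · rintro x ⟨hxR, hxL⟩
    have e1 := one_side ι hX.dense h1 1920 (by norm_num) h2 I' hIr hI L hL x hxL
    let ι' : B ⊗[ℂ] A →ₗ[ℂ] X := ι ∘ₗ (TensorProduct.comm ℂ B A).toLinearMap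
    have hcc : ∀ w : B ⊗[ℂ] A, TensorProduct.comm ℂ A B (TensorProduct.comm ℂ B A w) = w := fun w =>
      (TensorProduct.comm ℂ B A).symm_apply_apply w
    have hd' : DenseRange ι' := by
      refine hX.dense.mono ?_
      rintro _ ⟨w, rfl⟩
      exact ⟨TensorProduct.comm ℂ A B w, by
        change ι ((TensorProduct.comm ℂ A B).symm (TensorProduct.comm ℂ A B w)) = ι w
        rw [LinearEquiv.symm_apply_apply]⟩
    have e2 := one_side ι' hd' (fun σ u δ h => by
        have := (h1 (!σ) (TensorProduct.comm ℂ B A u) δ h).symm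
        rw [hcc, Bool.not_not] at this
        exact this) 1920 (by norm_num)
      (fun δ w hδ r1 r2 => h2 δ _ hδ r2.symm r1.symm) J' hJr hJ R (fun ψ a b => by
        simp [ι', hR]) x hxR
    have e3 := closure_mono (span_symm_image ι Set.univ (J : Set B)) e2
    exact both_sides ι h1 1920 (by norm_num) h2 I' hIr (J : Set B) x e1 e3

end
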